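/- arXiv:2205.09686 — 2 statements merged into one kernel-verified Lean document; each statement's English description precedes it below -/
import Mathlib

section
/- For every integer n ≥ 4, the number of Dyck paths of semilength n with L = 4 is |D_n^4| = 2·( T_{n-2,3} + Σ_{i=0}^{n-6} (i+1)·M_i·T_{n-4-i,3} ) + binom(n-5, 2)·M_{n-7} + M_{n-5} + 2·Σ_{i=0}^{n-7} (i+1)·M_i·M_{n-7-i}, where sums over empty ranges are 0 and any term containing M_j or T_{j,k} with j < 0 (or binom(m,2) with m < 2) is 0; moreover |D_3^4| = 1. -/
/-- A Dyck path of semilength `n`, encoded as a word on `Bool`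
(`true` = up step `u`, `false` = down step `d`). -/
def IsDyckWord (n : ℕ) (w : List Bool) : Prop :=
  w.length = 2 * n ∧ w.count true = n ∧ w.count false = n ∧
    ∀ p : List Bool, p <+: w → p.count false ≤ p.count true

/-- The (0-based) indices of the up steps of `w`. -/
def upIdxs (w : List Bool) : List ℕ := w.findIdxs (· == true)

/-- The (0-based) indices of the down steps of `w`. -/
def downIdxs (w : List Bool) : List ℕ := w.findIdxs (· == false)

/-- `rStat w i` is the number of `d`'s strictly between the `i`-th and the
`(i+1)`-st `u` of `w` (with `i` 1-indexed). -/
def rStat (w : List Bool) (i : ℕ) : ℕ :=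
  ((w.take ((upIdxs w).getD i 0)).drop ((upIdxs w).getD (i - 1) 0 + 1)).count false

/-- `sStat w i` is the number of `u`'s strictly between the `i`-th and the
`(i+1)`-st `d` of `w` (with `i` 1-indexed). -/
def sStat (w : List Bool) (i : ℕ) : ℕ :=
  ((w.take ((downIdxs w).getD i 0)).drop ((downIdxs w).getD (i - 1) 0 + 1)).count true

/-- The statistic `L(D) = ∏_{i=1}^{n-1} C(r_i + s_i, r_i)` of a Dyck path of semilength `n`. -/
def LStat (n : ℕ) (w : List Bool) : ℕ :=
  ∏ i ∈ Finset.Icc 1 (n - 1), Nat.choose (rStat w i + sStat w i) (rStat w i)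

/-- `dyckL n k` = the set `𝒟ₙᵏ` of Dyck paths of semilength `n` with `L(D) = k`. -/
def dyckL (n k : ℕ) : Set (List Bool) := {w | IsDyckWord n w ∧ LStat n w = k}

/-- A Motzkin path, encoded as a word on `Option Bool`
(`some true` = up, `some false` = down, `none` = horizontal). -/
def IsMotzkinWord (w : List (Option Bool)) : Prop :=
  w.count (some false) = w.count (some true) ∧
    ∀ p : List (Option Bool), p <+: w → p.count (some false) ≤ p.count (some true)

/-- `motzkin n` = the `n`-th Motzkin number `Mₙ`, the number of Motzkin paths of length `n`. -/
noncomputable def motzkin (n : ℕ) : ℕ :=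
  {w : List (Option Bool) | w.length = n ∧ IsMotzkinWord w}.ncard

/-- The Motzkin ballot number `T_{n,k}`: the number of Motzkin paths of length `n`
whose first down step is in position `k` (1-indexed); by convention `T_{k-1,k} = 1`,
counting the path of `k-1` horizontal steps. -/
noncomputable def motzkinBallot (n k : ℕ) : ℕ :=
  if n + 1 = k then 1
  else
    {w : List (Option Bool) | w.length = n ∧ IsMotzkinWord w ∧
      w.getD (k - 1) none = some false ∧ ∀ j < k - 1, w.getD j none ≠ some false}.ncard

/-- Motzkin numbers with integer index: `Mᵢ = 0` for `i < 0`. -/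
noncomputable def motzkinZ (i : ℤ) : ℤ := if 0 ≤ i then (motzkin i.toNat : ℤ) else 0

/-- Motzkin ballot numbers with integer first index: `T_{n,k} = 0` for `n < 0`. -/
noncomputable def motzkinBallotZ (n : ℤ) (k : ℕ) : ℤ :=
  if 0 ≤ n then (motzkinBallot n.toNat k : ℤ) else 0

/-- The set of returns of a Dyck path `w` of semilength `n`:
indices `1 ≤ k ≤ n` such that the path touches the `x`-axis after `2k` steps. -/
def returns (n : ℕ) (w : List Bool) : Finset ℕ :=
  (Finset.Icc 1 n).filter fun k => (w.take (2 * k)).count false = (w.take (2 * k)).count true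

/-- `dyckRS n r s` = the set `𝒟ₙ^{r,s}` of Dyck paths of semilength `n` having exactly one
index `i` with `rᵢ > 0` and `sᵢ > 0`, and such that at that index `rᵢ = r` and `sᵢ = s`. -/
def dyckRS (n r s : ℕ) : Set (List Bool) :=
  {w | IsDyckWord n w ∧ ∃ i ∈ Finset.Icc 1 (n - 1),
    (0 < rStat w i ∧ 0 < sStat w i) ∧ rStat w i = r ∧ sStat w i = s ∧
      ∀ j ∈ Finset.Icc 1 (n - 1), 0 < rStat w j ∧ 0 < sStat w j → j = i}

/-- `twoStars n w k₁ k₂` says that `k₁ < k₂` are exactly the two indices `i` of `w`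
with `rᵢ > 0` and `sᵢ > 0`. -/
def twoStars (n : ℕ) (w : List Bool) (k₁ k₂ : ℕ) : Prop :=
  k₁ ∈ Finset.Icc 1 (n - 1) ∧ k₂ ∈ Finset.Icc 1 (n - 1) ∧ k₁ < k₂ ∧
    (0 < rStat w k₁ ∧ 0 < sStat w k₁) ∧ (0 < rStat w k₂ ∧ 0 < sStat w k₂) ∧
    ∀ j ∈ Finset.Icc 1 (n - 1), 0 < rStat w j ∧ 0 < sStat w j → j = k₁ ∨ j = k₂

/-- `xStat w k` = the number of indices `i < k` with `rᵢ = 0` and `sᵢ > 0`. -/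
def xStat (w : List Bool) (k : ℕ) : ℕ :=
  ((Finset.Ico 1 k).filter fun i => rStat w i = 0 ∧ 0 < sStat w i).card

/-- `yStat w k` = the number of indices `i < k` with `rᵢ > 0` and `sᵢ = 0`. -/
def yStat (w : List Bool) (k : ℕ) : ℕ :=
  ((Finset.Ico 1 k).filter fun i => 0 < rStat w i ∧ sStat w i = 0).card

/-- The generating function `m(x) = Σ Mₙ xⁿ` of the Motzkin numbers, over `ℚ`. -/
noncomputable def motzkinGF : PowerSeries ℚ := PowerSeries.mk fun n => (motzkin n : ℚ)

namespace DyckFour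

open PowerSeries Finset

/-- The sequence determined by the convolution recurrence of the Motzkin numbers. -/
def mseq : ℕ → ℤ
  | 0 => 1
  | 1 => 1
  | n + 2 => mseq (n + 1) + ∑ i : Fin (n + 1), mseq i * mseq (n - i)

/-- The power series solution of `m = 1 + X m + X² m²`. -/
def mser : ℤ⟦X⟧ := PowerSeries.mk mseq

/-- The series `X m`, the solution of `q = X (1 + q + q²)`. -/
noncomputable def qser : ℤ⟦X⟧ := X * mser

theorem mser_eq : mser = 1 + X * mser + X ^ 2 * mser ^ 2 := by
  ext n
  match n with
  | 0 => simp [mser, mseq]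
  | 1 => simp [mser, mseq, coeff_X_pow_mul', coeff_one, coeff_succ_X_mul]
  | n + 2 =>
    rw [map_add, map_add, coeff_one, if_neg (by omega), zero_add, coeff_succ_X_mul,
      coeff_X_pow_mul, pow_two, coeff_mul]
    simp only [mser, coeff_mk]
    rw [mseq, Finset.Nat.sum_antidiagonal_eq_sum_range_succ (fun i j => mseq i * mseq j),
      Finset.sum_range]

theorem qser_eq : qser = X * (1 + qser + qser ^ 2) := by
  have h := mser_eq
  unfold qser
  linear_combination X * h

/-- The convolution inverse of `1 - X - 2 X q`. -/
noncomputable def cser : ℤ⟦X⟧ :=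
  PowerSeries.mk fun k => ∑ ij ∈ antidiagonal k, coeff ij.2 ((1 + 2 * qser) ^ ij.1)

theorem cser_eq : cser = 1 + X * ((1 + 2 * qser) * cser) := by
  ext k
  cases k with
  | zero => simp [cser]
  | succ k =>
    rw [map_add, coeff_one, if_neg (by omega), zero_add, coeff_succ_X_mul]
    have h : coeff (k + 1) cser =
        ∑ ij ∈ antidiagonal k, coeff ij.2 ((1 + 2 * qser) ^ (ij.1 + 1)) := by
      rw [cser, coeff_mk, Finset.Nat.sum_antidiagonal_succ]
      simp [coeff_one]
    rw [h, coeff_mul]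
    simp only [pow_succ', coeff_mul, cser, coeff_mk, Finset.mul_sum]
    rw [Finset.sum_sigma', Finset.sum_sigma']
    refine Finset.sum_nbij' (fun x => ⟨(x.2.1, x.1.1 + x.2.2), (x.1.1, x.2.2)⟩)
      (fun x => ⟨(x.2.1, x.1.1 + x.2.2), (x.1.1, x.2.2)⟩) ?_ ?_ ?_ ?_ ?_
    all_goals
      rintro ⟨⟨a, b⟩, ⟨c, d⟩⟩ h
      simp only [mem_sigma, HasAntidiagonal.mem_antidiagonal] at h ⊢
    all_goals first | exact ⟨by omega, trivial⟩ | skip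
    all_goals
      obtain ⟨h1, h2⟩ := h
      subst h2
      try rfl

theorem cser_mul_one_sub_sq : cser * (1 - qser ^ 2) = mser := by
  have h := cser_eq
  have hm := mser_eq
  unfold qser at *
  linear_combination mser * h - cser * hm

theorem derivative_qser : d⁄dX ℤ qser = mser * cser := by
  have h := congrArg (d⁄dX ℤ) qser_eq
  have hc := cser_eq
  have hm := mser_eq
  have hq : qser = X * mser := rfl
  simp only [pow_two, Derivation.leibniz, map_add, smul_eq_mul, derivative_X,
    Derivation.map_one_eq_zero, mul_one, zero_add] at h
  linear_combination -(d⁄dX ℤ qser) * hc + cser * h - cser * hm + cser * (1 + qser + X * mser) * hq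

end DyckFour

namespace DyckFour

open PowerSeries Finset

section WordSums

variable {α M : Type*} [Fintype α] [AddCommMonoid M]

/-- The sum of `F w` over all words `w` of length `n`. -/
def wsum : ℕ → (List α → M) → M
  | 0, F => F []
  | n + 1, F => ∑ a, wsum n fun w => F (a :: w)

theorem wsum_congr {n : ℕ} {F G : List α → M} (h : ∀ w, w.length = n → F w = G w) :
    wsum n F = wsum n G := by
  induction n generalizing F G with
  | zero => exact h [] rfl
  | succ n ih => exact Finset.sum_congr rfl fun a _ => ih fun w hw => h _ (by simp [hw])

theorem wsum_zero (n : ℕ) : wsum n (fun _ : List α => (0 : M)) = 0 := by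
  induction n with
  | zero => rfl
  | succ n ih => simp [wsum, ih]

theorem wsum_add (n : ℕ) (F G : List α → M) :
    wsum n (fun w => F w + G w) = wsum n F + wsum n G := by
  induction n generalizing F G with
  | zero => rfl
  | succ n ih => simp [wsum, ih, Finset.sum_add_distrib]

theorem wsum_sum {ι : Type*} (n : ℕ) (s : Finset ι) (F : ι → List α → M) :
    wsum n (fun w => ∑ i ∈ s, F i w) = ∑ i ∈ s, wsum n (F i) := by
  induction n generalizing F with
  | zero => rfl
  | succ n ih => simp only [wsum, ih]; exact Finset.sum_comm

theorem wsum_map {N : Type*} [AddCommMonoid N] (f : M →+ N) (n : ℕ) (F : List α → M) :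
    wsum n (fun w => f (F w)) = f (wsum n F) := by
  induction n generalizing F with
  | zero => rfl
  | succ n ih => simp [wsum, ih]

theorem wsum_mul_left {R : Type*} [NonUnitalNonAssocSemiring R] (n : ℕ) (c : R) (F : List α → R) :
    wsum n (fun w => c * F w) = c * wsum n F :=
  wsum_map (AddMonoidHom.mulLeft c) n F

theorem wsum_mul_right {R : Type*} [NonUnitalNonAssocSemiring R] (n : ℕ) (c : R)
    (F : List α → R) : wsum n (fun w => F w * c) = wsum n F * c :=
  wsum_map (AddMonoidHom.mulRight c) n F

theorem wsum_append (m n : ℕ) (F : List α → M) :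
    wsum (m + n) F = wsum m fun u => wsum n fun v => F (u ++ v) := by
  induction m generalizing F with
  | zero => simp [wsum]
  | succ m ih => rw [Nat.succ_add]; simp [wsum, ih]

theorem wsum_reverse (n : ℕ) (F : List α → M) : wsum n (fun w => F w.reverse) = wsum n F := by
  induction n generalizing F with
  | zero => rfl
  | succ n ih =>
    rw [wsum_append n 1 F]
    simp only [wsum, List.reverse_cons]
    rw [wsum_sum]
    exact Finset.sum_congr rfl fun a _ => ih fun w => F (w ++ [a])

theorem wsum_map_equiv (e : α ≃ α) (n : ℕ) (F : List α → M) :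
    wsum n (fun w => F (w.map e)) = wsum n F := by
  induction n generalizing F with
  | zero => rfl
  | succ n ih =>
    simp only [wsum, List.map_cons]
    rw [← e.sum_comp fun a => wsum n fun w => F (a :: w)]
    exact Finset.sum_congr rfl fun a _ => ih fun w => F (e a :: w)

end WordSums

open Classical in
/-- The indicator of a proposition, with values in `ℤ`. -/
noncomputable def ind (P : Prop) : ℤ := if P then 1 else 0

@[simp] theorem ind_true : ind True = 1 := by simp [ind]

@[simp] theorem ind_false : ind False = 0 := by simp [ind]

theorem ind_pos {P : Prop} (h : P) : ind P = 1 := by simp [ind, h]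

theorem ind_neg {P : Prop} (h : ¬ P) : ind P = 0 := by simp [ind, h]

theorem ind_and (P Q : Prop) : ind (P ∧ Q) = ind P * ind Q := by
  by_cases hP : P <;> by_cases hQ : Q <;> simp [ind, hP, hQ]

/-- The number of words of length `n` satisfying `P`. -/
noncomputable def cnt {α : Type*} [Fintype α] (n : ℕ) (P : List α → Prop) : ℤ :=
  wsum n fun w => ind (P w)

theorem finite_words {α : Type*} [Fintype α] (n : ℕ) (P : List α → Prop) :
    {w : List α | w.length = n ∧ P w}.Finite :=
  (List.finite_length_eq α n).subset fun _ h => h.1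

theorem ncard_words {α : Type*} [Fintype α] (n : ℕ) (P : List α → Prop) :
    ({w : List α | w.length = n ∧ P w}.ncard : ℤ) = cnt n P := by
  induction n generalizing P with
  | zero =>
    by_cases h : P []
    · have : {w : List α | w.length = 0 ∧ P w} = {[]} := by
        ext w; simp only [List.length_eq_zero_iff, Set.mem_ofPred_eq, Set.mem_singleton_iff]
        exact ⟨fun h => h.1, fun e => ⟨e, e ▸ h⟩⟩
      rw [this]; simp [cnt, wsum, h]
    · have : {w : List α | w.length = 0 ∧ P w} = ∅ := by
        ext w; simp only [List.length_eq_zero_iff, Set.mem_ofPred_eq, Set.mem_empty_iff_false,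
          iff_false]
        rintro ⟨rfl, h'⟩; exact h h'
      rw [this]; simp [cnt, wsum, h]
  | succ n ih =>
    have : {w : List α | w.length = n + 1 ∧ P w} =
        ⋃ a : α, List.cons a '' {w : List α | w.length = n ∧ P (a :: w)} := by
      ext w
      cases w with
      | nil => simp
      | cons a w => simp
    rw [this, Set.ncard_iUnion_of_finite]
    · simp only [cnt, wsum]
      rw [finsum_eq_sum_of_fintype]
      push_cast
      refine Finset.sum_congr rfl fun a _ => ?_
      rw [Set.ncard_image_of_injective _ (List.cons_injective), ih]
      rfl
    · intro a; exact (finite_words n _).image _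
    · intro a b hab
      rw [Function.onFun, Set.disjoint_left]
      rintro _ ⟨u, _, rfl⟩ ⟨v, _, h⟩
      exact hab (by simpa using (List.cons.inj h).1.symm)

theorem cnt_congr {α : Type*} [Fintype α] {n : ℕ} {P Q : List α → Prop}
    (h : ∀ w, w.length = n → (P w ↔ Q w)) : cnt n P = cnt n Q :=
  wsum_congr fun w hw => by rw [h w hw]

theorem cnt_eq_zero {α : Type*} [Fintype α] {n : ℕ} {P : List α → Prop}
    (h : ∀ w, w.length = n → ¬ P w) : cnt n P = 0 := by
  rw [cnt, wsum_congr fun w hw => ind_neg (h w hw), wsum_zero]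

@[simp] theorem cnt_zero {α : Type*} [Fintype α] (P : List α → Prop) : cnt 0 P = ind (P []) := rfl

@[simp] theorem cnt_false {α : Type*} [Fintype α] (n : ℕ) :
    cnt n (fun _ : List α => False) = 0 :=
  cnt_eq_zero fun _ _ h => h

theorem cnt_succ (n : ℕ) (P : List (Option Bool) → Prop) :
    cnt (n + 1) P = cnt n (fun w => P (none :: w)) + cnt n (fun w => P (some true :: w)) +
      cnt n (fun w => P (some false :: w)) := by
  simp [cnt, wsum, Fintype.sum_option, add_assoc]

/-- `Walk a b w`: the Motzkin-type path `w` leads from height `a` to height `b` without going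
below height `0`. -/
def Walk : ℕ → ℕ → List (Option Bool) → Prop
  | a, b, [] => a = b
  | a, b, none :: w => Walk a b w
  | a, b, some true :: w => Walk (a + 1) b w
  | 0, _, some false :: _ => False
  | a + 1, b, some false :: w => Walk a b w

@[simp] theorem walk_nil (a b : ℕ) : Walk a b [] ↔ a = b := by cases a <;> simp [Walk]

@[simp] theorem walk_none (a b : ℕ) (w) : Walk a b (none :: w) ↔ Walk a b w := by
  cases a <;> simp [Walk]

@[simp] theorem walk_up (a b : ℕ) (w) : Walk a b (some true :: w) ↔ Walk (a + 1) b w := by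
  cases a <;> simp [Walk]

@[simp] theorem walk_zero_down (b : ℕ) (w) : ¬ Walk 0 b (some false :: w) := by simp [Walk]

@[simp] theorem walk_succ_down (a b : ℕ) (w) : Walk (a + 1) b (some false :: w) ↔ Walk a b w := by
  simp [Walk]

theorem cnt_walk (n h : ℕ) : cnt n (Walk h 0) = coeff n (mser * qser ^ h) := by
  have hq : qser = X * mser := rfl
  induction n generalizing h with
  | zero =>
    rcases Nat.eq_zero_or_pos h with rfl | hh
    · simp [mser, mseq]
    · simp [hh.ne', ind, qser]
  | succ n ih =>
    rw [cnt_succ]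
    simp only [walk_none, walk_up]
    cases h with
    | zero =>
      simp only [walk_zero_down, cnt_false]
      have e : mser * qser ^ 0 = 1 + X * (mser * qser ^ 0 + mser * qser ^ 1) := by
        linear_combination mser_eq - X * mser * hq
      rw [e, map_add, coeff_succ_X_mul, map_add, ← ih, ← ih, coeff_one]
      simp
    | succ h =>
      simp only [walk_succ_down]
      have e : mser * qser ^ (h + 1) =
          X * (mser * qser ^ (h + 1) + mser * qser ^ (h + 1 + 1) + mser * qser ^ h) := by
        linear_combination mser * qser ^ h * qser_eq
      rw [e, coeff_succ_X_mul, map_add, map_add, ← ih, ← ih, ← ih]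

/-- The distance from the `k`-th to the `(k+1)`-st occurrence of `true` in `w`, with virtual
occurrences just before and just after the word (and `0` if there are fewer than `k`). -/
def gap : ℕ → List Bool → ℕ
  | 0, [] => 1
  | 0, true :: _ => 1
  | 0, false :: w => gap 0 w + 1
  | _ + 1, [] => 0
  | k + 1, true :: w => gap k w
  | k + 1, false :: w => gap (k + 1) w

/-- The positions of the down steps. -/
def downs (w : List (Option Bool)) : List Bool := w.map (· == some false)

/-- The positions of the up steps. -/
def ups (w : List (Option Bool)) : List Bool := w.map (· == some true)

@[simp] theorem downs_nil : downs [] = [] := rfl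
@[simp] theorem downs_none (w) : downs (none :: w) = false :: downs w := rfl
@[simp] theorem downs_up (w) : downs (some true :: w) = false :: downs w := rfl
@[simp] theorem downs_down (w) : downs (some false :: w) = true :: downs w := rfl
@[simp] theorem ups_nil : ups [] = [] := rfl
@[simp] theorem ups_none (w) : ups (none :: w) = false :: ups w := rfl
@[simp] theorem ups_up (w) : ups (some true :: w) = true :: ups w := rfl
@[simp] theorem ups_down (w) : ups (some false :: w) = false :: ups w := rfl

theorem gap_zero_pos (w : List Bool) : 0 < gap 0 w := by
  match w with
  | [] => simp [gap]
  | true :: w => simp [gap]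
  | false :: w => simp [gap]

/-- Walks from height `h` with a prescribed gap between two down steps: the count does not depend
on which gap is prescribed. -/
theorem cnt_walk_gap (n h k r : ℕ) (hk : k ≤ h) :
    cnt n (fun w => Walk h 0 w ∧ gap k (downs w) = r + 1) =
      coeff n ((X + X * qser) ^ r * qser ^ h) := by
  have hq : qser = X * mser := rfl
  induction n generalizing h k r with
  | zero =>
    rcases Nat.eq_zero_or_pos h with rfl | hh
    · obtain rfl : k = 0 := by omega
      rcases Nat.eq_zero_or_pos r with rfl | hr
      · simp [gap, ind]
      · simp [gap, ind, hr.ne']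
    · simp [hh.ne', ind, qser]
  | succ n ih =>
    rw [cnt_succ]
    simp only [walk_none, walk_up, downs_none, downs_up, downs_down]
    cases k with
    | zero =>
      cases r with
      | zero =>
        have z : ∀ a : ℕ, cnt n (fun w => Walk a 0 w ∧ gap 0 (false :: downs w) = 0 + 1) = 0 :=
          fun a => cnt_eq_zero fun w _ hw => by
            have := gap_zero_pos (downs w)
            have := hw.2
            simp only [gap] at this
            omega
        rw [z, z]
        cases h with
        | zero => simp
        | succ h =>
          have e : (X + X * qser) ^ 0 * qser ^ (h + 1) = X * (mser * qser ^ h) := by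
            linear_combination qser ^ h * hq
          rw [e, coeff_succ_X_mul, ← cnt_walk]
          simp [gap]
      | succ r =>
        have e : (X + X * qser) ^ (r + 1) * qser ^ h =
            X * ((X + X * qser) ^ r * qser ^ h + (X + X * qser) ^ r * qser ^ (h + 1)) := by
          ring
        rw [e, coeff_succ_X_mul, map_add, ← ih h 0 r (by omega), ← ih (h + 1) 0 r (by omega)]
        simp [gap]
    | succ k =>
      obtain ⟨h, rfl⟩ : ∃ h', h = h' + 1 := ⟨h - 1, by omega⟩
      have e : (X + X * qser) ^ r * qser ^ (h + 1) =
          X * ((X + X * qser) ^ r * qser ^ (h + 1) + (X + X * qser) ^ r * qser ^ (h + 1 + 1) +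
            (X + X * qser) ^ r * qser ^ h) := by
        linear_combination (X + X * qser) ^ r * qser ^ h * qser_eq
      rw [e, coeff_succ_X_mul, map_add, map_add, ← ih (h + 1) (k + 1) r hk,
        ← ih (h + 1 + 1) (k + 1) r (by omega), ← ih h k r (by omega)]
      simp [gap]

theorem cnt_walk_gap_gap (n h k l : ℕ) (hkl : k < l) (hl : l ≤ h) :
    cnt n (fun w => Walk h 0 w ∧ gap k (downs w) = 1 ∧ gap l (downs w) = 1) =
      coeff n (X * qser ^ (h - 1)) := by
  induction n generalizing h k l with
  | zero => simp [ind, show h ≠ 0 by omega]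
  | succ n ih =>
    obtain ⟨h, rfl⟩ : ∃ h', h = h' + 1 := ⟨h - 1, by omega⟩
    obtain ⟨l, rfl⟩ : ∃ l', l = l' + 1 := ⟨l - 1, by omega⟩
    rw [cnt_succ]
    simp only [walk_none, walk_up, downs_none, downs_up, downs_down, walk_succ_down]
    cases k with
    | zero =>
      have z : ∀ a : ℕ, cnt n (fun w => Walk a 0 w ∧ gap 0 (false :: downs w) = 1 ∧
          gap (l + 1) (false :: downs w) = 1) = 0 :=
        fun a => cnt_eq_zero fun w _ hw => by
          have := gap_zero_pos (downs w)
          have := hw.2.1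
          simp only [gap] at this
          omega
      rw [z, z]
      simp only [gap, true_and, zero_add]
      rw [coeff_succ_X_mul]
      simpa using cnt_walk_gap n h l 0 (by omega)
    | succ k =>
      obtain ⟨h, rfl⟩ : ∃ h', h = h' + 1 := ⟨h - 1, by omega⟩
      have e : X * qser ^ (h + 1 + 1 - 1) =
          X * (X * qser ^ (h + 1 + 1 - 1) + X * qser ^ (h + 1 + 1 + 1 - 1)
            + X * qser ^ (h + 1 - 1)) := by
        simp only [Nat.add_sub_cancel]
        linear_combination X * qser ^ h * qser_eq
      rw [e, coeff_succ_X_mul, map_add, map_add, ← ih (h + 1 + 1) (k + 1) (l + 1) hkl hl,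
        ← ih (h + 1 + 1 + 1) (k + 1) (l + 1) hkl (by omega), ← ih (h + 1) k l (by omega) (by omega)]
      simp [gap]

end DyckFour

namespace DyckFour

open PowerSeries Finset

/-- The number of down steps. -/
def dn (w : List (Option Bool)) : ℕ := (downs w).count true

/-- The number of up steps. -/
def un (w : List (Option Bool)) : ℕ := (ups w).count true

@[simp] theorem dn_nil : dn [] = 0 := rfl
@[simp] theorem dn_none (w) : dn (none :: w) = dn w := by simp [dn]
@[simp] theorem dn_up (w) : dn (some true :: w) = dn w := by simp [dn]
@[simp] theorem dn_down (w) : dn (some false :: w) = dn w + 1 := by simp [dn]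
@[simp] theorem un_nil : un [] = 0 := rfl
@[simp] theorem un_none (w) : un (none :: w) = un w := by simp [un]
@[simp] theorem un_up (w) : un (some true :: w) = un w + 1 := by simp [un]
@[simp] theorem un_down (w) : un (some false :: w) = un w := by simp [un]

theorem dn_add_un_le (w : List (Option Bool)) : dn w + un w ≤ w.length := by
  induction w with
  | nil => simp
  | cons x w ih => rcases x with _ | _ | _ <;> simp <;> omega

theorem Walk.height {a b : ℕ} {w : List (Option Bool)} (h : Walk a b w) :
    a + un w = b + dn w := by
  induction w generalizing a with
  | nil => simpa using h
  | cons x w ih =>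
    rcases x with _ | _ | _
    · simpa using ih (by simpa using h)
    · cases a with
      | zero => simp at h
      | succ a =>
        have := ih (by simpa using h)
        simp; omega
    · have := ih (by simpa using h)
      simp; omega

theorem walk_iff_of_dn_le {a b : ℕ} {w : List (Option Bool)} (h : dn w ≤ a) :
    Walk a b w ↔ a + un w = b + dn w := by
  induction w generalizing a with
  | nil => simp
  | cons x w ih =>
    rcases x with _ | _ | _
    · simpa using ih (by simpa using h)
    · cases a with
      | zero => simp at h
      | succ a =>
        rw [dn_down] at h
        have := ih (a := a) (by omega)
        simp [this]; omega
    · rw [dn_up] at h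
      have := ih (a := a + 1) (by omega)
      simp [this]; omega

@[simp] theorem gap_zero_false_ne_one (w : List Bool) : gap 0 (false :: w) ≠ 1 := by
  have := gap_zero_pos w
  simp only [gap]
  omega

@[simp] theorem gap_zero_true (w : List Bool) : gap 0 (true :: w) = 1 := rfl
@[simp] theorem gap_zero_nil : gap 0 [] = 1 := rfl
@[simp] theorem gap_succ_true (k : ℕ) (w : List Bool) : gap (k + 1) (true :: w) = gap k w := rfl
@[simp] theorem gap_succ_false (k : ℕ) (w : List Bool) :
    gap (k + 1) (false :: w) = gap (k + 1) w := rfl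

theorem cnt_gap_downs (n i e f : ℕ) (hi : i ≤ e + 1) :
    cnt (n + 1) (fun w => gap i (downs w) = 1 ∧ dn w = e + 1 ∧ un w = f) =
      cnt n (fun w => dn w = e ∧ un w = f) := by
  induction n generalizing i e f with
  | zero =>
    rw [cnt_succ]
    rcases i with _ | _ | i
    · simp
    · simp
    · simp [ind, show e ≠ 0 by omega, show ¬ (0 = e) by omega]
  | succ n ih =>
    rw [cnt_succ]
    cases i with
    | zero => simp
    | succ i =>
      conv_rhs => rw [cnt_succ]
      simp only [downs_none, downs_up, downs_down, dn_none, dn_up, dn_down, un_none, un_up,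
        un_down, gap_succ_false, gap_succ_true]
      rw [ih (i + 1) e f hi]
      congr 1
      · congr 1
        cases f with
        | zero => simp
        | succ f => simpa using ih (i + 1) e f hi
      · cases e with
        | zero =>
          obtain rfl : i = 0 := by omega
          simp only [Nat.add_right_cancel_iff]
          rw [cnt_eq_zero (n := n), cnt_eq_zero]
          · rintro w hw ⟨h1, h2, h3⟩
            cases w with
            | nil => simp at hw
            | cons x w => rcases x with _ | _ | _ <;> simp at h1 h2
          · simp
        | succ e => simpa using ih i e f (by omega)

theorem cnt_walk_gap_ups (n t j b : ℕ) :
    cnt (n + 1) (fun w => Walk t (b + 1) w ∧ dn w = t + j ∧ gap j (ups w) = 1) =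
      cnt n (fun w => Walk t b w ∧ dn w = t + j) := by
  cases j with
  | zero =>
    rw [cnt_succ]
    have e : ∀ w, (Walk (t + 1) (b + 1) w ∧ dn w = t) ↔ (Walk t b w ∧ dn w = t) := fun w =>
      and_congr_left fun h => by
        rw [walk_iff_of_dn_le (by omega), walk_iff_of_dn_le (by omega)]; omega
    simp [e]
  | succ j =>
    induction n generalizing t j with
    | zero =>
      rw [cnt_zero, ind_neg (by simp), cnt_eq_zero]
      rintro w hw ⟨h1, h2, -⟩
      have := h1.height
      have := dn_add_un_le w
      omega
    | succ n ih =>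
      rw [cnt_succ]
      conv_rhs => rw [cnt_succ]
      simp only [ups_none, ups_up, ups_down, dn_none, dn_up, dn_down, gap_succ_false,
        gap_succ_true, walk_none, walk_up]
      rw [ih]
      congr 1
      · congr 1
        cases j with
        | zero =>
          have e : ∀ w, (Walk (t + 1 + 1) (b + 1) w ∧ dn w = t + 1) ↔
              (Walk (t + 1) b w ∧ dn w = t + 1) := fun w =>
            and_congr_left fun h => by
              rw [walk_iff_of_dn_le (by omega), walk_iff_of_dn_le (by omega)]; omega
          rw [cnt_succ]
          simp [e]
        | succ j =>
          have := ih (t + 1) j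
          rw [show t + 1 + (j + 1) = t + (j + 1 + 1) by omega] at this
          exact this
      · cases t with
        | zero => simp
        | succ t =>
          simp only [walk_succ_down, show ∀ a, (a + 1 = t + 1 + (j + 1)) = (a = t + (j + 1)) from
            fun a => by rw [eq_iff_iff]; omega]
          exact ih t j

theorem cnt_walk_gap_downs_ups_zero (n s i b : ℕ) (hi : i ≤ s) :
    cnt (n + 2) (fun w => Walk (s + 1) (b + 1) w ∧ dn w = s + 1 ∧
        gap (i + 1) (downs w) = 1 ∧ gap 0 (ups w) = 1) =
      cnt n (fun w => Walk s b w ∧ dn w = s) := by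
  rw [cnt_succ]
  have e1 : ∀ w, (Walk (s + 1 + 1) (b + 1) w ∧ dn w = s + 1 ∧ gap (i + 1) (downs w) = 1) ↔
      (gap (i + 1) (downs w) = 1 ∧ dn w = s + 1 ∧ un w = b) := fun w => by
    constructor
    · rintro ⟨h1, h2, h3⟩
      have := h1.height
      exact ⟨h3, h2, by omega⟩
    · rintro ⟨h1, h2, h3⟩
      exact ⟨(walk_iff_of_dn_le (by omega)).2 (by omega), h2, h1⟩
  have e2 : ∀ w, (Walk s b w ∧ dn w = s) ↔ (dn w = s ∧ un w = b) := fun w => by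
    constructor
    · rintro ⟨h1, h2⟩
      have := h1.height
      exact ⟨h2, by omega⟩
    · rintro ⟨h1, h2⟩
      exact ⟨(walk_iff_of_dn_le (by omega)).2 (by omega), h1⟩
  simp only [e2]
  rw [← cnt_gap_downs n (i + 1) s b (by omega)]
  simp [e1]

theorem cnt_walk_gap_downs_ups (n s i j b : ℕ) (hi : i ≤ s) :
    cnt (n + 2) (fun w => Walk (s + 1) (b + 1) w ∧ dn w = s + 1 + j ∧
        gap (i + 1) (downs w) = 1 ∧ gap j (ups w) = 1) =
      cnt n (fun w => Walk s b w ∧ dn w = s + j) := by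
  cases j with
  | zero => exact cnt_walk_gap_downs_ups_zero n s i b hi
  | succ j =>
    induction n generalizing s i j with
    | zero =>
      rw [cnt_zero, ind_neg (by simp), cnt_eq_zero]
      rintro w hw ⟨h1, h2, -⟩
      have := h1.height
      have := dn_add_un_le w
      omega
    | succ n ih =>
      rw [cnt_succ]
      conv_rhs => rw [cnt_succ]
      simp only [ups_none, ups_up, ups_down, downs_none, downs_up, downs_down, dn_none, dn_up,
        dn_down, gap_succ_false, gap_succ_true, walk_none, walk_up, walk_succ_down]
      rw [ih s i hi j]
      congr 1
      · congr 1
        rw [show s + 1 + (j + 1) = s + 1 + 1 + j by omega, show s + (j + 1) = s + 1 + j by omega]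
        cases j with
        | zero => exact cnt_walk_gap_downs_ups_zero n (s + 1) i b (by omega)
        | succ j => exact ih (s + 1) i (by omega) j
      · simp only [show ∀ a, (a + 1 = s + 1 + (j + 1)) = (a = s + (j + 1)) from
            fun a => by rw [eq_iff_iff]; omega]
        cases i with
        | zero =>
          rw [cnt_succ]
          cases s with
          | zero => simp
          | succ s =>
            simp only [ups_none, ups_up, ups_down, downs_none, downs_up, downs_down, dn_none,
              dn_up, dn_down, gap_succ_false, gap_zero_true, gap_zero_false_ne_one, walk_succ_down,
              false_and, and_false, cnt_false, zero_add, true_and,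
              show ∀ a, (a + 1 = s + 1 + (j + 1)) = (a = s + (j + 1)) from
                fun a => by rw [eq_iff_iff]; omega]
            exact cnt_walk_gap_ups n s (j + 1) b
        | succ i =>
          obtain ⟨s, rfl⟩ : ∃ s', s = s' + 1 := ⟨s - 1, by omega⟩
          simp only [walk_succ_down, show ∀ a, (a + 1 = s + 1 + (j + 1)) = (a = s + (j + 1)) from
            fun a => by rw [eq_iff_iff]; omega]
          exact ih s i (by omega) j

end DyckFour

namespace DyckFour

open PowerSeries Finset

theorem gap_append_left (k : ℕ) (l l' : List Bool) (hk : k ≤ l.count true) :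
    gap k (l ++ true :: l') = gap k l := by
  induction l generalizing k with
  | nil => obtain rfl : k = 0 := by simpa using hk
           rfl
  | cons x l ih =>
    cases x <;> cases k <;> simp at hk
    · simp [gap, ih]
    · simp [ih _ hk]
    · simp
    · simp [ih _ hk]

theorem gap_append_right (k : ℕ) (l l' : List Bool) :
    gap (l.count true + 1 + k) (l ++ true :: l') = gap k l' := by
  induction l with
  | nil => simp [Nat.add_comm 1 k]
  | cons x l ih =>
    cases x
    · rw [List.count_cons_of_ne (by simp), List.cons_append, ← ih, Nat.add_right_comm]
      rfl
    · rw [List.count_cons_self, List.cons_append, ← ih, Nat.add_right_comm _ 1 1,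
        Nat.add_right_comm _ 1 k, gap_succ_true]

theorem gap_append_false (k : ℕ) (l : List Bool) (hk : k ≤ l.count true) :
    gap k (l ++ [false]) = gap k l + if k = l.count true then 1 else 0 := by
  induction l generalizing k with
  | nil => obtain rfl : k = 0 := by simpa using hk
           rfl
  | cons x l ih =>
    cases x <;> cases k <;> simp at hk
    · have := ih 0 (Nat.zero_le _)
      simp [gap, this, add_right_comm]
    · simp [ih _ hk]
    · simp
    · simp [ih _ hk]

theorem gap_reverse (k : ℕ) (l : List Bool) (hk : k ≤ l.count true) :
    gap k l.reverse = gap (l.count true - k) l := by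
  induction l generalizing k with
  | nil => obtain rfl : k = 0 := by simpa using hk
           rfl
  | cons x l ih =>
    rw [List.reverse_cons]
    cases x
    · rw [List.count_cons_of_ne (by simp)] at hk ⊢
      rw [gap_append_false _ _ (by simpa using hk), ih _ hk, List.count_reverse]
      obtain rfl | h := eq_or_lt_of_le hk
      · simp [gap]
      · obtain ⟨d, hd⟩ : ∃ d, List.count true l - k = d + 1 := ⟨_, (Nat.succ_pred (by omega)).symm⟩
        simp [hd, h.ne]
    · rw [List.count_cons_self] at hk ⊢
      obtain rfl | h := eq_or_lt_of_le hk
      · have := gap_append_right 0 l.reverse []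
        simpa using this
      · rw [gap_append_left _ _ _ (by simpa using Nat.lt_succ_iff.1 h), ih _ (by omega),
          Nat.succ_sub (by omega)]
        rfl

theorem cnt_eq_sum {α : Type*} [Fintype α] {n m : ℕ} {P : List α → Prop} (f : List α → ℕ)
    (hf : ∀ w, w.length = n → P w → f w < m) :
    cnt n P = ∑ j ∈ range m, cnt n fun w => P w ∧ f w = j := by
  simp only [cnt]
  rw [← wsum_sum]
  refine wsum_congr fun w hw => ?_
  by_cases h : P w
  · simp [h, ind, hf w hw h]
  · simp [h]

theorem cnt_walk_downs_ups (n s b : ℕ) :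
    cnt (n + 2) (fun w => Walk (s + 1) (b + 1) w ∧ s + 1 ≤ dn w ∧
        gap (s + 1) (downs w) = 1 ∧ gap (b + 1) (ups w).reverse = 1) =
      cnt n (fun w => Walk s b w ∧ s ≤ dn w) := by
  rw [cnt_eq_sum (m := n + 3) (fun w => dn w - (s + 1)), cnt_eq_sum (m := n + 3) (fun w => dn w - s)]
  · refine Finset.sum_congr rfl fun j _ => ?_
    rw [cnt_congr (n := n) (P := fun w => (Walk s b w ∧ s ≤ dn w) ∧ dn w - s = j)
      (Q := fun w => Walk s b w ∧ dn w = s + j)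
      fun w _ => ⟨fun h => ⟨h.1.1, by omega⟩, fun h => ⟨⟨h.1, by omega⟩, by omega⟩⟩,
      ← cnt_walk_gap_downs_ups n s s j b le_rfl]
    refine cnt_congr fun w _ => ?_
    have key : Walk (s + 1) (b + 1) w → dn w = s + 1 + j →
        gap (b + 1) (ups w).reverse = gap j (ups w) := fun h h' => by
      have := h.height
      rw [gap_reverse _ _ (by change _ ≤ un w; omega)]
      congr 1
      change un w - _ = _
      omega
    constructor
    · rintro ⟨⟨h1, h2, h3, h4⟩, h5⟩
      have h6 : dn w = s + 1 + j := by omega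
      exact ⟨h1, h6, h3, by rw [← key h1 h6, h4]⟩
    · rintro ⟨h1, h2, h3, h4⟩
      exact ⟨⟨h1, by omega, h3, by rw [key h1 h2, h4]⟩, by omega⟩
  · intro w hw _
    have := dn_add_un_le w
    omega
  · intro w hw _
    have := dn_add_un_le w
    omega

end DyckFour

namespace DyckFour

open PowerSeries Finset

theorem walk_append {a b : ℕ} {u v : List (Option Bool)} :
    Walk a b (u ++ v) ↔ ∃ c, Walk a c u ∧ Walk c b v := by
  induction u generalizing a with
  | nil => simp
  | cons x u ih =>
    rcases x with _ | _ | _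
    · simp [ih]
    · cases a <;> simp [ih]
    · simp [ih]

/-- The reflection of a path: reversed, with up and down steps exchanged. -/
def hat (w : List (Option Bool)) : List (Option Bool) :=
  (w.map (Equiv.optionCongr Equiv.boolNot)).reverse

@[simp] theorem hat_nil : hat [] = [] := rfl

theorem hat_cons (x : Option Bool) (w : List (Option Bool)) :
    hat (x :: w) = hat w ++ [Equiv.optionCongr Equiv.boolNot x] := by simp [hat]

@[simp] theorem length_hat (w : List (Option Bool)) : (hat w).length = w.length := by simp [hat]

theorem wsum_hat {M : Type*} [AddCommMonoid M] (n : ℕ) (F : List (Option Bool) → M) :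
    wsum n (fun w => F (hat w)) = wsum n F := by
  simp only [hat]
  rw [wsum_map_equiv (Equiv.optionCongr Equiv.boolNot) n fun w => F w.reverse, wsum_reverse]

theorem walk_hat {a b : ℕ} {w : List (Option Bool)} : Walk a b (hat w) ↔ Walk b a w := by
  induction w generalizing b with
  | nil => simp [eq_comm]
  | cons x w ih =>
    rw [hat_cons, walk_append]
    rcases x with _ | _ | _
    · simp [ih]
    · cases b <;> simp [ih]
    · simp only [ih, walk_up, Equiv.optionCongr_apply, Option.map_some, Equiv.boolNot_apply,
        Bool.not_true]
      constructor
      · rintro ⟨_ | c, h1, h2⟩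
        · simp at h2
        · rw [walk_succ_down, walk_nil] at h2
          rwa [← h2]
      · intro h
        exact ⟨b + 1, h, by simp⟩

theorem downs_hat (w : List (Option Bool)) : downs (hat w) = (ups w).reverse := by
  simp only [downs, ups, hat, List.map_reverse, List.map_map]
  congr 2
  funext x
  rcases x with _ | _ | _ <;> rfl

theorem Walk.unique {a a' b : ℕ} {w : List (Option Bool)} (h : Walk a b w) (h' : Walk a' b w) :
    a = a' := by
  have := h.height
  have := h'.height
  omega

theorem Walk.unique_right {a b b' : ℕ} {w : List (Option Bool)} (h : Walk a b w)
    (h' : Walk a b' w) : b = b' := by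
  have := h.height
  have := h'.height
  omega

theorem Walk.le {a b : ℕ} {w : List (Option Bool)} (h : Walk a b w) : b ≤ a + w.length := by
  have := h.height
  have := dn_add_un_le w
  omega

theorem Walk.le' {a b : ℕ} {w : List (Option Bool)} (h : Walk a b w) : a ≤ b + w.length := by
  have := h.height
  have := dn_add_un_le w
  omega

theorem cnt_walk_zero (n h : ℕ) : cnt n (Walk 0 h) = coeff n (mser * qser ^ h) := by
  rw [← cnt_walk]
  simp only [cnt, ← walk_hat (a := h) (b := 0)]
  exact wsum_hat n fun w => ind (Walk h 0 w)

theorem ind_exists_eq_sum {P : ℕ → Prop} {m : ℕ} (hm : ∀ c, P c → c < m)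
    (hu : ∀ c c', P c → P c' → c = c') : ind (∃ c, P c) = ∑ c ∈ range m, ind (P c) := by
  by_cases h : ∃ c, P c
  · obtain ⟨c, hc⟩ := h
    rw [ind_pos ⟨c, hc⟩, Finset.sum_eq_single_of_mem c (mem_range.2 (hm c hc)), ind_pos hc]
    exact fun c' _ hne => ind_neg fun h' => hne (hu _ _ h' hc)
  · rw [ind_neg h, Finset.sum_eq_zero]
    exact fun c _ => ind_neg fun h' => h ⟨c, h'⟩

theorem cnt_walk_add (p q a b m : ℕ) (hm : a + p < m) :
    cnt (p + q) (Walk a b) = ∑ c ∈ range m, cnt p (Walk a c) * cnt q (Walk c b) := by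
  rw [cnt, wsum_append]
  simp only [walk_append]
  have : ∀ c, cnt p (Walk a c) * cnt q (Walk c b) =
      wsum p fun u => wsum q fun v => ind (Walk a c u ∧ Walk c b v) := fun c => by
    simp only [ind_and, wsum_mul_left, wsum_mul_right, cnt]
  simp only [this]
  rw [← wsum_sum]
  refine wsum_congr fun u hu => ?_
  rw [← wsum_sum]
  refine wsum_congr fun v _ => ind_exists_eq_sum (fun c hc => ?_) fun c c' hc hc' =>
    hc.1.unique_right hc'.1
  have := hc.1.le
  omega

/-- The generating function by length of the words satisfying `P`. -/
noncomputable def gser (P : List (Option Bool) → Prop) : ℤ⟦X⟧ := PowerSeries.mk fun n => cnt n P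

@[simp] theorem coeff_gser (n : ℕ) (P : List (Option Bool) → Prop) :
    coeff n (gser P) = cnt n P := coeff_mk n _

theorem coeff_sum_walk_walk_walk (k m : ℕ) (hm : k < m) :
    coeff k (∑ s ∈ range m, ∑ b ∈ range m, mser * qser ^ s * gser (Walk s b) * (mser * qser ^ b)) =
      ((k + 2).choose 2 : ℤ) * coeff k mser := by
  have e : ∀ s, mser * qser ^ s = gser (Walk 0 s) := fun s => by ext n; simp [cnt_walk_zero]
  have e' : ∀ b, mser * qser ^ b = gser (Walk b 0) := fun s => by ext n; simp [cnt_walk]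
  have h : ∀ s b, mser * qser ^ s * gser (Walk s b) * (mser * qser ^ b) =
      gser (Walk 0 s) * gser (Walk s b) * gser (Walk b 0) := fun s b => by rw [e, e']
  simp only [h, map_sum, coeff_mul, coeff_gser, Finset.sum_mul]
  have key : ∀ x ∈ antidiagonal k, ∀ y ∈ antidiagonal x.1, ∑ s ∈ range m, ∑ b ∈ range m,
      cnt y.1 (Walk 0 s) * cnt y.2 (Walk s b) * cnt x.2 (Walk b 0) = coeff k mser := by
    intro x hx y hy
    rw [HasAntidiagonal.mem_antidiagonal] at hx hy
    rw [Finset.sum_comm]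
    simp only [← Finset.sum_mul]
    have : ∀ b, ∑ s ∈ range m, cnt y.1 (Walk 0 s) * cnt y.2 (Walk s b) = cnt x.1 (Walk 0 b) :=
      fun b => by rw [← hy, cnt_walk_add y.1 y.2 0 b m (by omega)]
    simp only [this]
    rw [← cnt_walk_add x.1 x.2 0 0 m (by omega), hx, cnt_walk]
    simp
  have swap : ∑ s ∈ range m, ∑ b ∈ range m, ∑ x ∈ antidiagonal k, ∑ y ∈ antidiagonal x.1,
      cnt y.1 (Walk 0 s) * cnt y.2 (Walk s b) * cnt x.2 (Walk b 0) =
      ∑ x ∈ antidiagonal k, ∑ y ∈ antidiagonal x.1, ∑ s ∈ range m, ∑ b ∈ range m,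
      cnt y.1 (Walk 0 s) * cnt y.2 (Walk s b) * cnt x.2 (Walk b 0) := by
    simp only [Finset.sum_comm (s := range m) (t := antidiagonal _)]
  rw [swap, Finset.sum_congr rfl fun x hx => Finset.sum_congr rfl fun y hy => key x hx y hy]
  simp only [Finset.sum_const, Finset.Nat.card_antidiagonal, ← Finset.sum_smul]
  rw [Finset.Nat.sum_antidiagonal_eq_sum_range_succ_mk]
  have : ∑ i ∈ range (k + 1), (i + 1) = (k + 2).choose 2 := by
    have := Finset.sum_range_id (k + 2)
    rw [Finset.sum_range_succ'] at this
    rw [Nat.choose_two_right, ← this]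
    simp
  simp [this]

end DyckFour

namespace DyckFour

open PowerSeries Finset

/-- Walks from `a` to `b` with fewer than `a` down steps. -/
noncomputable def vser (a b : ℕ) : ℤ⟦X⟧ := gser fun w => Walk a b w ∧ dn w < a

/-- Words with `a` down steps and `b` up steps. -/
noncomputable def fser (a b : ℕ) : ℤ⟦X⟧ := gser fun w => dn w = a ∧ un w = b

/-- Walks from `h` to `h'` having at least `h` down steps, in which the `h`-th down step and the
up step that is the `h'`-th from the end are followed, resp. preceded, by one of their kind. -/
noncomputable def useries (h h' : ℕ) : ℤ⟦X⟧ := gser fun w =>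
  Walk h h' w ∧ h ≤ dn w ∧ gap h (downs w) = 1 ∧ gap h' (ups w).reverse = 1

theorem vser_zero_left (b : ℕ) : vser 0 b = 0 := by ext n; simp [vser]

theorem vser_zero_right (a : ℕ) : vser a 0 = 0 := by
  ext n
  rw [vser, coeff_gser, cnt_eq_zero, map_zero]
  rintro w _ ⟨h, h'⟩
  have := h.height
  omega

theorem vser_succ (a b : ℕ) : vser (a + 1) (b + 1) = vser a b + fser a b := by
  ext n
  simp only [vser, fser, map_add, coeff_gser, cnt]
  rw [← wsum_add]
  refine wsum_congr fun w _ => ?_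
  rcases lt_trichotomy (dn w) a with h | h | h
  · simp [walk_iff_of_dn_le (show dn w ≤ a by omega), walk_iff_of_dn_le (show dn w ≤ a + 1 by omega),
      h, h.ne, show dn w < a + 1 by omega, ind, add_right_comm _ 1]
  · simp [walk_iff_of_dn_le (show dn w ≤ a + 1 by omega), h, ind]
    congr 1
    rw [eq_iff_iff]; omega
  · simp [h.ne', show ¬ dn w < a + 1 by omega, show ¬ dn w < a by omega]

theorem useries_zero_succ (b : ℕ) : useries 0 (b + 1) = 0 := by
  ext n
  rw [useries, coeff_gser, cnt_eq_zero, map_zero]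
  rintro w _ ⟨h, -, h', -⟩
  rcases w with _ | ⟨_ | _ | _, w⟩ <;> simp at h h'

theorem useries_succ_zero (a : ℕ) : useries (a + 1) 0 = 0 := by
  ext n
  rw [useries, coeff_gser, cnt_eq_zero, map_zero]
  rintro w _ ⟨h, -, -, h'⟩
  rw [← downs_hat] at h'
  rw [← walk_hat] at h
  revert h h'
  rcases hat w with _ | ⟨_ | _ | _, w⟩ <;> simp

theorem useries_zero_zero : useries 0 0 = 1 := by
  ext n
  rw [useries, coeff_gser]
  cases n with
  | zero => simp
  | succ n =>
    rw [cnt_eq_zero, coeff_one]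
    · simp
    · rintro w hw ⟨h, -, h', -⟩
      rcases w with _ | ⟨_ | _ | _, w⟩ <;> simp at h h' hw

theorem useries_succ_succ (s b : ℕ) :
    useries (s + 1) (b + 1) = X ^ 2 * (gser (Walk s b) - vser s b) := by
  ext n
  rw [coeff_X_pow_mul']
  split_ifs with hn
  · obtain ⟨n, rfl⟩ := Nat.exists_eq_add_of_le' hn
    rw [Nat.add_sub_cancel, useries, vser, coeff_gser, cnt_walk_downs_ups, map_sub, coeff_gser,
      coeff_gser, eq_sub_iff_add_eq, cnt, cnt, cnt, ← wsum_add]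
    refine wsum_congr fun w _ => ?_
    rcases lt_or_ge (dn w) s with h | h
    · simp [h, h.not_ge]
    · simp [h, h.not_gt]
  · rw [useries, coeff_gser, cnt_eq_zero]
    rintro w hw ⟨h, h', -⟩
    have := h.height
    have := dn_add_un_le w
    omega

theorem wsum_qser_pow (i : ℕ) :
    wsum i (fun w : List (Option Bool) => qser ^ (dn w + un w)) = (1 + 2 * qser) ^ i := by
  induction i with
  | zero => simp [wsum]
  | succ i ih =>
    simp only [wsum, Fintype.sum_option, Fintype.sum_bool, dn_none, un_none, dn_up, un_up, dn_down,
      un_down, pow_add, pow_one] at ih ⊢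
    have e1 : ∀ w : List (Option Bool), qser ^ dn w * (qser ^ un w * qser) =
      qser ^ dn w * qser ^ un w * qser := fun w => by ring
    have e2 : ∀ w : List (Option Bool), qser ^ dn w * qser * qser ^ un w =
      qser ^ dn w * qser ^ un w * qser := fun w => by ring
    simp only [e1, e2, wsum_mul_right, ih]
    ring

theorem sum_cnt_mul_qser_pow (i m : ℕ) (hm : i < m) :
    ∑ a ∈ range m, ∑ b ∈ range m,
      ((cnt i fun w => dn w = a ∧ un w = b : ℤ) : ℤ⟦X⟧) * qser ^ (a + b) =
      (1 + 2 * qser) ^ i := by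
  rw [← wsum_qser_pow]
  have : ∀ a b : ℕ, ((cnt i fun w => dn w = a ∧ un w = b : ℤ) : ℤ⟦X⟧) * qser ^ (a + b) =
      wsum i fun w => ((ind (dn w = a ∧ un w = b) : ℤ) : ℤ⟦X⟧) * qser ^ (a + b) := fun a b => by
    rw [wsum_mul_right]
    congr 1
    exact (wsum_map (Int.castAddHom ℤ⟦X⟧) i _).symm
  simp only [this, ← wsum_sum]
  refine wsum_congr fun w hw => ?_
  have := dn_add_un_le w
  rw [Finset.sum_eq_single_of_mem (dn w) (mem_range.2 (by omega)),
    Finset.sum_eq_single_of_mem (un w) (mem_range.2 (by omega))]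
  · simp
  · intro b _ hb
    simp [hb.symm]
  · intro a _ ha
    simp [ha.symm]

theorem X_pow_dvd_qser_pow {m h : ℕ} (hm : m ≤ h) : X ^ m ∣ qser ^ h :=
  (pow_dvd_pow X hm).trans (pow_dvd_pow_of_dvd ⟨mser, rfl⟩ h)

theorem X_pow_dvd_sum_fser_sub (m : ℕ) :
    X ^ m ∣ ∑ a ∈ range m, ∑ b ∈ range m, fser a b * qser ^ (a + b) - cser := by
  rw [X_pow_dvd_iff]
  intro k hk
  rw [map_sub, sub_eq_zero]
  simp only [map_sum, coeff_mul, fser, coeff_gser, cser, coeff_mk]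
  simp only [Finset.sum_comm (s := range m) (t := antidiagonal k)]
  refine Finset.sum_congr rfl fun x hx => ?_
  rw [HasAntidiagonal.mem_antidiagonal] at hx
  rw [← sum_cnt_mul_qser_pow x.1 m (by omega)]
  simp only [map_sum, ← map_intCast (C (R := ℤ)), coeff_C_mul, Int.cast_id]

theorem X_pow_dvd_sum_vser_sub (m : ℕ) :
    X ^ m ∣ (∑ a ∈ range (m + 1), ∑ b ∈ range (m + 1), vser a b * qser ^ (a + b)) -
      ∑ a ∈ range m, ∑ b ∈ range m, vser a b * qser ^ (a + b) := by
  rw [Finset.sum_range_succ]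
  simp only [Finset.sum_range_succ _ m, Finset.sum_add_distrib]
  rw [show ∀ x y z t : ℤ⟦X⟧, x + y + (z + t) - x = y + z + t from fun _ _ _ _ => by ring]
  refine dvd_add (dvd_add ?_ ?_) ?_
  · exact Finset.dvd_sum fun a _ => Dvd.dvd.mul_left (X_pow_dvd_qser_pow (by omega)) _
  · exact Finset.dvd_sum fun a _ => Dvd.dvd.mul_left (X_pow_dvd_qser_pow (by omega)) _
  · exact Dvd.dvd.mul_left (X_pow_dvd_qser_pow (by omega)) _

theorem sum_vser_succ (m : ℕ) :
    (∑ a ∈ range (m + 1), ∑ b ∈ range (m + 1), vser a b * qser ^ (a + b)) =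
      qser ^ 2 * ∑ a ∈ range m, ∑ b ∈ range m, (vser a b + fser a b) * qser ^ (a + b) := by
  rw [Finset.sum_range_succ']
  simp only [vser_zero_left, Finset.sum_range_succ' _ m, vser_zero_right, vser_succ]
  simp only [zero_mul, Finset.sum_const_zero, add_zero, Finset.mul_sum]
  refine Finset.sum_congr rfl fun a _ => Finset.sum_congr rfl fun b _ => ?_
  ring

/-- The contributions of the words with two stars, with heights less than `m`. -/
noncomputable def twoStarSer (m : ℕ) : ℤ⟦X⟧ :=
  ∑ h ∈ range m, ∑ h' ∈ range m, (qser ^ h * useries h h' * qser ^ h' +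
    X * qser ^ (h - 1) * vser h h' * (X * qser ^ (h' - 1)))

theorem twoStarSer_succ (m : ℕ) : twoStarSer (m + 1) = 1 + X ^ 2 * (X ^ 2 *
    (∑ s ∈ range m, ∑ b ∈ range m, mser * qser ^ s * gser (Walk s b) * (mser * qser ^ b)) +
      ((∑ a ∈ range m, ∑ b ∈ range m, (vser a b + fser a b) * qser ^ (a + b)) -
        qser ^ 2 * ∑ a ∈ range m, ∑ b ∈ range m, vser a b * qser ^ (a + b))) := by
  have hq : qser = X * mser := rfl
  rw [twoStarSer, Finset.sum_range_succ']
  simp only [Finset.sum_range_succ' _ m, vser_zero_left, vser_zero_right, useries_zero_succ,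
    useries_succ_zero, useries_zero_zero, useries_succ_succ, vser_succ]
  simp only [mul_zero, zero_mul, Finset.sum_const_zero, add_zero, zero_add, pow_zero, mul_one,
    Nat.add_sub_cancel]
  rw [add_comm]
  congr 1
  simp only [Finset.mul_sum, ← Finset.sum_add_distrib, ← Finset.sum_sub_distrib]
  refine Finset.sum_congr rfl fun a _ => Finset.sum_congr rfl fun b _ => ?_
  have e1 : qser ^ (a + 1) = X * mser * qser ^ a := by rw [pow_succ', ← hq]
  have e2 : qser ^ (b + 1) = X * mser * qser ^ b := by rw [pow_succ', ← hq]
  rw [mul_sub, mul_sub, sub_mul, show qser ^ (a + 1) * (X ^ 2 * gser (Walk a b)) * qser ^ (b + 1) =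
    X ^ 2 * (X ^ 2 * (mser * qser ^ a * gser (Walk a b) * (mser * qser ^ b))) by
      rw [e1, e2]; ring]
  ring

theorem cser_add_sq_mul : cser + qser ^ 2 * cser =
    mser + 2 * X ^ 2 * (mser * d⁄dX ℤ qser) := by
  have hq : qser = X * mser := rfl
  rw [derivative_qser]
  linear_combination cser_mul_one_sub_sq + 2 * (qser + X * mser) * cser * hq

theorem X_pow_dvd_sum_sub (m : ℕ) :
    X ^ m ∣ ((∑ a ∈ range m, ∑ b ∈ range m, (vser a b + fser a b) * qser ^ (a + b)) -
        qser ^ 2 * ∑ a ∈ range m, ∑ b ∈ range m, vser a b * qser ^ (a + b)) -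
      (mser + 2 * X ^ 2 * (mser * d⁄dX ℤ qser)) := by
  rw [← cser_add_sq_mul]
  have h1 := X_pow_dvd_sum_vser_sub m
  rw [sum_vser_succ] at h1
  have h2 := X_pow_dvd_sum_fser_sub m
  simp only [add_mul, Finset.sum_add_distrib] at h1 ⊢
  convert dvd_sub (Dvd.dvd.mul_right h2 (1 + qser ^ 2)) h1 using 1
  ring

theorem coeff_twoStarSer (k m : ℕ) (hk : k < m) :
    coeff (k + 2) (twoStarSer (m + 1)) =
      coeff k (mser + 2 * X ^ 2 * (mser * d⁄dX ℤ qser)) +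
        (k.choose 2 : ℤ) * if 2 ≤ k then coeff (k - 2) mser else 0 := by
  rw [twoStarSer_succ, map_add, coeff_one, if_neg (by omega), zero_add,
    coeff_X_pow_mul, map_add, add_comm, map_add]
  have := X_pow_dvd_iff.1 (X_pow_dvd_sum_sub m) k hk
  rw [map_sub, sub_eq_zero] at this
  rw [this, coeff_X_pow_mul', map_add]
  congr 1
  split_ifs with h
  · rw [coeff_sum_walk_walk_walk _ _ (by omega)]
    congr 4
    omega
  · simp

end DyckFour

namespace DyckFour

/-- The word with the given record of peaks and valleys: the `i`-th entry of `A` tells whether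
the `i`-th `u` is followed by a `d`, the `i`-th entry of `B` whether the `i`-th `d` is followed by
a `u` or ends the word; the first argument tells whether the next letter is a `u`. -/
def mach : Bool → List Bool → List Bool → List Bool
  | true, [], _ => []
  | true, a :: A, B => true :: mach (!a) A B
  | false, _, [] => []
  | false, A, b :: B => false :: mach b A B
termination_by _ A B => A.length + B.length

@[simp] theorem mach_true_nil (B : List Bool) : mach true [] B = [] := by rw [mach]
@[simp] theorem mach_true_cons (a : Bool) (A B : List Bool) :
    mach true (a :: A) B = true :: mach (!a) A B := by rw [mach]
@[simp] theorem mach_false_cons (A : List Bool) (b : Bool) (B : List Bool) :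
    mach false A (b :: B) = false :: mach b A B := by
  cases A <;> rw [mach]

/-- The word is empty or ends with `true`. -/
def EndT : List Bool → Prop
  | [] => True
  | a :: l => (l = [] → a = true) ∧ EndT l

@[simp] theorem endT_nil : EndT [] := trivial
@[simp] theorem endT_cons (a : Bool) (l : List Bool) :
    EndT (a :: l) ↔ (l = [] → a = true) ∧ EndT l := Iff.rfl

theorem endT_append_true (l : List Bool) : EndT (l ++ [true]) := by
  induction l with
  | nil => simp
  | cons a l ih => simp [ih]

theorem EndT.exists_eq_append {l : List Bool} (h : EndT l) (hl : l ≠ []) :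
    ∃ l', l = l' ++ [true] := by
  induction l with
  | nil => exact absurd rfl hl
  | cons a l ih =>
    rcases eq_or_ne l [] with rfl | hl'
    · exact ⟨[], by simpa using h⟩
    · obtain ⟨l', rfl⟩ := ih h.2 hl'
      exact ⟨a :: l', rfl⟩

theorem EndT.eq_nil {l : List Bool} (h : EndT l) (hl : l.count true = 0) : l = [] := by
  by_contra hne
  obtain ⟨l', rfl⟩ := h.exists_eq_append hne
  simp at hl

/-- The pairs of records that `mach` reads completely. -/
def Valid (s : Bool) (A B : List Bool) : Prop :=
  EndT A ∧ EndT B ∧ B.count true = A.count true + (!s).toNat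

/-- Induction along the computation of `mach`. -/
theorem Valid.rec_mach {C : (s : Bool) → (A B : List Bool) → Valid s A B → Prop}
    (nil : ∀ v, C true [] [] v)
    (true_true : ∀ A B v v', C false A B v → C true (true :: A) B v')
    (true_false : ∀ A B v v', A ≠ [] → C true A B v → C true (false :: A) B v')
    (false_true : ∀ A B v v', C true A B v → C false A (true :: B) v')
    (false_false : ∀ A B v v', B ≠ [] → C false A B v → C false A (false :: B) v')
    {s : Bool} {A B : List Bool} (h : Valid s A B) : C s A B h := by
  induction s, A, B using mach.induct with
  | case1 B =>
    obtain rfl := h.2.1.eq_nil (by simpa using h.2.2)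
    exact nil _
  | case2 a A B ih =>
    have ⟨h1, h2, h3⟩ := h
    cases a
    · have v : Valid true A B := ⟨h1.2, h2, by simpa using h3⟩
      exact true_false A B v _ (fun e => by simpa using h1.1 e) (ih v)
    · have v : Valid false A B := ⟨h1.2, h2, by simpa using h3⟩
      exact true_true A B v _ (ih v)
  | case3 A => simp [Valid] at h
  | case4 A b B ih =>
    have ⟨h1, h2, h3⟩ := h
    cases b
    · have v : Valid false A B := ⟨h1, h2.2, by simpa using h3⟩
      exact false_false A B v _ (fun e => by simpa using h2.1 e) (ih v)
    · have v : Valid true A B := ⟨h1, h2.2, by simpa using h3⟩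
      exact false_true A B v _ (ih v)

/-- Whether the word does not start with a `d`. -/
def startsU : List Bool → Bool
  | false :: _ => false
  | true :: _ => true
  | [] => true

@[simp] theorem startsU_nil : startsU [] = true := rfl
@[simp] theorem startsU_cons (x : Bool) (w : List Bool) : startsU (x :: w) = x := by
  cases x <;> rfl

/-- Whether each `u` is followed by a `d`. -/
def aRec : List Bool → List Bool
  | [] => []
  | true :: w => (!startsU w) :: aRec w
  | false :: w => aRec w

/-- Whether each `d` is followed by a `u` or the end of the word. -/
def bRec : List Bool → List Bool
  | [] => []
  | true :: w => bRec w
  | false :: w => startsU w :: bRec w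

theorem length_aRec (w : List Bool) : (aRec w).length = w.count true := by
  induction w with
  | nil => rfl
  | cons x w ih => cases x <;> simp [aRec, ih]

theorem length_bRec (w : List Bool) : (bRec w).length = w.count false := by
  induction w with
  | nil => rfl
  | cons x w ih => cases x <;> simp [bRec, ih]

theorem Valid.records {s : Bool} {A B : List Bool} (h : Valid s A B) :
    aRec (mach s A B) = A ∧ bRec (mach s A B) = B ∧
      startsU (mach s A B) = s := by
  induction h using Valid.rec_mach with
  | nil v => simp [aRec, bRec]
  | true_true A B v v' ih => simp_all [aRec, bRec]
  | true_false A B v v' hA ih => simp_all [aRec, bRec]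
  | false_true A B v v' ih =>
    simp_all [aRec, bRec]
  | false_false A B v v' hB ih => simp_all [aRec, bRec]

theorem valid_records {w : List Bool} (h : EndT (w.map not)) :
    Valid (startsU w) (aRec w) (bRec w) ∧
      mach (startsU w) (aRec w) (bRec w) = w := by
  induction w with
  | nil => simp [Valid, aRec, bRec]
  | cons x w ih =>
    simp only [List.map_cons, endT_cons, List.map_eq_nil_iff] at h
    obtain ⟨⟨v1, v2, v3⟩, e⟩ := ih h.2
    cases x
    · rcases w with _ | ⟨_ | _, w⟩
      · simp [Valid, aRec, bRec]
      all_goals simp_all [Valid, bRec, aRec]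
    · rcases w with _ | ⟨_ | _, w⟩
      · simp at h
      all_goals simp_all [Valid, bRec, aRec]

/-- The path `w` started at height `h` does not go below `0`. -/
def NonNeg : ℕ → List Bool → Prop
  | _, [] => True
  | h, true :: w => NonNeg (h + 1) w
  | 0, false :: _ => False
  | h + 1, false :: w => NonNeg h w

theorem nonNeg_iff {h : ℕ} {w : List Bool} :
    NonNeg h w ↔ ∀ p : List Bool, p <+: w → p.count false ≤ h + p.count true := by
  induction w generalizing h with
  | nil => cases h <;> simp [NonNeg]
  | cons x w ih =>
    have key : (∀ p : List Bool, p <+: x :: w → p.count false ≤ h + p.count true) ↔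
        ∀ p : List Bool, p <+: w → (x :: p).count false ≤ h + (x :: p).count true := by
      constructor
      · exact fun H p hp => H _ (by simpa using hp)
      · intro H p hp
        rcases p with _ | ⟨y, p⟩
        · simp
        · rw [List.cons_prefix_cons] at hp
          obtain ⟨rfl, hp⟩ := hp
          exact H p hp
    rw [key]
    cases x
    · cases h with
      | zero =>
        simp only [NonNeg, false_iff, not_forall]
        exact ⟨[], by simp, by simp⟩
      | succ h =>
        simp only [NonNeg, ih]
        refine forall₂_congr fun p _ => ?_
        simp; omega
    · have : NonNeg h (true :: w) ↔ NonNeg (h + 1) w := by cases h <;> rfl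
      rw [this, ih]
      refine forall₂_congr fun p _ => ?_
      simp; omega

theorem Valid.nonNeg_iff {s : Bool} {A B : List Bool} (v : Valid s A B) (h : ℕ) :
    NonNeg h (mach s A B) ↔ ∀ j, (B.drop (h + j)).count true ≤ (A.drop j).count true := by
  induction v using Valid.rec_mach generalizing h with
  | nil v => cases h <;> simp [NonNeg]
  | true_true A B v v' ih =>
    have : NonNeg h (mach true (true :: A) B) ↔ NonNeg (h + 1) (mach false A B) := by
      cases h <;> simp [NonNeg]
    rw [this, ih]
    constructor
    · rintro H (_ | j)
      · have := v.2.2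
        have := (List.drop_sublist (h + 0) B).count_le true
        simp_all
      · simpa [add_right_comm, add_assoc] using H j
    · intro H j
      simpa [add_right_comm, add_assoc] using H (j + 1)
  | true_false A B v v' hA ih =>
    have : NonNeg h (mach true (false :: A) B) ↔ NonNeg (h + 1) (mach true A B) := by
      cases h <;> simp [NonNeg]
    rw [this, ih]
    constructor
    · rintro H (_ | j)
      · have := v.2.2
        have := (List.drop_sublist (h + 0) B).count_le true
        simp_all
      · simpa [add_right_comm, add_assoc] using H j
    · intro H j
      simpa [add_right_comm, add_assoc] using H (j + 1)
  | false_true A B v v' ih =>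
    cases h with
    | zero =>
      simp only [mach_false_cons, NonNeg, false_iff, not_forall]
      refine ⟨0, ?_⟩
      have := v.2.2
      simp_all
    | succ h => simp [NonNeg, ih, add_right_comm]
  | false_false A B v v' hB ih =>
    cases h with
    | zero =>
      simp only [mach_false_cons, NonNeg, false_iff, not_forall]
      refine ⟨0, ?_⟩
      have := v.2.2
      simp_all
    | succ h => simp [NonNeg, ih, add_right_comm]

end DyckFour

namespace DyckFour

/-- The number of `false` entries between the `k`-th and the `(k+1)`-st occurrence of `true`. -/
def run : ℕ → List Bool → ℕ
  | _, [] => 0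
  | 0, true :: _ => 0
  | 0, false :: w => run 0 w + 1
  | k + 1, true :: w => run k w
  | k + 1, false :: w => run (k + 1) w

@[simp] theorem run_nil (k : ℕ) : run k [] = 0 := by cases k <;> rfl
@[simp] theorem run_zero_true (w : List Bool) : run 0 (true :: w) = 0 := rfl
@[simp] theorem run_zero_false (w : List Bool) : run 0 (false :: w) = run 0 w + 1 := rfl
@[simp] theorem run_succ_true (k : ℕ) (w : List Bool) : run (k + 1) (true :: w) = run k w := rfl
@[simp] theorem run_succ_false (k : ℕ) (w : List Bool) :
    run (k + 1) (false :: w) = run (k + 1) w := rfl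

theorem upIdxs_true (w : List Bool) : upIdxs (true :: w) = 0 :: (upIdxs w).map (· + 1) := by
  simp only [upIdxs, List.findIdxs_cons]
  rw [List.findIdxs_start]
  rfl

theorem upIdxs_false (w : List Bool) : upIdxs (false :: w) = (upIdxs w).map (· + 1) := by
  simp only [upIdxs, List.findIdxs_cons]
  rw [List.findIdxs_start]
  rfl

theorem length_upIdxs (w : List Bool) : (upIdxs w).length = w.count true := by
  simp [upIdxs, List.count]

theorem getD_map_add_one (l : List ℕ) (i : ℕ) (hi : i < l.length) :
    (l.map (· + 1)).getD i 0 = l.getD i 0 + 1 := by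
  simp [List.getD, hi]

theorem count_take_upIdxs (w : List Bool) (hw : 0 < w.count true) :
    (w.take ((upIdxs w).getD 0 0)).count false = run 0 w := by
  induction w with
  | nil => simp
  | cons x w ih =>
    cases x
    · have hw' : 0 < w.count true := by simpa using hw
      rw [upIdxs_false, getD_map_add_one _ _ (by rwa [length_upIdxs])]
      simpa using ih hw'
    · simp [upIdxs_true]

theorem rStat_eq_run (w : List Bool) (i : ℕ) (hi : i + 1 < w.count true) :
    rStat w (i + 1) = run (i + 1) w := by
  induction w generalizing i with
  | nil => simp at hi
  | cons x w ih =>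
    cases x
    · have hi' : i + 1 < w.count true := by simpa using hi
      rw [run_succ_false, ← ih i hi', rStat, upIdxs_false,
        getD_map_add_one _ _ (by rw [length_upIdxs]; omega),
        getD_map_add_one _ _ (by rw [length_upIdxs]; omega)]
      simp [rStat]
    · have hi' : i < w.count true := by simpa using hi
      rw [run_succ_true]
      cases i with
      | zero =>
        rw [← count_take_upIdxs w hi', rStat, upIdxs_true, List.getD_cons_succ,
          getD_map_add_one _ _ (by rwa [length_upIdxs])]
        simp
      | succ i =>
        rw [← ih i hi', rStat, upIdxs_true, List.getD_cons_succ,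
          getD_map_add_one _ _ (by rwa [length_upIdxs])]
        simp only [Nat.add_sub_cancel, List.getD_cons_succ]
        rw [getD_map_add_one _ _ (by rw [length_upIdxs]; omega)]
        simp [rStat]

theorem sStat_eq_rStat (w : List Bool) (i : ℕ) : sStat w i = rStat (w.map not) i := by
  have h : upIdxs (w.map not) = downIdxs w := by
    rw [upIdxs, downIdxs, List.findIdxs_map]
    congr 1
    funext x
    cases x <;> rfl
  rw [rStat, sStat, h, ← List.map_take, ← List.map_drop]
  exact (List.count_map_of_injective _ not Bool.not_injective true).symm

theorem Valid.run_mach {s : Bool} {A B : List Bool} (v : Valid s A B) :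
    run 0 (mach s A B) = (if s then 0 else gap 0 B) ∧
      ∀ i, run (i + 1) (mach s A B) =
        if A.getD i false then gap ((A.take i).count true + (!s).toNat) B else 0 := by
  induction v using Valid.rec_mach with
  | nil v => simp
  | true_true A B v v' ih =>
    refine ⟨by simp, ?_⟩
    rintro (_ | i) <;> simp [ih]
  | true_false A B v v' hA ih =>
    refine ⟨by simp, ?_⟩
    rintro (_ | i) <;> simp [ih]
  | false_true A B v v' ih => exact ⟨by simp [ih], fun i => by simp [ih]⟩
  | false_false A B v v' hB ih =>
    exact ⟨by simp [ih, gap], fun i => by simp [ih]⟩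

theorem Valid.run_mach_not {s : Bool} {A B : List Bool} (v : Valid s A B) :
    run 0 ((mach s A B).map not) = (if s = true ∧ A ≠ [] then gap 0 A else 0) ∧
      ∀ i, i + 1 < B.length → run (i + 1) ((mach s A B).map not) =
        if B.getD i false then gap ((B.take i).count true + s.toNat) A else 0 := by
  induction v using Valid.rec_mach with
  | nil v => simp
  | true_true A B v v' ih => exact ⟨by simp [ih], fun i hi => by simp [ih.2 i hi]⟩
  | true_false A B v v' hA ih =>
    exact ⟨by simp [ih, hA, gap], fun i hi => by simp [ih.2 i hi]⟩
  | false_true A B v v' ih =>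
    refine ⟨by simp, ?_⟩
    rintro (_ | i) hi
    · have : A ≠ [] := fun hA => by
        have := v.2.1.eq_nil (by simpa [hA] using v.2.2)
        simp [this] at hi
      simp [ih, this]
    · simp [ih.2 i (by simpa using hi)]
  | false_false A B v v' hB ih =>
    refine ⟨by simp, ?_⟩
    rintro (_ | i) hi
    · simp [ih]
    · simp [ih.2 i (by simpa using hi)]

/-- The letters `★`, encoded by `none`, and `some x` with `x` a step. -/
abbrev Letter := Option (Option Bool)

/-- Whether a letter is a down step or a star. -/
def isA : Letter → Bool
  | none => true
  | some x => x == some false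

/-- Whether a letter is an up step or a star. -/
def isB : Letter → Bool
  | none => true
  | some x => x == some true

/-- The record of peaks of a word with stars. -/
def aw (W : List Letter) : List Bool := W.map isA

/-- The record of valleys of a word with stars. -/
def bw (W : List Letter) : List Bool := W.map isB

/-- The binomial coefficient attached to position `j` of a word with stars. -/
def factor (W : List Letter) (j : ℕ) : ℕ :=
  if W.getD j (some none) = none then
    (gap (((aw W).take j).count true) (bw W) + gap (((bw W).take j).count true + 1) (aw W)).choose
      (gap (((aw W).take j).count true) (bw W))
  else 1

/-- The statistic `L` on words with stars. -/
def LW (W : List Letter) : ℕ := ∏ j ∈ Finset.range W.length, factor W j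

/-- The Dyck word encoded by a word with stars. -/
def toDyck (W : List Letter) : List Bool := mach true (aw W ++ [true]) (bw W ++ [true])

/-- The underlying Motzkin path, in which stars become horizontal steps. -/
def steps (W : List Letter) : List (Option Bool) := W.map Option.join

theorem count_aw (W : List Letter) : (aw W).count true = dn (steps W) + W.count none := by
  induction W with
  | nil => rfl
  | cons x W ih =>
    rcases x with _ | _ | _ | _ <;> simp_all [aw, steps, isA] <;> omega

theorem count_bw (W : List Letter) : (bw W).count true = un (steps W) + W.count none := by
  induction W with
  | nil => rfl
  | cons x W ih =>
    rcases x with _ | _ | _ | _ <;> simp_all [bw, steps, isB] <;> omega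

theorem valid_aw_bw {W : List Letter} (h : un (steps W) = dn (steps W)) :
    Valid true (aw W ++ [true]) (bw W ++ [true]) :=
  ⟨endT_append_true _, endT_append_true _, by simp [count_aw, count_bw, h]⟩

theorem walk_zero_iff {a : ℕ} {w : List (Option Bool)} :
    Walk a 0 w ↔ a + un w = dn w ∧ ∀ j, un (w.drop j) ≤ dn (w.drop j) := by
  induction w generalizing a with
  | nil => simp
  | cons x w ih =>
    have key : (a + un (x :: w) = dn (x :: w) ∧ ∀ j, un ((x :: w).drop j) ≤ dn ((x :: w).drop j)) ↔
        (a + un (x :: w) = dn (x :: w) ∧ ∀ j, un (w.drop j) ≤ dn (w.drop j)) := by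
      refine and_congr_right fun h => ⟨fun H j => H (j + 1), fun H j => ?_⟩
      cases j with
      | zero => simp only [List.drop_zero]; omega
      | succ j => exact H j
    rw [key]
    rcases x with _ | _ | _
    · simp [ih]
    · cases a with
      | zero =>
        simp only [walk_zero_down, un_down, dn_down, false_iff, not_and, not_forall]
        intro h
        exact ⟨0, by simp; omega⟩
      | succ a => simp [ih, add_right_comm]
    · simp [ih, add_right_comm, add_assoc]

theorem nonNeg_toDyck {W : List Letter} (h : un (steps W) = dn (steps W)) :
    NonNeg 0 (toDyck W) ↔ Walk 0 0 (steps W) := by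
  rw [toDyck, (valid_aw_bw h).nonNeg_iff, walk_zero_iff]
  have e1 : ∀ j, ((aw W).drop j).count true = dn ((steps W).drop j) + (W.drop j).count none :=
    fun j => by
      have := count_aw (W.drop j)
      simpa only [aw, steps, List.map_drop] using this
  have e2 : ∀ j, ((bw W).drop j).count true = un ((steps W).drop j) + (W.drop j).count none :=
    fun j => by
      have := count_bw (W.drop j)
      simpa only [bw, steps, List.map_drop] using this
  have la : (aw W).length = W.length := by simp [aw]
  have lb : (bw W).length = W.length := by simp [bw]
  have ls : (steps W).length = W.length := by simp [steps]
  simp only [h, zero_add, true_and]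
  refine forall_congr' fun j => ?_
  rcases le_or_gt j W.length with hj | hj
  · rw [List.drop_append_of_le_length (by omega), List.drop_append_of_le_length (by omega),
      List.count_append, List.count_append, e1, e2]
    simp
  · rw [List.drop_eq_nil_of_le (by simp; omega), List.drop_eq_nil_of_le (as := steps W) (by omega)]
    simp

theorem LStat_toDyck {W : List Letter} (h : un (steps W) = dn (steps W)) :
    LStat (W.length + 1) (toDyck W) = LW W := by
  have v := valid_aw_bw h
  have hA : (toDyck W).count true = W.length + 1 := by
    rw [toDyck, ← length_aRec, v.records.1]; simp [aw]
  have hB : ((toDyck W).map not).count true = W.length + 1 := by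
    have e : ((toDyck W).map not).count true = (toDyck W).count false :=
      List.count_map_of_injective _ not Bool.not_injective false
    rw [e, toDyck, ← length_bRec, v.records.2.1]; simp [bw]
  have hab : (aw W).count true = (bw W).count true := by rw [count_aw, count_bw, h]
  have la : (aw W).length = W.length := by simp [aw]
  have lb : (bw W).length = W.length := by simp [bw]
  rw [LStat, LW, Nat.add_sub_cancel, Finset.range_eq_Ico, Finset.prod_Ico_eq_prod_range,
    show Finset.Icc 1 W.length = Finset.Ico 1 (W.length + 1) from rfl,
    Finset.prod_Ico_eq_prod_range]
  refine Finset.prod_congr rfl fun j hj => ?_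
  rw [Finset.mem_range] at hj
  simp only [zero_add, Nat.sub_zero] at hj ⊢
  rw [add_comm 1 j, sStat_eq_rStat, rStat_eq_run _ _ (by omega), rStat_eq_run _ _ (by omega),
    toDyck, v.run_mach.2, v.run_mach_not.2 j (by simp; omega)]
  rw [List.getD_append _ _ _ _ (by omega), List.getD_append _ _ _ _ (by omega),
    List.take_append_of_le_length (by omega), List.take_append_of_le_length (by omega)]
  have ga : (aw W).getD j false = isA W[j] := by simp [aw, List.getD, hj]
  have gb : (bw W).getD j false = isB W[j] := by simp [bw, List.getD, hj]
  have gw : W.getD j (some none) = W[j] := by simp [List.getD, hj]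
  rw [factor, ga, gb, gw]
  rcases hx : W[j] with _ | _ | _ | _
  · have h1 : ((aw W).take j).count true ≤ (bw W).count true := by
      rw [← hab]; exact (List.take_sublist j _).count_le true
    have h2 : ((bw W).take j).count true + 1 ≤ (aw W).count true := by
      have e : bw W = (bw W).take j ++ true :: (bw W).drop (j + 1) := by
        conv_lhs => rw [← List.take_append_drop j (bw W)]
        rw [List.drop_eq_getElem_cons (by omega)]
        congr 2
        simp [bw, hx, isB]
      rw [hab]
      conv_rhs => rw [e]
      simp
    simp [isA, isB, gap_append_left _ _ [] h1, gap_append_left _ _ [] h2]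
  all_goals simp [isA, isB]

end DyckFour

namespace DyckFour

theorem aw_bw_injective {W W' : List Letter} (ha : aw W = aw W') (hb : bw W = bw W') : W = W' := by
  induction W generalizing W' with
  | nil => simpa [aw, eq_comm] using ha
  | cons x W ih =>
    cases W' with
    | nil => simp [aw] at ha
    | cons x' W' =>
      simp only [aw, bw, List.map_cons, List.cons.injEq] at ha hb
      rw [ih ha.2 hb.2]
      congr 1
      rcases x with _ | _ | _ | _ <;> rcases x' with _ | _ | _ | _ <;> simp [isA, isB] at ha hb ⊢

/-- The letter with given values of `isA` and `isB`. -/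
def letter (a b : Bool) : Letter :=
  if a then (if b then none else some (some false)) else some (if b then some true else none)

theorem exists_aw_bw {A B : List Bool} (h : A.length = B.length) :
    ∃ W, aw W = A ∧ bw W = B := by
  induction A generalizing B with
  | nil => exact ⟨[], rfl, by simpa [bw, eq_comm] using h⟩
  | cons a A ih =>
    cases B with
    | nil => simp at h
    | cons b B =>
      obtain ⟨W, rfl, rfl⟩ := ih (by simpa using h)
      exact ⟨letter a b :: W, by cases a <;> cases b <;> rfl, by cases a <;> cases b <;> rfl⟩

theorem aRec_toDyck {W : List Letter} (h : un (steps W) = dn (steps W)) :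
    aRec (toDyck W) = aw W ++ [true] := (valid_aw_bw h).records.1

theorem bRec_toDyck {W : List Letter} (h : un (steps W) = dn (steps W)) :
    bRec (toDyck W) = bw W ++ [true] := (valid_aw_bw h).records.2.1

theorem isDyckWord_toDyck {W : List Letter} (h : Walk 0 0 (steps W)) :
    IsDyckWord (W.length + 1) (toDyck W) := by
  have h' : un (steps W) = dn (steps W) := by simpa using h.height
  have hA : (toDyck W).count true = W.length + 1 := by
    rw [← length_aRec, aRec_toDyck h']; simp [aw]
  have hB : (toDyck W).count false = W.length + 1 := by
    rw [← length_bRec, bRec_toDyck h']; simp [bw]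
  refine ⟨?_, hA, hB, ?_⟩
  · rw [← List.count_true_add_count_false (toDyck W), hA, hB, two_mul]
  · simpa [nonNeg_iff] using (nonNeg_toDyck h').2 h

theorem exists_toDyck {n : ℕ} {w : List Bool} (h : IsDyckWord (n + 1) w) :
    ∃ W, W.length = n ∧ Walk 0 0 (steps W) ∧ toDyck W = w := by
  obtain ⟨h1, h2, h3, h4⟩ := h
  have hend : EndT (w.map not) := by
    rcases List.eq_nil_or_concat w with rfl | ⟨l, b, rfl⟩
    · simp at h1
    · cases b
      · simpa using endT_append_true (l.map not)
      · have := h4 l (by simp)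
        simp at h2 h3
        omega
  have hst : startsU w = true := by
    rcases w with _ | ⟨_ | _, w⟩
    · rfl
    · have := h4 [false] (by simp)
      simp at this
    · rfl
  obtain ⟨v, e⟩ := valid_records hend
  rw [hst] at v e
  have la := length_aRec w
  have lb := length_bRec w
  obtain ⟨A, hA⟩ := v.1.exists_eq_append fun e => by simp [e] at la; omega
  obtain ⟨B, hB⟩ := v.2.1.exists_eq_append fun e => by simp [e] at lb; omega
  rw [hA, List.length_append, List.length_singleton] at la
  rw [hB, List.length_append, List.length_singleton] at lb
  obtain ⟨W, rfl, rfl⟩ := exists_aw_bw (A := A) (B := B) (by omega)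
  rw [hA, hB] at v e
  have hbal : un (steps W) = dn (steps W) := by
    have := v.2.2
    simp [count_aw, count_bw] at this
    omega
  refine ⟨W, ?_, ?_, e⟩
  · have : (aw W).length = W.length := by simp [aw]
    omega
  · rw [← nonNeg_toDyck hbal]
    rw [← toDyck] at e
    rw [e, nonNeg_iff]
    simpa using h4

theorem ncard_dyckL (n k : ℕ) :
    ((dyckL (n + 1) k).ncard : ℤ) =
      cnt n (fun W : List Letter => Walk 0 0 (steps W) ∧ LW W = k) := by
  rw [← ncard_words]
  congr 1
  have : dyckL (n + 1) k =
      toDyck '' {W : List Letter | W.length = n ∧ Walk 0 0 (steps W) ∧ LW W = k} := by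
    ext w
    simp only [dyckL, Set.mem_ofPred_eq, Set.mem_image]
    constructor
    · rintro ⟨h, hL⟩
      obtain ⟨W, rfl, hW, rfl⟩ := exists_toDyck h
      refine ⟨W, ⟨rfl, hW, ?_⟩, rfl⟩
      rw [← LStat_toDyck (by simpa using hW.height), hL]
    · rintro ⟨W, ⟨rfl, hW, hL⟩, rfl⟩
      exact ⟨isDyckWord_toDyck hW, by rw [LStat_toDyck (by simpa using hW.height), hL]⟩
  rw [this, Set.InjOn.ncard_image]
  rintro W ⟨-, hW, -⟩ W' ⟨-, hW', -⟩ e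
  have h1 : un (steps W) = dn (steps W) := by simpa using hW.height
  have h2 : un (steps W') = dn (steps W') := by simpa using hW'.height
  refine aw_bw_injective ?_ ?_
  · have := congrArg aRec e
    rw [aRec_toDyck h1, aRec_toDyck h2] at this
    exact List.append_cancel_right this
  · have := congrArg bRec e
    rw [bRec_toDyck h1, bRec_toDyck h2] at this
    exact List.append_cancel_right this

end DyckFour

namespace DyckFour

@[simp] theorem aw_append (U V : List Letter) : aw (U ++ V) = aw U ++ aw V := by simp [aw]
@[simp] theorem bw_append (U V : List Letter) : bw (U ++ V) = bw U ++ bw V := by simp [bw]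
@[simp] theorem aw_star (V : List Letter) : aw (none :: V) = true :: aw V := rfl
@[simp] theorem bw_star (V : List Letter) : bw (none :: V) = true :: bw V := rfl
@[simp] theorem aw_map_some (P : List (Option Bool)) : aw (P.map some) = downs P := by
  simp [aw, downs, isA]
@[simp] theorem bw_map_some (P : List (Option Bool)) : bw (P.map some) = ups P := by
  simp [bw, ups, isB]
@[simp] theorem steps_append (U V : List Letter) : steps (U ++ V) = steps U ++ steps V := by
  simp [steps]
@[simp] theorem steps_star (V : List Letter) : steps (none :: V) = none :: steps V := rfl
@[simp] theorem steps_map_some (P : List (Option Bool)) : steps (P.map some) = P := by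
  simp [steps, Function.comp_def]

theorem length_aw (W : List Letter) : (aw W).length = W.length := by simp [aw]
theorem length_bw (W : List Letter) : (bw W).length = W.length := by simp [bw]

theorem gap_pos {k : ℕ} {l : List Bool} (h : k ≤ l.count true) : 0 < gap k l := by
  induction l generalizing k with
  | nil => obtain rfl : k = 0 := by simpa using h
           simp
  | cons x l ih =>
    cases k with
    | zero => exact gap_zero_pos _
    | succ k => cases x <;> simp at h <;> simp [ih h]

/-- The binomial coefficient attached to a star placed between `U` and `V`. -/
def starFactor (U V : List Letter) : ℕ :=
  (gap ((aw U).count true) (bw (U ++ none :: V)) +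
    gap ((bw U).count true + 1) (aw (U ++ none :: V))).choose
      (gap ((aw U).count true) (bw (U ++ none :: V)))

/-- The part of the product defining `LW (U ++ V)` that comes from the positions in `V`. -/
def LV (U V : List Letter) : ℕ := ∏ i ∈ Finset.range V.length, factor (U ++ V) (U.length + i)

theorem LW_eq_LV (W : List Letter) : LW W = LV [] W := by simp [LW, LV]

@[simp] theorem LV_nil (U : List Letter) : LV U [] = 1 := by simp [LV]

theorem LV_cons (U V : List Letter) (x : Letter) :
    LV U (x :: V) = factor (U ++ x :: V) U.length * LV (U ++ [x]) V := by
  rw [LV, List.length_cons, Finset.prod_range_succ', mul_comm]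
  congr 1
  refine Finset.prod_congr rfl fun i _ => ?_
  rw [List.append_assoc, List.length_append]
  congr 1
  simp; omega

theorem LV_star (U V : List Letter) :
    LV U (none :: V) = starFactor U V * LV (U ++ [none]) V := by
  rw [LV_cons]
  congr 1
  have e1 : (aw (U ++ none :: V)).take U.length = aw U := by
    rw [aw_append, List.take_append_of_le_length (by rw [length_aw]), ← length_aw,
      List.take_length]
  have e2 : (bw (U ++ none :: V)).take U.length = bw U := by
    rw [bw_append, List.take_append_of_le_length (by rw [length_bw]), ← length_bw,
      List.take_length]
  rw [factor, starFactor, e1, e2, if_pos (by simp [List.getD])]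

theorem LV_map_some_append (U V : List Letter) (P : List (Option Bool)) :
    LV U (P.map some ++ V) = LV (U ++ P.map some) V := by
  induction P generalizing U with
  | nil => simp
  | cons x P ih =>
    rw [List.map_cons, List.cons_append, LV_cons, ih, factor, if_neg (by simp [List.getD]), one_mul]
    simp

theorem LV_map_some (U : List Letter) (P : List (Option Bool)) : LV U (P.map some) = 1 := by
  have := LV_map_some_append U [] P
  simpa using this

theorem two_le_choose {r s : ℕ} (hr : 0 < r) (hs : 0 < s) : 2 ≤ (r + s).choose r := by
  obtain ⟨r, rfl⟩ := Nat.exists_eq_add_of_le' hr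
  obtain ⟨s, rfl⟩ := Nat.exists_eq_add_of_le' hs
  rw [show r + 1 + (s + 1) = (r + 1 + s) + 1 by omega, Nat.choose_succ_succ']
  have h1 : 0 < (r + 1 + s).choose r := Nat.choose_pos (by omega)
  have h2 : 0 < (r + 1 + s).choose (r + 1) := Nat.choose_pos (by omega)
  omega

theorem six_le_choose {r s : ℕ} (hr : 2 ≤ r) (hs : 2 ≤ s) : 6 ≤ (r + s).choose r := by
  calc 6 = (2 + 2).choose 2 := rfl
    _ ≤ (r + 2).choose 2 := Nat.choose_le_choose 2 (by omega)
    _ = (r + 2).choose r := by rw [Nat.choose_symm_add]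
    _ ≤ (r + s).choose r := Nat.choose_le_choose r (by omega)

theorem choose_eq_two_iff {r s : ℕ} (hr : 0 < r) (hs : 0 < s) :
    (r + s).choose r = 2 ↔ r = 1 ∧ s = 1 := by
  rcases Nat.lt_or_ge r 2 with h | h
  · obtain rfl : r = 1 := by omega
    simp; omega
  · rcases Nat.lt_or_ge s 2 with h' | h'
    · obtain rfl : s = 1 := by omega
      rw [Nat.choose_succ_self_right]
      omega
    · have := six_le_choose h h'
      omega

theorem choose_eq_four_iff {r s : ℕ} (hr : 0 < r) (hs : 0 < s) :
    (r + s).choose r = 4 ↔ (r = 1 ∧ s = 3) ∨ (r = 3 ∧ s = 1) := by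
  rcases Nat.lt_or_ge r 2 with h | h
  · obtain rfl : r = 1 := by omega
    simp; omega
  · rcases Nat.lt_or_ge s 2 with h' | h'
    · obtain rfl : s = 1 := by omega
      rw [Nat.choose_succ_self_right]
      omega
    · have := six_le_choose h h'
      omega

section Balanced

variable {U V : List Letter}

theorem starFactor_gaps_pos (h : Walk 0 0 (steps (U ++ none :: V))) :
    0 < gap ((aw U).count true) (bw (U ++ none :: V)) ∧
      0 < gap ((bw U).count true + 1) (aw (U ++ none :: V)) := by
  have hb : un (steps (U ++ none :: V)) = dn (steps (U ++ none :: V)) := by simpa using h.height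
  have hab : (aw (U ++ none :: V)).count true = (bw (U ++ none :: V)).count true := by
    rw [count_aw, count_bw, hb]
  constructor
  · refine gap_pos ?_
    rw [← hab]
    simp
  · refine gap_pos ?_
    rw [hab]
    simp

theorem two_le_starFactor (h : Walk 0 0 (steps (U ++ none :: V))) : 2 ≤ starFactor U V :=
  two_le_choose (starFactor_gaps_pos h).1 (starFactor_gaps_pos h).2

theorem LV_pos (h : Walk 0 0 (steps (U ++ V))) : 0 < LV U V := by
  induction V generalizing U with
  | nil => simp
  | cons x V ih =>
    have ih' := ih (U := U ++ [x]) (by simpa using h)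
    cases x with
    | none =>
      rw [LV_star]
      exact Nat.mul_pos (by have := two_le_starFactor h; omega) ih'
    | some x =>
      have := LV_map_some_append U V [x]
      simp only [List.map_cons, List.map_nil, List.singleton_append] at this
      rwa [this]

end Balanced

theorem LW_map_some (P : List (Option Bool)) : LW (P.map some) = 1 := by
  rw [LW_eq_LV, LV_map_some]

theorem LW_one_star (P Q : List (Option Bool)) :
    LW (P.map some ++ none :: Q.map some) = starFactor (P.map some) (Q.map some) := by
  rw [LW_eq_LV, LV_map_some_append, List.nil_append, LV_star, LV_map_some, mul_one]

theorem LW_two_stars (P R Q : List (Option Bool)) :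
    LW (P.map some ++ none :: (R.map some ++ none :: Q.map some)) =
      starFactor (P.map some) (R.map some ++ none :: Q.map some) *
        starFactor (P.map some ++ [none] ++ R.map some) (Q.map some) := by
  rw [LW_eq_LV, LV_map_some_append, List.nil_append, LV_star, LV_map_some_append, LV_star,
    LV_map_some, mul_one]

theorem eight_le_LW (P R S : List (Option Bool)) (V : List Letter)
    (h : Walk 0 0 (steps (P.map some ++ none :: (R.map some ++ none :: (S.map some ++ none :: V))))) :
    8 ≤ LW (P.map some ++ none :: (R.map some ++ none :: (S.map some ++ none :: V))) := by
  rw [LW_eq_LV, LV_map_some_append, List.nil_append, LV_star, LV_map_some_append, LV_star,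
    LV_map_some_append, LV_star]
  have h1 := two_le_starFactor h
  have h2 := two_le_starFactor (U := P.map some ++ [none] ++ R.map some)
    (V := S.map some ++ none :: V) (by simpa using h)
  have h3 := two_le_starFactor (U := P.map some ++ [none] ++ R.map some ++ [none] ++ S.map some)
    (V := V) (by simpa using h)
  have h4 := LV_pos (U := P.map some ++ [none] ++ R.map some ++ [none] ++ S.map some ++ [none])
    (V := V) (by simpa using h)
  calc 8 = 2 * (2 * (2 * 1)) := rfl
    _ ≤ _ := Nat.mul_le_mul h1 (Nat.mul_le_mul h2 (Nat.mul_le_mul h3 h4))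

theorem gap_ups_eq {P : List (Option Bool)} {h : ℕ} (hP : Walk 0 h P) (k : ℕ) (hk : k ≤ h)
    (l : List Bool) :
    gap (dn P + k) (ups P ++ true :: l) = gap (h - k) (downs (hat P)) := by
  have e := hP.height
  have hle : dn P + k ≤ (ups P).count true := by change _ ≤ un P; omega
  rw [gap_append_left _ _ _ hle, downs_hat, gap_reverse _ _ (by change _ ≤ un P; omega)]
  congr 1
  change _ = un P - _
  omega

theorem gap_downs_eq {P : List (Option Bool)} {h : ℕ} (hP : Walk 0 h P) (k : ℕ) (l : List Bool) :
    gap (un P + 1 + k) (downs P ++ true :: l) = gap (h + k) l := by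
  have e := hP.height
  rw [← gap_append_right (h + k) (downs P) l]
  congr 1
  change _ = dn P + _ + _
  omega

theorem one_star_iff (P Q : List (Option Bool)) :
    (Walk 0 0 (steps (P.map some ++ none :: Q.map some)) ∧
        LW (P.map some ++ none :: Q.map some) = 4) ↔
      ∃ h, (Walk h 0 (hat P) ∧ Walk h 0 Q) ∧
        ((gap h (downs (hat P)) = 1 ∧ gap h (downs Q) = 3) ∨
          (gap h (downs (hat P)) = 3 ∧ gap h (downs Q) = 1)) := by
  have key : ∀ h, Walk 0 h P → Walk h 0 Q → (LW (P.map some ++ none :: Q.map some) = 4 ↔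
      ((gap h (downs (hat P)) = 1 ∧ gap h (downs Q) = 3) ∨
          (gap h (downs (hat P)) = 3 ∧ gap h (downs Q) = 1))) := by
    intro h hP hQ
    have hw : Walk 0 0 (steps (P.map some ++ none :: Q.map some)) := by
      simpa [walk_append] using ⟨h, hP, hQ⟩
    have hpos := starFactor_gaps_pos hw
    rw [LW_one_star, starFactor, choose_eq_four_iff hpos.1 hpos.2]
    have e1 := gap_ups_eq hP 0 (Nat.zero_le _) (ups Q)
    have e2 := gap_downs_eq hP 0 (downs Q)
    simp only [add_zero, Nat.sub_zero] at e1 e2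
    simp only [aw_append, bw_append, aw_star, bw_star, aw_map_some, bw_map_some]
    rw [← dn, ← un, e1, e2]
  constructor
  · rintro ⟨hw, hL⟩
    simp only [steps_append, steps_star, steps_map_some, walk_append, walk_none] at hw
    obtain ⟨h, hP, hQ⟩ := hw
    exact ⟨h, ⟨walk_hat.2 hP, hQ⟩, (key h hP hQ).1 hL⟩
  · rintro ⟨h, ⟨hP, hQ⟩, hg⟩
    rw [walk_hat] at hP
    exact ⟨by simpa [walk_append] using ⟨h, hP, hQ⟩, (key h hP hQ).2 hg⟩

/-- The condition for `L = 4` on a word `P ★ R ★ Q`, where `P` is given by its reflection. -/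
def TwoStarCond (h h' : ℕ) (P R Q : List (Option Bool)) : Prop :=
  (gap h (downs P) = 1 ∧ gap h' (downs Q) = 1) ∧
    ((h ≤ dn R ∧ gap h (downs R) = 1 ∧ gap h' (ups R).reverse = 1) ∨
      (dn R < h ∧ gap (h - dn R - 1) (downs P) = 1 ∧ gap (h' - un R - 1) (downs Q) = 1))

theorem two_star_iff (P R Q : List (Option Bool)) :
    (Walk 0 0 (steps (P.map some ++ none :: (R.map some ++ none :: Q.map some))) ∧
        LW (P.map some ++ none :: (R.map some ++ none :: Q.map some)) = 4) ↔
      ∃ h, ∃ h', (Walk h 0 (hat P) ∧ Walk h h' R ∧ Walk h' 0 Q) ∧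
        TwoStarCond h h' (hat P) R Q := by
  have key : ∀ h h', Walk 0 h P → Walk h h' R → Walk h' 0 Q →
      (LW (P.map some ++ none :: (R.map some ++ none :: Q.map some)) = 4 ↔
        TwoStarCond h h' (hat P) R Q) := by
    intro h h' hP hR hQ
    have hw : Walk 0 0 (steps (P.map some ++ none :: (R.map some ++ none :: Q.map some))) := by
      simpa [walk_append] using ⟨h, hP, h', hR, hQ⟩
    have hw' : Walk 0 0 (steps (P.map some ++ [none] ++ R.map some ++ none :: Q.map some)) := by
      simpa using hw
    have hpos := starFactor_gaps_pos hw
    have hpos' := starFactor_gaps_pos hw'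
    have c1 := two_le_starFactor hw
    have c2 := two_le_starFactor hw'
    have e := hR.height
    have hmul : ∀ x y : ℕ, 2 ≤ x → 2 ≤ y → (x * y = 4 ↔ x = 2 ∧ y = 2) := fun x y hx hy => by
      constructor
      · intro hxy
        have : x ≤ 2 := by nlinarith
        have : y ≤ 2 := by nlinarith
        omega
      · rintro ⟨rfl, rfl⟩; rfl
    rw [LW_two_stars, hmul _ _ c1 c2, starFactor, starFactor, choose_eq_two_iff hpos.1 hpos.2,
      choose_eq_two_iff hpos'.1 hpos'.2]
    simp only [aw_append, bw_append, aw_star, bw_star, aw_map_some, bw_map_some,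
      List.count_append, List.append_assoc, List.cons_append, List.nil_append,
      List.count_cons_self]
    rw [← dn, ← un, ← dn, ← un]
    have r1 := gap_ups_eq hP 0 (Nat.zero_le _) (ups R ++ true :: ups Q)
    have s1 := gap_downs_eq hP 0 (downs R ++ true :: downs Q)
    have s2 : gap (un P + 1 + un R + 1) (downs P ++ true :: (downs R ++ true :: downs Q)) =
        gap h' (downs Q) := by
      rw [add_assoc, gap_downs_eq hP, ← gap_append_right h' (downs R) (downs Q)]
      congr 1
      change _ = dn R + _ + _
      omega
    simp only [add_zero, Nat.sub_zero] at r1 s1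
    have eP := hP.height
    have assoc : un P + (un R + 1) + 1 = un P + 1 + un R + 1 := by omega
    rw [r1, s1, assoc, s2, TwoStarCond]
    rcases Nat.lt_or_ge (dn R) h with hd | hd
    · have r2 := gap_ups_eq hP (dn R + 1) hd (ups R ++ true :: ups Q)
      have s3 : gap h (downs R ++ true :: downs Q) = gap (h' - un R - 1) (downs Q) := by
        rw [← gap_append_right (h' - un R - 1) (downs R)]
        congr 1
        change _ = dn R + _ + _
        omega
      rw [r2, s3, Nat.sub_add_eq]
      have hd' : ¬ h ≤ dn R := by omega
      simp only [hd, hd', true_and, false_and, false_or]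
      tauto
    · have r2 : gap (dn P + (dn R + 1)) (ups P ++ true :: (ups R ++ true :: ups Q)) =
          gap h' (ups R).reverse := by
        rw [gap_reverse _ _ (by change _ ≤ un R; omega),
          ← gap_append_left _ (ups R) (ups Q) (Nat.sub_le _ _),
          ← gap_append_right _ (ups P) (ups R ++ true :: ups Q)]
        congr 1
        change _ = un P + _ + (un R - h')
        omega
      have hd' : ¬ dn R < h := by omega
      rw [r2, gap_append_left h (downs R) (downs Q) hd]
      simp only [hd, hd', true_and, false_and, or_false]
      tauto
  constructor
  · rintro ⟨hw, hL⟩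
    simp only [steps_append, steps_star, steps_map_some, walk_append, walk_none] at hw
    obtain ⟨h, hP, h', hR, hQ⟩ := hw
    exact ⟨h, h', ⟨walk_hat.2 hP, hR, hQ⟩, (key h h' hP hR hQ).1 hL⟩
  · rintro ⟨h, h', ⟨hP, hR, hQ⟩, hg⟩
    rw [walk_hat] at hP
    exact ⟨by simpa [walk_append] using ⟨h, hP, h', hR, hQ⟩, (key h h' hP hR hQ).2 hg⟩

end DyckFour

namespace DyckFour

open PowerSeries Finset

section FirstStar

variable {α M : Type*} [Fintype α] [AddCommMonoid M]

theorem wsum_option_succ (n : ℕ) (F : List (Option α) → M) :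
    wsum (n + 1) F = wsum (n + 1) (fun P : List α => F (P.map some)) +
      ∑ x ∈ antidiagonal n, wsum x.1 fun P : List α => wsum x.2 fun V =>
        F (P.map some ++ none :: V) := by
  induction n generalizing F with
  | zero => simp [wsum, add_comm]
  | succ n ih =>
    rw [wsum, Fintype.sum_option, Finset.Nat.sum_antidiagonal_succ]
    simp only [ih fun w => F (some _ :: w), Finset.sum_add_distrib]
    have e : ∀ x ∈ antidiagonal n, (wsum (x.1 + 1) fun P : List α => wsum x.2 fun V =>
        F (P.map some ++ none :: V)) = ∑ a, wsum x.1 fun P : List α => wsum x.2 fun V =>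
        F (some a :: (P.map some ++ none :: V)) := fun _ _ => rfl
    rw [Finset.sum_congr rfl e, Finset.sum_comm, add_left_comm]
    rfl

theorem wsum_option_eq (n : ℕ) (F : List (Option α) → M)
    (hF : ∀ (P : List α) (V : List (Option α)), F (P.map some ++ none :: V) = 0) :
    wsum n F = wsum n fun P : List α => F (P.map some) := by
  cases n with
  | zero => rfl
  | succ n => simp [wsum_option_succ, hF, wsum_zero]

theorem wsum_comm (m n : ℕ) (F : List α → List α → M) :
    (wsum m fun u => wsum n fun v => F u v) = wsum n fun v => wsum m fun u => F u v := by
  induction m generalizing F with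
  | zero => rfl
  | succ m ih =>
    simp only [wsum, wsum_sum]
    exact Finset.sum_congr rfl fun a _ => ih fun u v => F (a :: u) v

end FirstStar

theorem cnt_LW_eq_four (k : ℕ) :
    cnt (k + 2) (fun W : List Letter => Walk 0 0 (steps W) ∧ LW W = 4) =
      (∑ x ∈ antidiagonal (k + 1), wsum x.1 fun P => wsum x.2 fun Q =>
        ind (Walk 0 0 (steps (P.map some ++ none :: Q.map some)) ∧
          LW (P.map some ++ none :: Q.map some) = 4)) +
      ∑ x ∈ antidiagonal k, ∑ y ∈ antidiagonal x.2, wsum x.1 fun P => wsum y.1 fun R =>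
        wsum y.2 fun Q =>
        ind (Walk 0 0 (steps (P.map some ++ none :: (R.map some ++ none :: Q.map some))) ∧
          LW (P.map some ++ none :: (R.map some ++ none :: Q.map some)) = 4) := by
  rw [cnt, wsum_option_succ, wsum_congr (G := fun _ => 0)
    fun P _ => ind_neg (by simp [LW_map_some]), wsum_zero, zero_add,
    Finset.Nat.sum_antidiagonal_succ', Finset.Nat.sum_antidiagonal_succ', add_assoc,
    ← Finset.sum_add_distrib]
  congr 1
  refine Finset.sum_congr rfl fun x _ => ?_
  rw [← wsum_sum, ← wsum_add]
  refine wsum_congr fun P _ => ?_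
  rw [wsum_option_succ]
  congr 1
  refine Finset.sum_congr rfl fun y _ => wsum_congr fun R _ => wsum_option_eq _ _ fun S V =>
    ind_neg ?_
  rintro ⟨hw, hL⟩
  have := eight_le_LW P R S V hw
  omega

theorem wsum_mul_wsum (p q : ℕ) (F G : List (Option Bool) → ℤ) :
    (wsum p fun P => wsum q fun Q => F P * G Q) = wsum p F * wsum q G := by
  simp only [wsum_mul_left, wsum_mul_right]

theorem sum_one_star (N m : ℕ) (hm : N < m) :
    (∑ x ∈ antidiagonal N, wsum x.1 fun P => wsum x.2 fun Q =>
        ind (Walk 0 0 (steps (P.map some ++ none :: Q.map some)) ∧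
          LW (P.map some ++ none :: Q.map some) = 4)) =
      2 * coeff N ((X + X * qser) ^ 2 * ∑ h ∈ range m, (qser ^ 2) ^ h) := by
  have key : ∀ h, coeff N ((X + X * qser) ^ 2 * (qser ^ 2) ^ h) * 2 =
      ∑ x ∈ antidiagonal N, wsum x.1 fun P => wsum x.2 fun Q =>
        ind ((Walk h 0 P ∧ Walk h 0 Q) ∧ ((gap h (downs P) = 1 ∧ gap h (downs Q) = 3) ∨
          (gap h (downs P) = 3 ∧ gap h (downs Q) = 1))) := by
    intro h
    have e1 := fun n => cnt_walk_gap n h h 0 le_rfl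
    have e3 := fun n => cnt_walk_gap n h h 2 le_rfl
    simp only [zero_add, pow_zero, one_mul, Nat.reduceAdd, cnt] at e1 e3
    have : ∀ P Q : List (Option Bool), ind ((Walk h 0 P ∧ Walk h 0 Q) ∧
        ((gap h (downs P) = 1 ∧ gap h (downs Q) = 3) ∨
          (gap h (downs P) = 3 ∧ gap h (downs Q) = 1))) =
        ind (Walk h 0 P ∧ gap h (downs P) = 1) * ind (Walk h 0 Q ∧ gap h (downs Q) = 3) +
        ind (Walk h 0 P ∧ gap h (downs P) = 3) * ind (Walk h 0 Q ∧ gap h (downs Q) = 1) := by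
      intro P Q
      rw [← ind_and, ← ind_and]
      by_cases h1 : gap h (downs P) = 1
      · simp [h1, ind]; grind
      · simp [h1, ind]; grind
    simp only [this, wsum_add, wsum_mul_wsum, Finset.sum_add_distrib]
    simp only [e1, e3]
    rw [← coeff_mul, ← coeff_mul, ← map_add, mul_two, ← map_add]
    congr 1
    ring
  simp only [one_star_iff]
  rw [Finset.mul_sum, map_sum, mul_comm, Finset.sum_mul, Finset.sum_congr rfl fun h _ => key h,
    Finset.sum_comm]
  refine Finset.sum_congr rfl fun x hx => ?_
  rw [HasAntidiagonal.mem_antidiagonal] at hx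
  rw [← wsum_sum]
  refine Eq.trans ?_ (wsum_hat x.1 _)
  refine wsum_congr fun P hP => ?_
  rw [← wsum_sum]
  refine wsum_congr fun Q _ => ind_exists_eq_sum (fun h hh => ?_) fun h h' hh hh' =>
    hh.1.1.unique hh'.1.1
  have := hh.1.1.le'
  rw [length_hat] at this
  omega

theorem wsum_two_star (p r q h h' : ℕ) :
    (wsum p fun P => wsum r fun R => wsum q fun Q =>
      ind ((Walk h 0 P ∧ Walk h h' R ∧ Walk h' 0 Q) ∧ TwoStarCond h h' P R Q)) =
    coeff p (qser ^ h) * (coeff r (useries h h') * coeff q (qser ^ h')) +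
      coeff p (X * qser ^ (h - 1)) * (coeff r (vser h h') * coeff q (X * qser ^ (h' - 1))) := by
  have e1 := fun n h => cnt_walk_gap n h h 0 le_rfl
  simp only [zero_add, pow_zero, one_mul] at e1
  rw [useries, vser, coeff_gser, coeff_gser, ← e1, ← e1]
  rw [wsum_comm]
  have key : ∀ R : List (Option Bool), (wsum p fun P => wsum q fun Q =>
      ind ((Walk h 0 P ∧ Walk h h' R ∧ Walk h' 0 Q) ∧ TwoStarCond h h' P R Q)) =
      ind (Walk h h' R ∧ h ≤ dn R ∧ gap h (downs R) = 1 ∧ gap h' (ups R).reverse = 1) *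
        (cnt p (fun w => Walk h 0 w ∧ gap h (downs w) = 1) *
          cnt q (fun w => Walk h' 0 w ∧ gap h' (downs w) = 1)) +
      ind (Walk h h' R ∧ dn R < h) *
        (coeff p (X * qser ^ (h - 1)) * coeff q (X * qser ^ (h' - 1))) := by
    intro R
    by_cases hR : Walk h h' R
    · have e := hR.height
      rcases Nat.lt_or_ge (dn R) h with hd | hd
      · rw [ind_neg (by omega), ind_pos ⟨hR, hd⟩,
          ← cnt_walk_gap_gap p h (h - dn R - 1) h (by omega) le_rfl,
          ← cnt_walk_gap_gap q h' (h' - un R - 1) h' (by omega) le_rfl, zero_mul, zero_add,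
          one_mul, cnt, cnt, ← wsum_mul_wsum]
        refine wsum_congr fun P _ => wsum_congr fun Q _ => ?_
        rw [← ind_and]
        congr 1
        have hd' : ¬ h ≤ dn R := by omega
        simp only [TwoStarCond, hR, hd, hd', true_and, false_and, false_or]
        grind
      · rw [ind_neg (P := _ ∧ dn R < h) (by omega), zero_mul, add_zero, cnt, cnt, ← wsum_mul_wsum,
          ← wsum_mul_left]
        refine wsum_congr fun P _ => ?_
        rw [← wsum_mul_left]
        refine wsum_congr fun Q _ => ?_
        rw [← ind_and, ← ind_and]
        congr 1
        have hd' : ¬ dn R < h := by omega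
        simp only [TwoStarCond, hR, hd, hd', true_and, false_and, or_false]
        grind
    · simp [hR, wsum_zero]
  simp only [key, wsum_add, wsum_mul_right]
  change cnt r _ * _ + cnt r _ * _ = _
  ring

theorem sum_two_star (k m : ℕ) (hm : k < m) :
    (∑ x ∈ antidiagonal k, ∑ y ∈ antidiagonal x.2, wsum x.1 fun P => wsum y.1 fun R =>
      wsum y.2 fun Q =>
        ind (Walk 0 0 (steps (P.map some ++ none :: (R.map some ++ none :: Q.map some))) ∧
          LW (P.map some ++ none :: (R.map some ++ none :: Q.map some)) = 4)) =
      coeff k (twoStarSer m) := by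
  have e : ∀ h h', coeff k (qser ^ h * useries h h' * qser ^ h' +
      X * qser ^ (h - 1) * vser h h' * (X * qser ^ (h' - 1))) =
      ∑ x ∈ antidiagonal k, ∑ y ∈ antidiagonal x.2, wsum x.1 fun P => wsum y.1 fun R =>
        wsum y.2 fun Q =>
        ind ((Walk h 0 P ∧ Walk h h' R ∧ Walk h' 0 Q) ∧ TwoStarCond h h' P R Q) := by
    intro h h'
    simp only [wsum_two_star, Finset.sum_add_distrib, ← Finset.mul_sum, ← coeff_mul]
    rw [map_add, mul_assoc, mul_assoc (X * _)]
  simp only [twoStarSer, map_sum, e, two_star_iff]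
  simp only [Finset.sum_comm (s := range m) (t := antidiagonal _)]
  refine Finset.sum_congr rfl fun x hx => Finset.sum_congr rfl fun y hy => ?_
  rw [HasAntidiagonal.mem_antidiagonal] at hx hy
  simp only [← wsum_sum]
  refine Eq.trans ?_ (wsum_hat x.1 _)
  refine wsum_congr fun P hP => wsum_congr fun R _ => wsum_congr fun Q hQ => ?_
  rw [ind_exists_eq_sum (m := m)]
  · refine Finset.sum_congr rfl fun h _ => ind_exists_eq_sum (fun h' hh => ?_)
      fun h' h'' hh hh' => hh.1.2.2.unique hh'.1.2.2
    have := hh.1.2.2.le'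
    omega
  · rintro h ⟨h', hh⟩
    have := hh.1.1.le'
    rw [length_hat] at this
    omega
  · rintro h g ⟨h', hh⟩ ⟨g', hg⟩
    exact hh.1.1.unique hg.1.1

end DyckFour

namespace DyckFour

open PowerSeries Finset

theorem walk_iff_forall_count_le {a b : ℕ} {w : List (Option Bool)} :
    Walk a b w ↔ b + w.count (some false) = a + w.count (some true) ∧
      ∀ p, p <+: w → p.count (some false) ≤ a + p.count (some true) := by
  induction w generalizing a with
  | nil => simp [eq_comm]
  | cons x w ih =>
    have cons : ∀ Q : List (Option Bool) → Prop, (∀ p, p <+: x :: w → Q p) ↔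
        Q [] ∧ ∀ p, p <+: w → Q (x :: p) := fun Q => by
      simp only [List.prefix_cons_iff]
      constructor
      · exact fun H => ⟨H _ (.inl rfl), fun p hp => H _ (.inr ⟨p, rfl, hp⟩)⟩
      · rintro ⟨H, H'⟩ p (rfl | ⟨t, rfl, ht⟩)
        exacts [H, H' t ht]
    rw [cons]
    rcases x with _ | _ | _
    · simp [ih]
    · cases a with
      | zero => simpa using fun _ => ⟨[], by simp⟩
      | succ a =>
        simp only [walk_succ_down, ih, List.count_cons_self, List.count_nil, Nat.zero_le, true_and,
          List.count_cons_of_ne (show some false ≠ some true by simp)]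
        refine and_congr (by omega) (forall₂_congr fun p _ => by omega)
    · simp only [walk_up, ih, List.count_cons_self, List.count_nil, Nat.zero_le, true_and,
          List.count_cons_of_ne (show some true ≠ some false by simp)]
      refine and_congr (by omega) (forall₂_congr fun p _ => by omega)

theorem isMotzkinWord_iff {w : List (Option Bool)} : IsMotzkinWord w ↔ Walk 0 0 w := by
  rw [walk_iff_forall_count_le, IsMotzkinWord]
  simp

theorem motzkin_eq (n : ℕ) : (motzkin n : ℤ) = coeff n mser := by
  rw [motzkin, ncard_words]
  rw [cnt_congr fun w _ => isMotzkinWord_iff, cnt_walk, pow_zero, mul_one]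

/-- The generating function of the Motzkin ballot numbers `T_{n,3}`. -/
noncomputable def tser : ℤ⟦X⟧ := (X + X * qser) ^ 2

theorem tser_eq : tser = X ^ 2 * (1 + qser) ^ 2 := by rw [tser]; ring

theorem gap_zero_downs_eq_three {w : List (Option Bool)} (hw : w.length ≠ 2) :
    gap 0 (downs w) = 3 ↔
      w.getD 2 none = some false ∧ ∀ j < 2, w.getD j none ≠ some false := by
  have two : ∀ Q : ℕ → Prop, (∀ j < 2, Q j) ↔ Q 0 ∧ Q 1 := fun Q =>
    ⟨fun H => ⟨H 0 (by omega), H 1 (by omega)⟩, fun H j hj => by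
      interval_cases j
      exacts [H.1, H.2]⟩
  rw [two]
  rcases w with _ | ⟨_ | _ | _, _ | ⟨_ | _ | _, _ | ⟨_ | _ | _, w⟩⟩⟩ <;>
    simp [gap, downs, (gap_zero_pos _).ne'] at hw ⊢

theorem motzkinBallot_eq (n : ℕ) : (motzkinBallot n 3 : ℤ) = coeff n tser := by
  rw [motzkinBallot]
  split_ifs with h
  · obtain rfl : n = 2 := by omega
    rw [tser_eq, coeff_X_pow_mul']
    simp [qser]
  · rw [ncard_words, tser, ← mul_one ((X + X * qser) ^ 2), ← pow_zero qser,
      ← cnt_walk_gap n 0 0 2 le_rfl]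
    refine cnt_congr fun w hw => ?_
    rw [isMotzkinWord_iff, gap_zero_downs_eq_three (by omega)]

theorem coeff_derivative_qser (n : ℕ) : coeff n (d⁄dX ℤ qser) = (n + 1) * motzkin n := by
  rw [coeff_derivative, qser, coeff_succ_X_mul, motzkin_eq, mul_comm]

theorem coeff_mul_sum_qser (N m : ℕ) (hm : N < m) (f : ℤ⟦X⟧) :
    coeff N (f * ∑ h ∈ range m, (qser ^ 2) ^ h) = coeff N (f + X ^ 2 * (d⁄dX ℤ qser * f)) := by
  have h1 : (1 + X ^ 2 * d⁄dX ℤ qser) * (1 - qser ^ 2) = 1 := by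
    have hq : qser = X * mser := rfl
    rw [derivative_qser]
    linear_combination X ^ 2 * mser * cser_mul_one_sub_sq - (qser + X * mser) * hq
  have h2 : (1 - qser ^ 2) * ∑ h ∈ range m, (qser ^ 2) ^ h = 1 - (qser ^ 2) ^ m :=
    mul_neg_geom_sum _ _
  have h3 : f * ∑ h ∈ range m, (qser ^ 2) ^ h = f + X ^ 2 * (d⁄dX ℤ qser * f) -
      (f + X ^ 2 * (d⁄dX ℤ qser * f)) * qser ^ (2 * m) := by
    rw [pow_mul]
    linear_combination (-f * ∑ h ∈ range m, (qser ^ 2) ^ h) * h1 +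
      f * (1 + X ^ 2 * d⁄dX ℤ qser) * h2
  have h4 : X ^ m ∣ (f + X ^ 2 * (d⁄dX ℤ qser * f)) * qser ^ (2 * m) :=
    (X_pow_dvd_qser_pow (by omega)).mul_left _
  rw [h3, map_sub, X_pow_dvd_iff.1 h4 N hm, sub_zero]

theorem ncard_dyckL_four (k m : ℕ) (hm : k < m) : ((dyckL (k + 3) 4).ncard : ℤ) =
    2 * (coeff (k + 1) tser + coeff (k + 1) (X ^ 2 * (d⁄dX ℤ qser * tser))) +
      coeff k (twoStarSer (m + 1)) := by
  rw [ncard_dyckL, cnt_LW_eq_four, sum_one_star (k + 1) (m + 1) (by omega),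
    sum_two_star k (m + 1) (by omega), ← tser, coeff_mul_sum_qser _ _ (by omega), map_add]

theorem sum_Icc_eq (N : ℕ) (f : ℤ → ℤ) :
    ∑ i ∈ Icc (0 : ℤ) N, f i = ∑ x ∈ antidiagonal N, f x.1 := by
  rw [Finset.Nat.sum_antidiagonal_eq_sum_range_succ_mk]
  refine (Finset.sum_bij (M := ℤ) (fun (i : ℕ) _ => (i : ℤ)) ?_ ?_ ?_ ?_).symm
  · intro i hi; rw [mem_range] at hi; rw [mem_Icc]; omega
  · intro i _ j _ h; exact_mod_cast h
  · intro i hi; rw [mem_Icc] at hi; exact ⟨i.toNat, by rw [mem_range]; omega, by omega⟩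
  · intro i _; rfl

theorem motzkinZ_natCast (n : ℕ) : motzkinZ n = motzkin n := by simp [motzkinZ]

theorem motzkinBallotZ_natCast (n : ℕ) : motzkinBallotZ n 3 = coeff n tser := by
  simp [motzkinBallotZ, motzkinBallot_eq]

theorem sum_motzkin_mul (N : ℕ) (f : ℤ → ℤ) (F : ℤ⟦X⟧) (hf : ∀ n : ℕ, f n = coeff n F) :
    ∑ i ∈ Icc (0 : ℤ) N, (i + 1) * motzkinZ i * f (N - i) = coeff N (d⁄dX ℤ qser * F) := by
  rw [sum_Icc_eq, coeff_mul]
  refine Finset.sum_congr rfl fun x hx => ?_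
  rw [HasAntidiagonal.mem_antidiagonal] at hx
  rw [coeff_derivative_qser, motzkinZ_natCast, ← hf]
  congr 2
  omega

theorem sum_motzkin_mul_ballot (n : ℕ) (hn : 4 ≤ n) :
    ∑ i ∈ Icc (0 : ℤ) ((n : ℤ) - 6), (i + 1) * motzkinZ i * motzkinBallotZ ((n : ℤ) - 4 - i) 3 =
      coeff (n - 2) (X ^ 2 * (d⁄dX ℤ qser * tser)) := by
  rw [tser_eq, show X ^ 2 * (d⁄dX ℤ qser * (X ^ 2 * (1 + qser) ^ 2)) =
    X ^ 4 * (d⁄dX ℤ qser * (1 + qser) ^ 2) by ring, coeff_X_pow_mul']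
  split_ifs with h
  · obtain ⟨N, rfl⟩ : ∃ N, n = N + 6 := ⟨n - 6, by omega⟩
    have := sum_motzkin_mul N (fun j => motzkinBallotZ (j + 2) 3) ((1 + qser) ^ 2) fun j => by
      have := motzkinBallotZ_natCast (j + 2)
      rwa [tser_eq, coeff_X_pow_mul, Nat.cast_add] at this
    rw [show N + 6 - 2 - 4 = N by omega, ← this]
    push_cast
    rw [show (N : ℤ) + 6 - 6 = N by ring]
    refine Finset.sum_congr rfl fun i _ => ?_
    congr 2
    ring
  · rw [Finset.Icc_eq_empty (by omega), Finset.sum_empty]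

theorem sum_motzkin_mul_motzkin (n : ℕ) (hn : 5 ≤ n) :
    ∑ i ∈ Icc (0 : ℤ) ((n : ℤ) - 7), (i + 1) * motzkinZ i * motzkinZ ((n : ℤ) - 7 - i) =
      coeff (n - 5) (X ^ 2 * (d⁄dX ℤ qser * mser)) := by
  rw [coeff_X_pow_mul']
  split_ifs with h
  · obtain ⟨N, rfl⟩ : ∃ N, n = N + 7 := ⟨n - 7, by omega⟩
    rw [show N + 7 - 5 - 2 = N by omega, ← sum_motzkin_mul N motzkinZ mser fun j => by
      rw [motzkinZ_natCast, motzkin_eq]]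
    push_cast
    rw [show (N : ℤ) + 7 - 7 = N by ring]
  · rw [Finset.Icc_eq_empty (by omega), Finset.sum_empty]

theorem motzkinZ_sub (n j : ℕ) :
    motzkinZ ((n : ℤ) - j) = if j ≤ n then coeff (n - j) mser else 0 := by
  split_ifs with h
  · rw [← Nat.cast_sub h, motzkinZ_natCast, motzkin_eq]
  · rw [motzkinZ, if_neg (by omega)]

theorem coeff_twoStarSer_eq_motzkin (n : ℕ) (hn : 4 ≤ n) :
    coeff (n - 3) (twoStarSer (n + 1)) =
      (Nat.choose (n - 5) 2 : ℤ) * motzkinZ ((n : ℤ) - 7) + motzkinZ ((n : ℤ) - 5) +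
        2 * ∑ i ∈ Icc (0 : ℤ) ((n : ℤ) - 7),
            (i + 1) * motzkinZ i * motzkinZ ((n : ℤ) - 7 - i) := by
  have h7 := motzkinZ_sub n 7
  have h5 := motzkinZ_sub n 5
  push_cast at h7 h5
  rcases hn.eq_or_lt with rfl | hn
  · rw [h7, h5, Finset.Icc_eq_empty (by norm_num), twoStarSer_succ, map_add, coeff_X_pow_mul',
      coeff_one]
    simp
  · rw [sum_motzkin_mul_motzkin n hn, h7, h5, if_pos hn.nat_succ_le,
      show n - 3 = n - 5 + 2 by omega, coeff_twoStarSer _ _ (by omega), map_add,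
      show (2 : ℤ⟦X⟧) * X ^ 2 * (mser * d⁄dX ℤ qser) =
        (2 : ℕ) • (X ^ 2 * (d⁄dX ℤ qser * mser)) by rw [nsmul_eq_mul]; push_cast; ring,
      map_nsmul, nsmul_eq_mul, show n - 5 - 2 = n - 7 by omega]
    simp only [show 2 ≤ n - 5 ↔ 7 ≤ n by omega]
    push_cast
    ring

end DyckFour

/-- **Theorem (L = 4).** For `n ≥ 4`,
`|𝒟ₙ⁴| = 2·(T_{n-2,3} + Σ_{i=0}^{n-6} (i+1)·Mᵢ·T_{n-4-i,3}) + C(n-5,2)·M_{n-7} + M_{n-5}`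
`+ 2·Σ_{i=0}^{n-7} (i+1)·Mᵢ·M_{n-7-i}`, with empty sums equal to `0` and terms with
negative index equal to `0`; moreover `|𝒟₃⁴| = 1`. -/
theorem dyck_L_eq_four_count :
    (∀ n : ℕ, 4 ≤ n →
      ((dyckL n 4).ncard : ℤ) =
        2 * (motzkinBallotZ ((n : ℤ) - 2) 3 +
          ∑ i ∈ Finset.Icc (0 : ℤ) ((n : ℤ) - 6),
            (i + 1) * motzkinZ i * motzkinBallotZ ((n : ℤ) - 4 - i) 3) +
        (Nat.choose (n - 5) 2 : ℤ) * motzkinZ ((n : ℤ) - 7) + motzkinZ ((n : ℤ) - 5) +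
        2 * ∑ i ∈ Finset.Icc (0 : ℤ) ((n : ℤ) - 7),
            (i + 1) * motzkinZ i * motzkinZ ((n : ℤ) - 7 - i)) ∧
    (dyckL 3 4).ncard = 1 := by
  constructor
  · intro n hn
    have h := DyckFour.ncard_dyckL_four (n - 3) n (by omega)
    have hT := DyckFour.motzkinBallotZ_natCast (n - 2)
    rw [Nat.cast_sub (by omega)] at hT
    rw [show n - 3 + 3 = n by omega, show n - 3 + 1 = n - 2 by omega,
      ← DyckFour.sum_motzkin_mul_ballot n hn, ← hT,
      DyckFour.coeff_twoStarSer_eq_motzkin n hn] at h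
    rw [h]
    push_cast
    ring
  · have h := DyckFour.ncard_dyckL_four 0 1 one_pos
    rw [DyckFour.twoStarSer_succ, map_add, DyckFour.tser_eq] at h
    simp only [PowerSeries.coeff_X_pow_mul', PowerSeries.coeff_one] at h
    simpa using h
end

section
/- For all integers r ≥ 1, s ≥ 1, and n ≥ r+s, the number of Dyck paths in D_n^{r,s} is |D_n^{r,s}| = T_{n-2, r+s-1} + Σ_{i=0}^{n-2-s-r} (i+1)·M_i·T_{n-4-i, r+s-1}, where the sum is empty when n-2-s-r < 0. -/
namespace MotzkinCount

open PowerSeries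

/-- The number of words of length `p` on `{u, h, d}` satisfying `P`. -/
noncomputable def wordCount (p : ℕ) (P : List (Option Bool) → Prop) : ℕ :=
  {B : List (Option Bool) | B.length = p ∧ P B}.ncard

theorem finite_length_and {α : Type*} [Finite α] (p : ℕ) (P : List α → Prop) :
    {B : List α | B.length = p ∧ P B}.Finite :=
  (List.finite_length_eq α p).subset fun _ h => h.1

theorem wordCount_congr {p : ℕ} {P Q : List (Option Bool) → Prop}
    (h : ∀ B, B.length = p → (P B ↔ Q B)) : wordCount p P = wordCount p Q := by
  unfold wordCount
  congr 1
  ext B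
  exact and_congr_right fun hB => h B hB

theorem wordCount_eq_zero {p : ℕ} {P : List (Option Bool) → Prop}
    (h : ∀ B, B.length = p → ¬ P B) : wordCount p P = 0 := by
  unfold wordCount
  convert Set.ncard_empty (List (Option Bool))
  ext B
  simpa using h B

theorem wordCount_zero (P : List (Option Bool) → Prop) [Decidable (P [])] :
    wordCount 0 P = if P [] then 1 else 0 := by
  split_ifs with h
  · unfold wordCount
    rw [Set.ncard_eq_one]
    refine ⟨[], ?_⟩
    ext B
    simp only [List.length_eq_zero_iff, Set.mem_ofPred_eq, Set.mem_singleton_iff]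
    exact ⟨fun h => h.1, fun hB => ⟨hB, hB ▸ h⟩⟩
  · refine wordCount_eq_zero fun B hB => ?_
    rw [List.length_eq_zero_iff] at hB
    rwa [hB]

theorem wordCount_succ (p : ℕ) (P : List (Option Bool) → Prop) :
    wordCount (p + 1) P = wordCount p (fun B => P (some true :: B)) +
      wordCount p (fun B => P (none :: B)) + wordCount p (fun B => P (some false :: B)) := by
  have key : ∀ x : Option Bool, wordCount p (fun B => P (x :: B)) =
      (List.cons x '' {B | B.length = p ∧ P (x :: B)}).ncard := fun x =>
    (Set.ncard_image_of_injective _ List.cons_injective).symm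
  have fin : ∀ x : Option Bool, (List.cons x '' {B | B.length = p ∧ P (x :: B)}).Finite :=
    fun x => (finite_length_and _ _).image _
  rw [key, key, key, ← Set.ncard_union_eq ?_ (fin _) (fin _),
    ← Set.ncard_union_eq ?_ ((fin _).union (fin _)) (fin _)]
  · unfold wordCount
    congr 1
    ext B
    rcases B with _ | ⟨_ | _ | _, B⟩ <;> simp
  · rw [Set.disjoint_left]
    rintro B (⟨C, -, rfl⟩ | ⟨C, -, rfl⟩) <;> simp
  · rw [Set.disjoint_left]
    rintro B ⟨C, -, rfl⟩
    simp

/-- `MotzkinFrom j B`: starting at height `j`, the word `B` stays nonnegative and ends at `0`. -/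
def MotzkinFrom : ℕ → List (Option Bool) → Prop
  | j, [] => j = 0
  | j, some true :: B => MotzkinFrom (j + 1) B
  | j, none :: B => MotzkinFrom j B
  | 0, some false :: _ => False
  | j + 1, some false :: B => MotzkinFrom j B

theorem motzkinFrom_iff (B : List (Option Bool)) (j : ℕ) :
    MotzkinFrom j B ↔ B.count (some false) = B.count (some true) + j ∧
      ∀ p, p <+: B → p.count (some false) ≤ p.count (some true) + j := by
  induction B generalizing j with
  | nil => simp [MotzkinFrom, eq_comm]
  | cons x B ih =>
    have hp : ∀ Q : List (Option Bool) → Prop,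
        (∀ p, p <+: x :: B → Q p) ↔ Q [] ∧ ∀ p, p <+: B → Q (x :: p) := by
      intro Q
      constructor
      · exact fun h => ⟨h _ (List.nil_prefix), fun p hp => h _ (by simpa using hp)⟩
      · rintro ⟨h0, h⟩ p hp
        rcases List.prefix_cons_iff.1 hp with rfl | ⟨q, rfl, hq⟩
        · exact h0
        · exact h q hq
    rw [hp]
    rcases x with _ | _ | _
    · simp [MotzkinFrom, ih]
    · rcases j with _ | j
      · simp only [MotzkinFrom, false_iff, not_and]
        intro _ _ h
        simpa using h [] List.nil_prefix
      · simp only [MotzkinFrom, ih, List.count_cons]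
        simp
        grind
    · simp only [MotzkinFrom, ih, List.count_cons]
      simp
      grind

theorem isMotzkinWord_iff (B : List (Option Bool)) : IsMotzkinWord B ↔ MotzkinFrom 0 B := by
  simp [IsMotzkinWord, motzkinFrom_iff]

/-- The generating function of words from height `j` to `0`. -/
noncomputable def fromSeries (j : ℕ) : ℤ⟦X⟧ := mk fun p => (wordCount p (MotzkinFrom j) : ℤ)

theorem mk_eq_C_add_X_mul (f : ℕ → ℤ) : mk f = C (f 0) + X * mk fun p => f (p + 1) := by
  ext (_ | p)
  · simp
  · rw [map_add, coeff_succ_X_mul, coeff_C]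
    simp

theorem fromSeries_zero : fromSeries 0 = 1 + X * (fromSeries 1 + fromSeries 0) := by
  classical
  conv_lhs => unfold fromSeries
  rw [mk_eq_C_add_X_mul, wordCount_zero]
  simp only [wordCount_succ]
  congr 1
  · simp [MotzkinFrom]
  · congr 1
    ext p
    have : wordCount p (fun _ => False) = 0 := wordCount_eq_zero (by simp)
    simp [this, fromSeries, MotzkinFrom]

theorem fromSeries_succ (j : ℕ) : fromSeries (j + 1) =
    X * (fromSeries (j + 2) + fromSeries (j + 1) + fromSeries j) := by
  classical
  conv_lhs => unfold fromSeries
  rw [mk_eq_C_add_X_mul, wordCount_zero]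
  simp only [wordCount_succ]
  rw [if_neg (by simp [MotzkinFrom])]
  simp only [Nat.cast_zero, map_zero, zero_add]
  congr 1

theorem fromSeries_succ_eq_mul (j : ℕ) :
    fromSeries (j + 1) = X * (fromSeries j * fromSeries 0) := by
  ext p
  induction p generalizing j with
  | zero => rw [fromSeries_succ]; simp
  | succ p ih =>
    rw [fromSeries_succ, coeff_succ_X_mul, map_add, map_add, ih, coeff_succ_X_mul]
    rcases j with _ | j
    · have h : fromSeries 0 * fromSeries 0 = X * (fromSeries 1 * fromSeries 0) +
          X * (fromSeries 0 * fromSeries 0) + fromSeries 0 := by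
        linear_combination fromSeries 0 * fromSeries_zero
      rw [ih, ← map_add, ← map_add, h]
      congr 1
      linear_combination -X * h
    · conv_rhs => rw [fromSeries_succ]
      rw [ih, ih, ← map_add, ← map_add]
      congr 1
      ring

/-- The generating function `x m(x)`, where `m` is the Motzkin generating function. -/
noncomputable def shiftedSeries : ℤ⟦X⟧ := X * fromSeries 0

theorem fromSeries_eq (j : ℕ) : fromSeries j = fromSeries 0 * shiftedSeries ^ j := by
  induction j with
  | zero => simp
  | succ j ih => rw [fromSeries_succ_eq_mul, ih, shiftedSeries]; ring

theorem shiftedSeries_eq : shiftedSeries = X * (1 + shiftedSeries + shiftedSeries ^ 2) := by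
  have h := fromSeries_zero
  rw [fromSeries_eq 1] at h
  conv_lhs => rw [shiftedSeries, h]
  unfold shiftedSeries
  ring

theorem constantCoeff_shiftedSeries : constantCoeff shiftedSeries = 0 := by
  simp [shiftedSeries]

theorem geom_identity :
    (1 - shiftedSeries ^ 2) * (1 + X ^ 2 * derivative ℤ shiftedSeries) = 1 := by
  have h := shiftedSeries_eq
  have h' := congrArg (derivative ℤ) h
  set y := shiftedSeries
  set y' := derivative ℤ y
  have h'' : y' = (1 + y + y ^ 2) + X * (y' + 2 * y * y') := by
    simp only [Derivation.leibniz, map_add, Derivation.leibniz_pow, smul_eq_mul] at h'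
    simp at h'
    linear_combination h'
  linear_combination X ^ 2 * (1 + y + y ^ 2) * h'' -
    (X ^ 2 * y' * (1 + 2 * y) + (y + X * (1 + y + y ^ 2))) * h

/-- The `t`-th gap (counted from `0`) between consecutive occurrences of `true`. -/
def gap : ℕ → List Bool → ℕ
  | _, [] => 0
  | 0, true :: _ => 1
  | 0, false :: l => gap 0 l + 1
  | t + 1, true :: l => gap t l
  | t + 1, false :: l => gap (t + 1) l

/-- Marks the down steps, with a final down step added. -/
def downMarks (B : List (Option Bool)) : List Bool := B.map (· == some false) ++ [true]

theorem one_le_gap_zero_downMarks (B : List (Option Bool)) : 1 ≤ gap 0 (downMarks B) := by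
  rcases B with _ | ⟨_ | _ | _, B⟩ <;> simp [downMarks, gap]

/-- Words from height `j` to `0` whose `c`-th gap between down steps is `r`. -/
def GapWord (c j r : ℕ) (B : List (Option Bool)) : Prop :=
  MotzkinFrom j B ∧ gap c (downMarks B) = r

/-- The generating function of `GapWord c j r` by length. -/
noncomputable def gapSeries (c j r : ℕ) : ℤ⟦X⟧ := mk fun p => (wordCount p (GapWord c j r) : ℤ)

theorem gapSeries_zero_one (j : ℕ) : gapSeries 0 j 1 = shiftedSeries ^ j := by
  classical
  unfold gapSeries
  rw [mk_eq_C_add_X_mul, wordCount_zero]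
  simp only [wordCount_succ]
  have h1 : ∀ p, wordCount p (fun B => GapWord 0 j 1 (some true :: B)) = 0 := fun p =>
    wordCount_eq_zero fun B _ h => by
      have := one_le_gap_zero_downMarks B
      have := h.2
      simp_all [downMarks, gap]
  have h2 : ∀ p, wordCount p (fun B => GapWord 0 j 1 (none :: B)) = 0 := fun p =>
    wordCount_eq_zero fun B _ h => by
      have := one_le_gap_zero_downMarks B
      have := h.2
      simp_all [downMarks, gap]
  simp only [h1, h2, zero_add]
  rcases j with _ | j
  · have h3 : ∀ p, wordCount p (fun B => GapWord 0 0 1 (some false :: B)) = 0 := fun p =>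
      wordCount_eq_zero fun B _ h => by simpa [MotzkinFrom] using h.1
    simp only [h3]
    simp [GapWord, MotzkinFrom, gap, downMarks]
    ext; simp
  · rw [if_neg (fun h => by simpa [MotzkinFrom] using h.1)]
    have h3 : ∀ p, wordCount p (fun B => GapWord 0 (j + 1) 1 (some false :: B)) =
        wordCount p (MotzkinFrom j) := fun p =>
      wordCount_congr fun B _ => by simp [GapWord, MotzkinFrom, gap, downMarks]
    simp only [h3]
    have := fromSeries_eq j
    unfold fromSeries at this
    rw [this, pow_succ, shiftedSeries, fromSeries]
    simp
    ring

theorem gapSeries_zero_succ (j r : ℕ) (hr : 1 ≤ r) :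
    gapSeries 0 j (r + 1) = X * (gapSeries 0 (j + 1) r + gapSeries 0 j r) := by
  classical
  conv_lhs => unfold gapSeries
  rw [mk_eq_C_add_X_mul, wordCount_zero]
  simp only [wordCount_succ]
  rw [if_neg (fun h => by have := h.2; simp [gap, downMarks] at this; omega)]
  simp only [Nat.cast_zero, map_zero, zero_add]
  congr 1
  ext p
  have h1 : wordCount p (fun B => GapWord 0 j (r + 1) (some true :: B)) =
      wordCount p (GapWord 0 (j + 1) r) :=
    wordCount_congr fun B _ => by simp [GapWord, MotzkinFrom, gap, downMarks]
  have h2 : wordCount p (fun B => GapWord 0 j (r + 1) (none :: B)) =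
      wordCount p (GapWord 0 j r) :=
    wordCount_congr fun B _ => by simp [GapWord, MotzkinFrom, gap, downMarks]
  have h3 : wordCount p (fun B => GapWord 0 j (r + 1) (some false :: B)) = 0 :=
    wordCount_eq_zero fun B _ h => by have := h.2; simp [gap, downMarks] at this; omega
  simp [gapSeries, h1, h2, h3]

theorem gapSeries_zero (j r : ℕ) :
    gapSeries 0 j (r + 1) = shiftedSeries ^ j * (X * (1 + shiftedSeries)) ^ r := by
  induction r generalizing j with
  | zero => simp [gapSeries_zero_one]
  | succ r ih => rw [gapSeries_zero_succ _ _ (by omega), ih, ih]; ring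

theorem gapSeries_succ (c j r : ℕ) :
    gapSeries (c + 1) (j + 1) r =
      X * (gapSeries (c + 1) (j + 2) r + gapSeries (c + 1) (j + 1) r + gapSeries c j r) := by
  classical
  conv_lhs => unfold gapSeries
  rw [mk_eq_C_add_X_mul, wordCount_zero]
  simp only [wordCount_succ]
  rw [if_neg (fun h => by simpa [MotzkinFrom] using h.1)]
  simp only [Nat.cast_zero, map_zero, zero_add]
  congr 1

theorem gapSeries_eq (c j r : ℕ) (hcj : c ≤ j) :
    gapSeries c j (r + 1) = shiftedSeries ^ j * (X * (1 + shiftedSeries)) ^ r := by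
  ext p
  induction p generalizing c j with
  | zero =>
    rcases c with _ | c
    · rw [gapSeries_zero]
    · obtain ⟨j, rfl⟩ : ∃ k, j = k + 1 := ⟨j - 1, by omega⟩
      rw [gapSeries_succ]
      simp [constantCoeff_shiftedSeries]
  | succ p ih =>
    rcases c with _ | c
    · rw [gapSeries_zero]
    · obtain ⟨j, rfl⟩ : ∃ k, j = k + 1 := ⟨j - 1, by omega⟩
      rw [gapSeries_succ, coeff_succ_X_mul, map_add, map_add, ih _ _ (by omega),
        ih _ _ (by omega), ih _ _ (by omega), ← map_add, ← map_add, ← coeff_succ_X_mul]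
      congr 1
      rw [pow_succ _ j]
      conv_rhs => rw [mul_right_comm]; right; rw [shiftedSeries_eq]
      ring

theorem gap_zero_downMarks_eq_iff (B : List (Option Bool)) (k : ℕ) :
    gap 0 (downMarks B) = k + 1 ↔
      (B.getD k none = some false ∨ B.length = k) ∧ ∀ j < k, B.getD j none ≠ some false := by
  induction B generalizing k with
  | nil => rcases k with _ | k <;> simp [gap, downMarks]
  | cons x B ih =>
    have hx : x ≠ some false → gap 0 (downMarks (x :: B)) = gap 0 (downMarks B) + 1 := by
      rcases x with _ | _ | _ <;> simp [gap, downMarks]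
    by_cases h : x = some false
    · subst h
      rcases k with _ | k
      · simp [gap, downMarks]
      · simp only [downMarks, List.map_cons, beq_self_eq_true, List.cons_append, gap]
        constructor
        · intro h; omega
        · intro h; simpa using h.2 0 (by omega)
    · rw [hx h]
      rcases k with _ | k
      · have := one_le_gap_zero_downMarks B
        simp [h]
        omega
      · rw [Nat.add_right_cancel_iff, ih, Nat.forall_lt_succ_left]
        simp [h]

theorem motzkinBallot_eq (n k : ℕ) :
    motzkinBallot n (k + 1) = wordCount n (GapWord 0 0 (k + 1)) := by
  unfold motzkinBallot
  split_ifs with h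
  · obtain rfl : n = k := by omega
    have := congrArg (coeff n) (gapSeries_zero 0 n)
    rw [gapSeries, coeff_mk, pow_zero, one_mul, mul_pow] at this
    have h2 := coeff_X_pow_mul ((1 + shiftedSeries) ^ n) n 0
    rw [zero_add] at h2
    rw [h2] at this
    simp [constantCoeff_shiftedSeries] at this
    omega
  · refine wordCount_congr fun B hB => ?_
    rw [isMotzkinWord_iff, GapWord, gap_zero_downMarks_eq_iff]
    have : B.length ≠ k := by omega
    simp [this]

theorem motzkin_eq (n : ℕ) : motzkin n = wordCount n (MotzkinFrom 0) := by
  unfold motzkin wordCount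
  simp only [isMotzkinWord_iff]

theorem coeff_mul_gapSeries (N h r s : ℕ) :
    ∑ x ∈ Finset.HasAntidiagonal.antidiagonal N, (wordCount x.1 (GapWord h h (r + 1)) : ℤ) *
      wordCount x.2 (GapWord h h (s + 1)) =
      coeff N ((shiftedSeries ^ 2) ^ h * gapSeries 0 0 (r + s + 1)) := by
  have : (shiftedSeries ^ 2) ^ h * gapSeries 0 0 (r + s + 1) =
      gapSeries h h (r + 1) * gapSeries h h (s + 1) := by
    rw [gapSeries_eq _ _ _ le_rfl, gapSeries_eq _ _ _ le_rfl, gapSeries_eq _ _ _ le_rfl]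
    ring
  rw [this, coeff_mul]
  simp [gapSeries]

theorem coeff_sum_pow_mul (n N : ℕ) (hN : N < n) (f : ℤ⟦X⟧) :
    coeff N ((∑ h ∈ Finset.range n, (shiftedSeries ^ 2) ^ h) * f) =
      coeff N ((1 + X ^ 2 * derivative ℤ shiftedSeries) * f) := by
  have h1 := geom_identity
  have h2 := mul_neg_geom_sum (shiftedSeries ^ 2) n
  set g := ∑ h ∈ Finset.range n, (shiftedSeries ^ 2) ^ h
  set d := derivative ℤ shiftedSeries
  have h3 : g = (1 + X ^ 2 * d) - X ^ (2 * n) * (fromSeries 0 ^ (2 * n) * (1 + X ^ 2 * d)) := by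
    have h4 : (shiftedSeries ^ 2) ^ n = X ^ (2 * n) * fromSeries 0 ^ (2 * n) := by
      rw [← pow_mul, shiftedSeries, mul_pow]
    rw [h4] at h2
    linear_combination (1 + X ^ 2 * d) * h2 - g * h1
  rw [h3, sub_mul, map_sub, mul_assoc, coeff_X_pow_mul', if_neg (by omega), sub_zero]

theorem coeff_derivative_shiftedSeries (i : ℕ) :
    coeff i (derivative ℤ shiftedSeries) = (i + 1) * (motzkin i : ℤ) := by
  rw [coeff_derivative, shiftedSeries, coeff_succ_X_mul, fromSeries, coeff_mk, motzkin_eq]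
  ring

theorem motzkinBallot_eq_zero (n k : ℕ) (h : n < k) : motzkinBallot n (k + 1) = 0 := by
  have := congrArg (coeff n) (gapSeries_eq 0 0 k le_rfl)
  rw [mul_pow, pow_zero, one_mul, coeff_X_pow_mul', if_neg (by omega), gapSeries, coeff_mk] at this
  rw [motzkinBallot_eq]
  exact_mod_cast this

theorem coeff_gapSeries (n k : ℕ) :
    coeff n (gapSeries 0 0 (k + 1)) = (motzkinBallot n (k + 1) : ℤ) := by
  rw [motzkinBallot_eq, gapSeries, coeff_mk]

theorem sum_antidiagonal_eq (r s N : ℕ) :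
    ∑ x ∈ Finset.HasAntidiagonal.antidiagonal N, ∑ h ∈ Finset.range (N + 2),
      (wordCount x.1 (GapWord h h (r + 1)) : ℤ) * wordCount x.2 (GapWord h h (s + 1)) =
    motzkinBallotZ N (r + s + 1) +
        ∑ i ∈ Finset.Icc (0 : ℤ) ((N : ℤ) - 2 - s - r),
          (i + 1) * motzkinZ i * motzkinBallotZ ((N : ℤ) - 2 - i) (r + s + 1) := by
  rw [Finset.sum_comm]
  simp only [coeff_mul_gapSeries]
  rw [← map_sum, ← Finset.sum_mul, coeff_sum_pow_mul _ _ (by omega), add_mul, one_mul, map_add,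
    coeff_gapSeries, mul_assoc, coeff_X_pow_mul']
  congr 1
  split_ifs with hN
  · obtain ⟨K, rfl⟩ : ∃ K, N = K + 2 := ⟨N - 2, by omega⟩
    rw [Nat.add_sub_cancel, coeff_mul, Finset.Nat.sum_antidiagonal_eq_sum_range_succ_mk]
    simp only [coeff_derivative_shiftedSeries, coeff_gapSeries]
    symm
    refine Finset.sum_of_injOn Int.toNat ?_ ?_ ?_ ?_
    · intro a ha b hb hab
      simp at ha hb
      omega
    · intro a ha
      simp at ha ⊢
      omega
    · intro i hi hi'
      simp only [Finset.mem_range] at hi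
      rw [motzkinBallot_eq_zero, Nat.cast_zero, mul_zero]
      by_contra hlt
      refine hi' ⟨i, ?_, by simp⟩
      simp
      omega
    · intro i hi
      simp only [Finset.mem_Icc] at hi
      rw [motzkinZ, if_pos hi.1, motzkinBallotZ, if_pos (by push_cast; omega)]
      have h1 : ((i.toNat : ℕ) : ℤ) = i := by omega
      have h2 : (((K + 2 : ℕ) : ℤ) - 2 - i).toNat = K - i.toNat := by omega
      rw [h1, h2]
  · rw [Finset.Icc_eq_empty (by omega), Finset.sum_empty]

/-- The first letter of a word, the empty word being followed by an up step. -/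
def firstStep : List Bool → Bool
  | [] => true
  | x :: _ => x

@[simp] theorem firstStep_nil : firstStep [] = true := rfl

@[simp] theorem firstStep_cons (x : Bool) (w : List Bool) : firstStep (x :: w) = x := rfl

/-- For each occurrence of `c` in `w`, whether the next letter differs from `c`; the word is
considered to be followed by an up step. -/
def turns (c : Bool) : List Bool → List Bool
  | [] => []
  | x :: w => if x = c then (firstStep w != c) :: turns c w else turns c w

/-- The length of the run of letters `!c` directly after the `i`-th occurrence of `c`. -/
def runAfter (c : Bool) : List Bool → ℕ → ℕ
  | [], _ => 0
  | x :: w, 0 => if x = c then (w.takeWhile (· != c)).length else runAfter c w 0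
  | x :: w, i + 1 => if x = c then runAfter c w i else runAfter c w (i + 1)

theorem count_take_findIdx (c : Bool) (w : List Bool) :
    (w.take (w.findIdx (· == c))).count (!c) = (w.takeWhile (· != c)).length := by
  induction w with
  | nil => simp
  | cons x w ih => cases x <;> cases c <;> simp_all [List.findIdx_cons]

theorem getD_findIdxs_one (c : Bool) (w : List Bool) (i : ℕ) (h : i < w.count c) :
    (w.findIdxs (· == c) 1).getD i 0 = (w.findIdxs (· == c)).getD i 0 + 1 := by
  have h' : i < (w.findIdxs (· == c)).length := by
    rw [List.length_findIdxs]; exact h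
  rw [List.findIdxs_start, List.getD_eq_getElem _ _ (by simpa using h'),
    List.getD_eq_getElem _ _ h']
  simp

theorem count_between (c : Bool) (w : List Bool) (i : ℕ) (h : i + 1 < w.count c) :
    ((w.take ((w.findIdxs (· == c)).getD (i + 1) 0)).drop
      ((w.findIdxs (· == c)).getD i 0 + 1)).count (!c) = runAfter c w i := by
  induction w generalizing i with
  | nil => simp at h
  | cons x w ih =>
    by_cases hx : x = c
    · subst hx
      simp only [List.count_cons_self] at h
      rw [List.findIdxs_cons]
      simp only [BEq.rfl, if_true, List.getD_cons_succ, zero_add]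
      rw [getD_findIdxs_one _ _ _ (by omega)]
      rcases i with _ | i
      · have h' : 0 < (w.findIdxs (· == x)).length := by
          rw [List.length_findIdxs]; change 0 < w.count x; omega
        rw [List.getD_eq_getElem _ _ h', List.getElem_zero_findIdxs_eq_findIdx]
        simp [runAfter, count_take_findIdx]
      · rw [List.getD_cons_succ, getD_findIdxs_one _ _ _ (by omega)]
        simpa [runAfter] using ih i (by omega)
    · rw [List.count_cons_of_ne hx] at h
      rw [List.findIdxs_cons]
      simp only [beq_iff_eq, hx, if_false, zero_add]
      rw [getD_findIdxs_one _ _ _ (by omega), getD_findIdxs_one _ _ _ (by omega)]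
      have := ih i h
      cases i <;> simpa [runAfter, hx] using this

theorem rStat_eq (w : List Bool) (i : ℕ) (h : i + 1 < w.count true) :
    rStat w (i + 1) = runAfter true w i := count_between true w i h

theorem sStat_eq (w : List Bool) (i : ℕ) (h : i + 1 < w.count false) :
    sStat w (i + 1) = runAfter false w i := count_between false w i h

theorem length_turns (c : Bool) (w : List Bool) : (turns c w).length = w.count c := by
  induction w with
  | nil => simp [turns]
  | cons x w ih => by_cases hx : x = c <;> simp [turns, hx, ih]

theorem length_takeWhile_eq_gap (c : Bool) (w : List Bool) (h : firstStep w = !c) :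
    (w.takeWhile (· != c)).length = gap 0 (turns (!c) w) := by
  induction w with
  | nil => simp [turns, gap]
  | cons x w ih =>
    obtain rfl : x = !c := by simpa using h
    by_cases hw : firstStep w = !c
    · simp [turns, gap, ih hw, hw]
    · have : firstStep w = c := by cases c <;> simpa using hw
      rcases w with _ | ⟨y, w⟩ <;> simp_all [turns, gap]

theorem runAfter_eq (c : Bool) (w : List Bool) (i : ℕ) :
    runAfter c w i = if (turns c w).getD i false then
      gap (((turns c w).take i).count true + (firstStep w != c).toNat) (turns (!c) w) else 0 := by
  induction w generalizing i with
  | nil => simp [runAfter, turns]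
  | cons x w ih =>
    by_cases hx : x = c
    · subst hx
      rcases i with _ | i
      · by_cases hw : firstStep w = !x
        · simp [runAfter, turns, length_takeWhile_eq_gap _ _ hw, hw]
        · have : firstStep w = x := by cases x <;> simpa using hw
          rcases w with _ | ⟨y, w⟩ <;> simp_all [turns, runAfter]
      · simp only [runAfter, if_true, ih, turns, List.getD_cons_succ, List.take_succ_cons,
          List.count_cons]
        cases firstStep w <;> cases x <;> simp
    · obtain rfl : x = !c := by cases x <;> cases c <;> simp_all
      have h1 : runAfter c ((!c) :: w) i = runAfter c w i := by cases i <;> simp [runAfter]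
      rw [h1, ih]
      simp only [turns, if_true, firstStep_cons]
      cases firstStep w <;> cases c <;> simp [gap]

theorem count_turns (w : List Bool) :
    (turns true w).count true + (!firstStep w).toNat = (turns false w).count true := by
  induction w with
  | nil => simp [turns]
  | cons x w ih =>
    cases x <;> simp only [turns] <;> cases h : firstStep w <;> simp_all

theorem getLast?_turns_false (w : List Bool) : ∀ x ∈ (turns false w).getLast?, x = true := by
  induction w with
  | nil => simp [turns]
  | cons x w ih =>
    cases x
    · simp only [turns, if_true]
      rcases h : turns false w with _ | ⟨y, l⟩
      · have : firstStep w = true := by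
          rcases w with _ | ⟨_ | _, w⟩ <;> simp_all [turns]
        simp [this]
      · rw [h] at ih
        simpa [List.getLast?_cons_cons] using ih
    · simpa [turns] using ih

theorem turns_injective {w w' : List Bool} (h : firstStep w = firstStep w')
    (ht : turns true w = turns true w') (hf : turns false w = turns false w') : w = w' := by
  induction w generalizing w' with
  | nil =>
    rcases w' with _ | ⟨_ | _, w'⟩ <;> simp_all [turns]
  | cons x w ih =>
    rcases w' with _ | ⟨y, w'⟩
    · cases x <;> simp_all [turns]
    · obtain rfl : x = y := by simpa using h
      have : w = w' := by
        cases x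
        · simp only [turns, if_true, List.cons.injEq] at ht hf
          refine ih ?_ (by simpa using ht) hf.2
          simpa using hf.1
        · simp only [turns, if_true, List.cons.injEq] at ht hf
          refine ih ?_ ht.2 (by simpa using hf)
          simpa using ht.1
      rw [this]

theorem exists_turns (c : Bool) (U D : List Bool)
    (hc : U.count true + (!c).toNat = D.count true) (hD : ∀ x ∈ D.getLast?, x = true) :
    ∃ w : List Bool, firstStep w = c ∧ turns true w = U ∧ turns false w = D := by
  induction hN : U.length + D.length generalizing c U D with
  | zero =>
    obtain rfl : U = [] := List.length_eq_zero_iff.1 (by omega)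
    obtain rfl : D = [] := List.length_eq_zero_iff.1 (by omega)
    cases c <;> simp at hc
    exact ⟨[], by simp [turns]⟩
  | succ N ih =>
    cases c
    · rcases D with _ | ⟨f, D⟩
      · simp at hc
      · obtain ⟨w, h1, h2, h3⟩ := ih f U D (by cases f <;> simp_all) (by
          rcases D with _ | ⟨y, l⟩
          · simp
          · simpa [List.getLast?_cons_cons] using hD) (by simp at hN; omega)
        refine ⟨false :: w, by simp, by simp [turns, h2], by simp [turns, h1, h3]⟩
    · rcases U with _ | ⟨f, U⟩
      · exfalso
        rcases D.eq_nil_or_concat with rfl | ⟨D, y, rfl⟩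
        · simp at hN
        · have : y = true := hD y (by simp)
          simp [this] at hc
      · obtain ⟨w, h1, h2, h3⟩ := ih (!f) U D (by cases f <;> simp_all) hD (by simp at hN; omega)
        refine ⟨true :: w, by simp, by simp [turns, h1, h2], by simp [turns, h3]⟩

theorem forall_prefix_iff (w : List Bool) (e : ℕ) :
    (∀ p, p <+: w → p.count false ≤ p.count true + e) ↔
      ∀ i, (!firstStep w).toNat + ((turns true w).take i).count true ≤
        ((turns false w).take (e + i)).count true := by
  induction w generalizing e with
  | nil => simp [turns]
  | cons x w ih =>
    have hp : (∀ p, p <+: x :: w → p.count false ≤ p.count true + e) ↔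
        ∀ p, p <+: w → (x :: p).count false ≤ (x :: p).count true + e := by
      constructor
      · exact fun h p hp => h _ (by simpa using hp)
      · rintro h p hp
        rcases List.prefix_cons_iff.1 hp with rfl | ⟨q, rfl, hq⟩
        · simp
        · exact h q hq
    rw [hp]
    cases x
    · rcases e with _ | e
      · constructor
        · intro h
          simpa using h [] List.nil_prefix
        · intro h
          simpa [turns] using h 0
      · have : (∀ p, p <+: w → (false :: p).count false ≤ (false :: p).count true + (e + 1)) ↔
            ∀ p, p <+: w → p.count false ≤ p.count true + e := by
          simp [← add_assoc]
        rw [this, ih]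
        refine forall_congr' fun i => ?_
        rw [show e + 1 + i = e + i + 1 by omega]
        simp only [turns, if_true, List.take_succ_cons]
        cases firstStep w <;> simp [add_comm]
    · have : (∀ p, p <+: w → (true :: p).count false ≤ (true :: p).count true + e) ↔
            ∀ p, p <+: w → p.count false ≤ p.count true + (e + 1) := by
        simp [add_assoc, add_comm 1 e]
      rw [this, ih]
      have hk : ∀ i, (!firstStep w).toNat + ((turns true w).take i).count true =
          ((turns true (true :: w)).take (i + 1)).count true := by
        intro i
        cases h : firstStep w <;> simp [turns, h, add_comm]
      simp only [hk]
      constructor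
      · rintro h (_ | i)
        · simp
        · simpa [turns, add_assoc, add_comm 1 i] using h i
      · intro h i
        simpa [turns, add_assoc, add_comm 1 i] using h (i + 1)

theorem gap_pos {k : ℕ} {l : List Bool} (h : k < l.count true) : 0 < gap k l := by
  induction l generalizing k with
  | nil => simp at h
  | cons x l ih =>
    cases x <;> rcases k with _ | k <;> simp_all [gap]

theorem gap_append_left {k : ℕ} {l : List Bool} (h : k < l.count true) (l' : List Bool) :
    gap k (l ++ l') = gap k l := by
  induction l generalizing k with
  | nil => simp at h
  | cons x l ih =>
    cases x <;> rcases k with _ | k <;> simp_all [gap]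

theorem gap_append_right (k : ℕ) (l l' : List Bool) :
    gap (l.count true + 1 + k) (l ++ true :: l') = gap k l' := by
  induction l with
  | nil => simp [gap, add_comm]
  | cons x l ih =>
    cases x
    · rw [show (false :: l).count true + 1 + k = l.count true + k + 1 by simp; omega]
      simpa [gap, add_right_comm] using ih
    · rw [show (true :: l).count true + 1 + k = l.count true + 1 + k + 1 by simp; omega]
      simpa [gap] using ih

theorem gap_append_false_true (k : ℕ) (l : List Bool) (hk : k ≤ l.count true) :
    gap k (l ++ [false, true]) = gap k (l ++ [true]) + if k = l.count true then 1 else 0 := by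
  induction l generalizing k with
  | nil => obtain rfl : k = 0 := by simpa using hk
           simp [gap]
  | cons x l ih =>
    cases x <;> rcases k with _ | k <;> simp_all [gap]
    · omega

theorem gap_reverse (k : ℕ) (l : List Bool) (hk : k ≤ l.count true) :
    gap k (l.reverse ++ [true]) = gap (l.count true - k) (l ++ [true]) := by
  induction l generalizing k with
  | nil => simp_all
  | cons x l ih =>
    rw [List.reverse_cons, List.append_assoc]
    cases x
    · simp only [List.count_cons, List.cons_append, List.nil_append] at hk ⊢
      simp at hk ⊢
      rw [gap_append_false_true _ _ (by simpa using hk), ih _ hk]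
      rcases hk.lt_or_eq with hk | rfl
      · obtain ⟨t, ht⟩ : ∃ t, l.count true - k = t + 1 := ⟨l.count true - k - 1, by omega⟩
        rw [ht]
        simp [gap, hk.ne]
      · simp [gap]
    · simp only [List.count_cons_self, List.cons_append, List.nil_append] at hk ⊢
      rcases hk.lt_or_eq with hk | rfl
      · have h1 := gap_append_left (k := k) (l := l.reverse ++ [true]) (by simpa using hk) [true]
        rw [show l.count true + 1 - k = l.count true - k + 1 by omega]
        rw [List.append_assoc] at h1
        simp only [List.cons_append, List.nil_append] at h1
        rw [h1, ih _ (by omega)]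
        simp [gap]
      · have := gap_append_right 0 l.reverse [true]
        simpa [gap] using this

theorem motzkinFrom_iff_take (B : List (Option Bool)) (j : ℕ) :
    MotzkinFrom j B ↔ B.count (some false) = B.count (some true) + j ∧
      ∀ i, (B.take i).count (some false) ≤ (B.take i).count (some true) + j := by
  rw [motzkinFrom_iff]
  refine and_congr_right fun _ => ⟨fun h i => h _ (List.take_prefix i B), fun h p hp => ?_⟩
  rw [List.prefix_iff_eq_take.1 hp]
  exact h _

theorem count_map_beq (B : List (Option Bool)) (x : Option Bool) :
    (B.map (· == x)).count true = B.count x := by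
  induction B with
  | nil => simp
  | cons y B ih => by_cases h : y = x <;> simp [h, ih]

theorem forall_take_append {U₁ D₁ : List Bool} (h : U₁.length = D₁.length) (U₂ D₂ : List Bool) :
    (∀ i, ((U₁ ++ U₂).take i).count true ≤ ((D₁ ++ D₂).take i).count true) ↔
      (∀ i, (U₁.take i).count true ≤ (D₁.take i).count true) ∧
      ∀ i, U₁.count true + (U₂.take i).count true ≤ D₁.count true + (D₂.take i).count true := by
  constructor
  · refine fun H => ⟨fun i => ?_, fun i => ?_⟩
    · rcases le_total i U₁.length with hi | hi
      · have := H i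
        rwa [List.take_append_of_le_length hi, List.take_append_of_le_length (h ▸ hi)] at this
      · have := H U₁.length
        rw [List.take_of_length_le hi, List.take_of_length_le (h ▸ hi)]
        rw [List.take_left] at this
        rwa [h, List.take_left] at this
    · have := H (U₁.length + i)
      rw [List.take_length_add_append] at this
      rw [h, List.take_length_add_append] at this
      simpa using this
  · rintro ⟨H₁, H₂⟩ i
    rcases le_total i U₁.length with hi | hi
    · rw [List.take_append_of_le_length hi, List.take_append_of_le_length (h ▸ hi)]
      exact H₁ i
    · obtain ⟨i, rfl⟩ := Nat.exists_eq_add_of_le hi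
      rw [List.take_length_add_append]
      rw [h, List.take_length_add_append]
      simpa using H₂ i

theorem count_take_reverse (l : List Bool) (i : ℕ) :
    (l.reverse.take i).count true + (l.take (l.length - i)).count true = l.count true := by
  rw [List.take_reverse, List.count_reverse, add_comm, ← List.count_append, List.take_append_drop]

theorem forall_take_map_reverse_iff (A : List (Option Bool)) {h : ℕ}
    (hA : A.count (some false) = A.count (some true) + h) :
    (∀ i, ((A.map (· == some true)).reverse.take i).count true ≤
      ((A.map (· == some false)).reverse.take i).count true) ↔ MotzkinFrom h A := by
  rw [motzkinFrom_iff_take]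
  have key : ∀ i x, ((A.map (· == x)).reverse.take i).count true +
      (A.take (A.length - i)).count x = A.count x := by
    intro i x
    have := count_take_reverse (A.map (· == x)) i
    rwa [← List.map_take, count_map_beq, count_map_beq, List.length_map] at this
  constructor
  · refine fun H => ⟨hA, fun i => ?_⟩
    rcases le_total i A.length with hi | hi
    · have h1 := key (A.length - i) (some true)
      have h2 := key (A.length - i) (some false)
      have h3 := H (A.length - i)
      rw [Nat.sub_sub_self hi] at h1 h2
      omega
    · rw [List.take_of_length_le hi, hA]
  · rintro ⟨-, H⟩ i
    have h1 := key i (some true)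
    have h2 := key i (some false)
    have h3 := H (A.length - i)
    omega

theorem forall_take_map_iff (B : List (Option Bool)) {a h : ℕ}
    (hB : B.count (some false) = B.count (some true) + h) :
    (∀ i, a + ((true :: downMarks B).take i).count true ≤
      a + h + ((true :: (B.map (· == some true) ++ [true])).take i).count true) ↔
      MotzkinFrom h B := by
  rw [motzkinFrom_iff_take]
  constructor
  · refine fun H => ⟨hB, fun i => ?_⟩
    rcases le_total i B.length with hi | hi
    · have := H (i + 1)
      rw [List.take_succ_cons, List.take_succ_cons, downMarks,
        List.take_append_of_le_length (by simpa), List.take_append_of_le_length (by simpa),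
        ← List.map_take, ← List.map_take] at this
      simp only [List.count_cons_self, count_map_beq] at this
      omega
    · rw [List.take_of_length_le hi, hB]
  · rintro ⟨-, H⟩ (_ | i)
    · simp
    · rw [List.take_succ_cons, List.take_succ_cons, downMarks]
      rcases le_total i B.length with hi | hi
      · rw [List.take_append_of_le_length (by simpa), List.take_append_of_le_length (by simpa),
        ← List.map_take, ← List.map_take]
        simp only [List.count_cons_self, count_map_beq]
        have := H i
        omega
      · obtain ⟨i, rfl⟩ := Nat.exists_eq_add_of_le hi
        have h1 := List.take_length_add_append (l₁ := B.map (· == some true)) (l₂ := [true]) i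
        have h2 := List.take_length_add_append (l₁ := B.map (· == some false)) (l₂ := [true]) i
        rw [List.length_map] at h1 h2
        rw [h1, h2]
        simp only [List.count_cons_self, List.count_append, count_map_beq]
        omega

/-- The turns at up steps of the path that `A` (read backwards, with its steps reversed) and `B`
encode around the unique common turn. -/
def upTurns (A B : List (Option Bool)) : List Bool :=
  (A.map (· == some true)).reverse ++ true :: downMarks B

/-- The turns at down steps of the path that `A` (read backwards, with its steps reversed) and `B`
encode around the unique common turn. -/
def downTurns (A B : List (Option Bool)) : List Bool :=
  (A.map (· == some false)).reverse ++ true :: (B.map (· == some true) ++ [true])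

theorem length_upTurns (A B : List (Option Bool)) :
    (upTurns A B).length = A.length + B.length + 2 := by
  simp [upTurns, downMarks]; omega

theorem length_downTurns (A B : List (Option Bool)) :
    (downTurns A B).length = A.length + B.length + 2 := by
  simp [downTurns]; omega

theorem count_upTurns (A B : List (Option Bool)) :
    (upTurns A B).count true = A.count (some true) + B.count (some false) + 2 := by
  simp [upTurns, downMarks, count_map_beq]; omega

theorem count_downTurns (A B : List (Option Bool)) :
    (downTurns A B).count true = A.count (some false) + B.count (some true) + 2 := by
  simp [downTurns, count_map_beq]; omega

theorem forall_take_turns_iff (A B : List (Option Bool))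
    (hc : (upTurns A B).count true = (downTurns A B).count true) :
    (∀ i, ((upTurns A B).take i).count true ≤ ((downTurns A B).take i).count true) ↔
      ∃ h, MotzkinFrom h A ∧ MotzkinFrom h B := by
  rw [count_upTurns, count_downTurns] at hc
  rw [upTurns, downTurns, forall_take_append (by simp)]
  simp only [List.count_reverse, count_map_beq]
  constructor
  · rintro ⟨H₁, H₂⟩
    have hA : A.count (some true) ≤ A.count (some false) := by simpa using H₂ 0
    obtain ⟨h, hA⟩ := Nat.exists_eq_add_of_le hA
    refine ⟨h, (forall_take_map_reverse_iff A hA).1 H₁, ?_⟩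
    rw [← forall_take_map_iff B (a := A.count (some true)) (by omega), ← hA]
    exact H₂
  · rintro ⟨h, hA, hB⟩
    have hA' := ((motzkinFrom_iff_take _ _).1 hA).1
    have hB' := ((motzkinFrom_iff_take _ _).1 hB).1
    refine ⟨(forall_take_map_reverse_iff A hA').2 hA, ?_⟩
    rw [hA']
    exact (forall_take_map_iff B hB').2 hB

theorem isDyckWord_iff {n : ℕ} {w : List Bool} : IsDyckWord n w ↔
    w.count true = n ∧ w.count false = n ∧ firstStep w = true ∧
      ∀ i, ((turns true w).take i).count true ≤ ((turns false w).take i).count true := by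
  have h := forall_prefix_iff w 0
  simp only [add_zero, zero_add] at h
  rw [IsDyckWord, h]
  constructor
  · rintro ⟨-, h1, h2, h3⟩
    have h4 : firstStep w = true := by simpa using h3 0
    exact ⟨h1, h2, h4, by simpa [h4] using h3⟩
  · rintro ⟨h1, h2, h3, h4⟩
    refine ⟨?_, h1, h2, by simpa [h3] using h4⟩
    have := List.count_true_add_count_false w
    omega

theorem getD_turns_iff (A B : List (Option Bool)) (i : ℕ) (hi : i < A.length + B.length + 1) :
    ((upTurns A B).getD i false = true ∧ (downTurns A B).getD i false = true) ↔ i = A.length := by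
  constructor
  · rintro ⟨h1, h2⟩
    rw [List.getD_eq_getElem _ _ (by rw [length_upTurns]; omega)] at h1
    rw [List.getD_eq_getElem _ _ (by rw [length_downTurns]; omega)] at h2
    rcases lt_trichotomy i A.length with h | h | h
    · simp only [upTurns, downTurns] at h1 h2
      rw [List.getElem_append_left (by simpa)] at h1 h2
      simp_all
    · exact h
    · obtain ⟨k, rfl⟩ := Nat.exists_eq_add_of_lt h
      simp only [upTurns, downTurns, downMarks] at h1 h2
      rw [List.getElem_append_right (by simp; omega)] at h1 h2
      simp only [List.length_reverse, List.length_map, add_assoc, Nat.add_sub_cancel_left,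
        List.getElem_cons_succ] at h1 h2
      rw [List.getElem_append_left (by simp; omega)] at h1 h2
      simp_all
  · rintro rfl
    simp [upTurns, downTurns]

theorem gap_downTurns {A B : List (Option Bool)} {h : ℕ}
    (hA : A.count (some false) = A.count (some true) + h) :
    gap (A.count (some true)) (downTurns A B) = gap h (downMarks A) := by
  have h1 : downTurns A B = ((A.map (· == some false)).reverse ++ [true]) ++
      (B.map (· == some true) ++ [true]) := by simp [downTurns]
  rw [h1, gap_append_left (by simp [count_map_beq]; omega),
    gap_reverse _ _ (by rw [count_map_beq]; omega), count_map_beq, hA, Nat.add_sub_cancel_left,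
    downMarks]

theorem gap_upTurns {A B : List (Option Bool)} {h : ℕ}
    (hA : A.count (some false) = A.count (some true) + h) :
    gap (A.count (some false) + 1) (upTurns A B) = gap h (downMarks B) := by
  have := gap_append_right h (A.map (· == some true)).reverse (downMarks B)
  rw [List.count_reverse, count_map_beq] at this
  rw [← this, upTurns, hA]
  congr 1
  omega

theorem count_take_lt {l : List Bool} {i : ℕ} (h : l.getD i false = true) :
    (l.take i).count true < l.count true := by
  induction l generalizing i with
  | nil => simp at h
  | cons x l ih =>
    rcases i with _ | i
    · simp_all
    · simp only [List.take_succ_cons, List.count_cons]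
      have := ih (i := i) (by simpa using h)
      omega

theorem rStat_eq_gap {n : ℕ} {w : List Bool} (hw : IsDyckWord n w) {i : ℕ} (hi : i + 1 < n) :
    rStat w (i + 1) = if (turns true w).getD i false then
      gap (((turns true w).take i).count true) (turns false w) else 0 := by
  obtain ⟨h1, -, h2, -⟩ := isDyckWord_iff.1 hw
  rw [rStat_eq _ _ (by omega), runAfter_eq, h2]
  simp

theorem sStat_eq_gap {n : ℕ} {w : List Bool} (hw : IsDyckWord n w) {i : ℕ} (hi : i + 1 < n) :
    sStat w (i + 1) = if (turns false w).getD i false then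
      gap (((turns false w).take i).count true + 1) (turns true w) else 0 := by
  obtain ⟨-, h1, h2, -⟩ := isDyckWord_iff.1 hw
  rw [sStat_eq _ _ (by omega), runAfter_eq, h2]
  simp

theorem count_turns_eq {w : List Bool} (h : firstStep w = true) :
    (turns true w).count true = (turns false w).count true := by
  simpa [h] using count_turns w

theorem rStat_pos_iff {n : ℕ} {w : List Bool} (hw : IsDyckWord n w) {i : ℕ} (hi : i + 1 < n) :
    0 < rStat w (i + 1) ↔ (turns true w).getD i false = true := by
  rw [rStat_eq_gap hw hi]
  split_ifs with h
  · simp only [h, iff_true]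
    apply gap_pos
    rw [← count_turns_eq (isDyckWord_iff.1 hw).2.2.1]
    exact count_take_lt h
  · exact ⟨fun h' => absurd h' (lt_irrefl _), fun h' => absurd h' h⟩

theorem exists_turns_false_eq {n : ℕ} {w : List Bool} (hw : IsDyckWord n w) (hn : 0 < n) :
    ∃ l, turns false w = l ++ [true] ∧ l.length + 1 = n := by
  have hlen := length_turns false w
  rw [hw.2.2.1] at hlen
  rcases (turns false w).eq_nil_or_concat with h | ⟨l, x, h⟩
  · rw [h] at hlen
    simp at hlen
    omega
  · rw [List.concat_eq_append] at h
    obtain rfl : x = true := getLast?_turns_false w x (by simp [h])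
    refine ⟨l, h, ?_⟩
    rw [h] at hlen
    simpa using hlen

theorem exists_turns_true_eq {n : ℕ} {w : List Bool} (hw : IsDyckWord n w) (hn : 0 < n) :
    ∃ l, turns true w = l ++ [true] ∧ l.length + 1 = n := by
  have hlen := length_turns true w
  rw [hw.2.1] at hlen
  obtain ⟨l', h', hl'⟩ := exists_turns_false_eq hw hn
  obtain ⟨-, -, h0, hpre⟩ := isDyckWord_iff.1 hw
  have hc := count_turns_eq h0
  rcases (turns true w).eq_nil_or_concat with h | ⟨l, x, h⟩
  · rw [h] at hlen
    simp at hlen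
    omega
  · rw [List.concat_eq_append] at h
    have hl : l.length + 1 = n := by
      rw [h] at hlen
      simpa using hlen
    have := hpre l.length
    rw [h, h', List.take_left' rfl, List.take_left' (by omega)] at this
    rw [h, h'] at hc
    cases x
    · simp at hc
      omega
    · exact ⟨l, h, hl⟩

theorem sStat_pos_iff {n : ℕ} {w : List Bool} (hw : IsDyckWord n w) {i : ℕ} (hi : i + 1 < n) :
    0 < sStat w (i + 1) ↔ (turns false w).getD i false = true := by
  rw [sStat_eq_gap hw hi]
  split_ifs with h
  · simp only [h, iff_true]
    apply gap_pos
    rw [count_turns_eq (isDyckWord_iff.1 hw).2.2.1]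
    obtain ⟨l, hl, hn⟩ := exists_turns_false_eq hw (by omega)
    rw [hl, List.take_append_of_le_length (by omega), List.count_append]
    have : (l.take i).count true < l.count true := by
      apply count_take_lt
      rwa [hl, List.getD_append _ _ _ _ (by omega)] at h
    simpa using this
  · exact ⟨fun h' => absurd h' (lt_irrefl _), fun h' => absurd h' h⟩

theorem mem_dyckRS_iff {n r s : ℕ} (hr : 1 ≤ r) (hs : 1 ≤ s) {w : List Bool}
    {A B : List (Option Bool)} (hU : turns true w = upTurns A B)
    (hD : turns false w = downTurns A B) (hn : A.length + B.length + 2 = n)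
    (hw : firstStep w = true) :
    w ∈ dyckRS n r s ↔ ∃ h, GapWord h h r A ∧ GapWord h h s B := by
  have hc := count_turns_eq hw
  have hdyck : IsDyckWord n w ↔ ∃ h, MotzkinFrom h A ∧ MotzkinFrom h B := by
    rw [hU, hD] at hc
    rw [isDyckWord_iff, hU, hD, forall_take_turns_iff _ _ hc, ← length_turns true,
      ← length_turns false, hU, hD, length_upTurns, length_downTurns]
    simp [hn, hw]
  have hstat : ∀ h, IsDyckWord n w → MotzkinFrom h A → rStat w (A.length + 1) = gap h (downMarks A)
      ∧ sStat w (A.length + 1) = gap h (downMarks B) := by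
    intro h hwn hA
    have hA' := ((motzkinFrom_iff_take _ _).1 hA).1
    obtain ⟨h1, h2⟩ := (getD_turns_iff A B A.length (by omega)).2 rfl
    have h3 : (upTurns A B).take A.length = (A.map (· == some true)).reverse := by
      rw [upTurns, List.take_left' (by simp)]
    have h4 : (downTurns A B).take A.length = (A.map (· == some false)).reverse := by
      rw [downTurns, List.take_left' (by simp)]
    rw [rStat_eq_gap hwn (by omega), sStat_eq_gap hwn (by omega), hU, hD, if_pos h1, if_pos h2,
      h3, h4, List.count_reverse, List.count_reverse, count_map_beq, count_map_beq,
      gap_downTurns hA', gap_upTurns hA']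
    exact ⟨rfl, rfl⟩
  have hpos : IsDyckWord n w → ∀ j ∈ Finset.Icc 1 (n - 1),
      (0 < rStat w j ∧ 0 < sStat w j ↔ j = A.length + 1) := by
    intro hwn j hj
    obtain ⟨hj1, hj2⟩ := Finset.mem_Icc.1 hj
    obtain ⟨i, rfl⟩ := Nat.exists_eq_add_of_le' hj1
    rw [rStat_pos_iff hwn (by omega), sStat_pos_iff hwn (by omega), hU, hD,
      getD_turns_iff _ _ _ (by omega), Nat.add_right_cancel_iff]
  constructor
  · rintro ⟨hwn, i, hi, hp, rfl, rfl, -⟩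
    obtain ⟨h, hA, hB⟩ := hdyck.1 hwn
    rw [hpos hwn i hi] at hp
    subst hp
    obtain ⟨h1, h2⟩ := hstat h hwn hA
    exact ⟨h, ⟨hA, h1.symm⟩, ⟨hB, h2.symm⟩⟩
  · rintro ⟨h, ⟨hA, hA'⟩, ⟨hB, hB'⟩⟩
    have hwn := hdyck.2 ⟨h, hA, hB⟩
    obtain ⟨h1, h2⟩ := hstat h hwn hA
    exact ⟨hwn, A.length + 1, by simp; omega, ⟨by omega, by omega⟩, by omega, by omega,
      fun j hj hp => (hpos hwn j hj).1 hp⟩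

theorem exists_word_of_disjoint (X Y : List Bool) (hl : X.length = Y.length)
    (h : ∀ i, ¬ (X.getD i false = true ∧ Y.getD i false = true)) :
    ∃ B : List (Option Bool), B.map (· == some true) = X ∧ B.map (· == some false) = Y := by
  induction X generalizing Y with
  | nil => exact ⟨[], by simpa [eq_comm] using hl⟩
  | cons x X ih =>
    rcases Y with _ | ⟨y, Y⟩
    · simp at hl
    · obtain ⟨B, hX, hY⟩ := ih Y (by simpa using hl) fun i => by simpa using h (i + 1)
      have h0 := h 0
      cases x <;> cases y
      · exact ⟨none :: B, by simp [hX], by simp [hY]⟩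
      · exact ⟨some false :: B, by simp [hX], by simp [hY]⟩
      · exact ⟨some true :: B, by simp [hX], by simp [hY]⟩
      · simp at h0

theorem exists_word_eq {n r s : ℕ} {w : List Bool} (hw : w ∈ dyckRS n r s) :
    ∃ A B : List (Option Bool), turns true w = upTurns A B ∧ turns false w = downTurns A B ∧
      A.length + B.length + 2 = n := by
  obtain ⟨hwn, i, hi, hp, -, -, huniq⟩ := hw
  obtain ⟨hi1, hi2⟩ := Finset.mem_Icc.1 hi
  obtain ⟨i, rfl⟩ := Nat.exists_eq_add_of_le' hi1
  rw [rStat_pos_iff hwn (by omega), sStat_pos_iff hwn (by omega)] at hp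
  obtain ⟨U, hU, hUn⟩ := exists_turns_true_eq hwn (by omega)
  obtain ⟨D, hD, hDn⟩ := exists_turns_false_eq hwn (by omega)
  have hne : ∀ j, j + 1 < n → j ≠ i → ¬ (U.getD j false = true ∧ D.getD j false = true) := by
    intro j hj hji hUD
    have := huniq (j + 1) (by simp; omega)
    rw [rStat_pos_iff hwn (by omega), sStat_pos_iff hwn (by omega), hU, hD,
      List.getD_append _ _ _ _ (by omega), List.getD_append _ _ _ _ (by omega)] at this
    exact hji (by simpa using this hUD)
  rw [hU, hD, List.getD_append _ _ _ _ (by omega), List.getD_append _ _ _ _ (by omega),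
    List.getD_eq_getElem _ _ (by omega), List.getD_eq_getElem _ _ (by omega)] at hp
  have hU' : U = U.take i ++ true :: U.drop (i + 1) := by
    rw [← hp.1, List.getElem_cons_drop, List.take_append_drop]
  have hD' : D = D.take i ++ true :: D.drop (i + 1) := by
    rw [← hp.2, List.getElem_cons_drop, List.take_append_drop]
  obtain ⟨A, hA1, hA2⟩ := exists_word_of_disjoint (U.take i) (D.take i) (by simp; omega) (by
    intro j hj
    by_cases hji : j < i
    · refine hne j (by omega) (by omega) ?_
      simpa [hji, List.getElem?_take] using hj
    · simp [hji] at hj)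
  obtain ⟨B, hB1, hB2⟩ := exists_word_of_disjoint (D.drop (i + 1)) (U.drop (i + 1))
    (by simp; omega) (by
    intro j hj
    by_cases hji : i + 1 + j + 1 < n
    · refine hne (i + 1 + j) hji (by omega) ?_
      simpa [and_comm] using hj
    · rw [List.getD_eq_default _ _ (by simp; omega)] at hj
      simp at hj)
  refine ⟨A.reverse, B, ?_, ?_, ?_⟩
  · rw [hU, upTurns, downMarks, List.map_reverse, List.reverse_reverse, hA1, hB2]
    conv_lhs => rw [hU']
    simp
  · rw [hD, downTurns, List.map_reverse, List.reverse_reverse, hA2, hB1]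
    conv_lhs => rw [hD']
    simp
  · have h1 := congrArg List.length hA1
    have h2 := congrArg List.length hB1
    simp only [List.length_map, List.length_take, List.length_drop] at h1 h2
    rw [List.length_reverse]
    omega

theorem turns_words_injective {A B A' B' : List (Option Bool)}
    (hU : upTurns A B = upTurns A' B') (hD : downTurns A B = downTurns A' B') :
    A = A' ∧ B = B' := by
  have hmap : ∀ {X Y : List (Option Bool)}, X.map (· == some true) = Y.map (· == some true) →
      X.map (· == some false) = Y.map (· == some false) → X = Y := by
    intro X
    induction X with
    | nil => exact fun h _ => (List.map_eq_nil_iff.1 h.symm).symm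
    | cons x X ih =>
      intro Y h1 h2
      rcases Y with _ | ⟨y, Y⟩
      · simp at h1
      · simp only [List.map_cons, List.cons.injEq] at h1 h2
        rw [ih h1.2 h2.2]
        rcases x with _ | _ | _ <;> rcases y with _ | _ | _ <;> simp_all
  have hlen : A.length = A'.length := by
    have h1 := congrArg List.length hU
    rw [length_upTurns, length_upTurns] at h1
    rw [← getD_turns_iff A' B' _ (by omega), ← hU, ← hD, getD_turns_iff _ _ _ (by omega)]
  obtain ⟨h1, h2⟩ := List.append_inj hU (by simpa)
  obtain ⟨h3, h4⟩ := List.append_inj hD (by simpa)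
  simp only [downMarks, List.cons.injEq, true_and, List.append_cancel_right_eq,
    List.reverse_inj] at h1 h2 h3 h4
  exact ⟨hmap h1 h3, hmap h4 h2⟩

/-- The pairs of words that encode the paths in `dyckRS n r s`. -/
def wordPairs (n r s : ℕ) : Set (List (Option Bool) × List (Option Bool)) :=
  {x | x.1.length + x.2.length + 2 = n ∧ ∃ h, GapWord h h r x.1 ∧ GapWord h h s x.2}

theorem ncard_dyckRS {n r s : ℕ} (hr : 1 ≤ r) (hs : 1 ≤ s) :
    (dyckRS n r s).ncard = (wordPairs n r s).ncard := by
  have himage : (fun w => (turns true w, turns false w)) '' dyckRS n r s =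
      (fun x => (upTurns x.1 x.2, downTurns x.1 x.2)) '' wordPairs n r s := by
    ext ⟨U, D⟩
    constructor
    · rintro ⟨w, hw, hUD⟩
      obtain ⟨A, B, hU, hD, hn⟩ := exists_word_eq hw
      refine ⟨(A, B), ⟨hn, ?_⟩, by rw [← hUD]; exact Prod.ext hU.symm hD.symm⟩
      exact (mem_dyckRS_iff hr hs hU hD hn (isDyckWord_iff.1 hw.1).2.2.1).1 hw
    · rintro ⟨⟨A, B⟩, ⟨hn, hAB⟩, hUD⟩
      obtain ⟨h, hA, hB⟩ := hAB
      have hA' := ((motzkinFrom_iff_take _ _).1 hA.1).1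
      have hB' := ((motzkinFrom_iff_take _ _).1 hB.1).1
      have hlast : downTurns A B = ((A.map (· == some false)).reverse ++
          true :: B.map (· == some true)) ++ [true] := by simp [downTurns]
      obtain ⟨w, hw, hU, hD⟩ := exists_turns true (upTurns A B) (downTurns A B)
        (by rw [count_upTurns, count_downTurns]; simp at hA' hB' ⊢; omega)
        (by rw [hlast, List.getLast?_concat]; simp)
      exact ⟨w, (mem_dyckRS_iff hr hs hU hD hn hw).2 ⟨h, hA, hB⟩,
        by rw [← hUD]; exact Prod.ext hU hD⟩
  have hinj : Set.InjOn (fun w => (turns true w, turns false w)) (dyckRS n r s) := by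
    intro w hw w' hw' h
    simp only [Prod.mk.injEq] at h
    exact turns_injective (by rw [(isDyckWord_iff.1 hw.1).2.2.1, (isDyckWord_iff.1 hw'.1).2.2.1])
      h.1 h.2
  rw [← hinj.ncard_image, himage, Set.ncard_image_of_injective]
  rintro ⟨A, B⟩ ⟨A', B'⟩ h
  simp only [Prod.mk.injEq] at h ⊢
  exact turns_words_injective h.1 h.2

theorem ncard_wordPairs (N r s : ℕ) : (wordPairs (N + 2) r s).ncard =
    ∑ x ∈ Finset.HasAntidiagonal.antidiagonal N, ∑ h ∈ Finset.range (N + 2),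
      wordCount x.1 (GapWord h h r) * wordCount x.2 (GapWord h h s) := by
  classical
  let P : ℕ → ℕ → ℕ → Finset (List (Option Bool)) := fun p h r =>
    (finite_length_and p (GapWord h h r)).toFinset
  have hP : ∀ p h r, (P p h r).card = wordCount p (GapWord h h r) := fun p h r =>
    (Set.ncard_eq_toFinset_card _ _).symm
  have hmem : ∀ {p h r A}, A ∈ P p h r ↔ A.length = p ∧ GapWord h h r A := by simp [P]
  have hS : wordPairs (N + 2) r s = ((Finset.HasAntidiagonal.antidiagonal N ×ˢ
      Finset.range (N + 2)).biUnion fun y => P y.1.1 y.2 r ×ˢ P y.1.2 y.2 s : Finset _) := by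
    ext ⟨A, B⟩
    simp only [wordPairs, Set.mem_ofPred_eq, Finset.coe_biUnion, Set.mem_iUnion, Finset.mem_coe,
      Finset.mem_product, hmem, Finset.HasAntidiagonal.mem_antidiagonal, Finset.mem_range]
    constructor
    · rintro ⟨hn, h, hA, hB⟩
      have hA' := ((motzkinFrom_iff_take _ _).1 hA.1).1
      have := List.count_le_length (a := some false) (l := A)
      exact ⟨((A.length, B.length), h), ⟨by simp at hn ⊢; omega, by simp at hn ⊢; omega⟩,
        ⟨rfl, hA⟩, rfl, hB⟩
    · rintro ⟨⟨⟨p, q⟩, h⟩, ⟨h1, h2⟩, ⟨h3, h4⟩, h5, h6⟩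
      exact ⟨by simp at h1 h3 h5 ⊢; omega, h, h4, h6⟩
  rw [hS, Set.ncard_coe_finset, Finset.card_biUnion, Finset.sum_product]
  · simp [hP]
  · rintro ⟨⟨p, q⟩, h⟩ - ⟨⟨p', q'⟩, h'⟩ - hne
    rw [Function.onFun, Finset.disjoint_left]
    rintro ⟨A, B⟩ h1 h2
    simp only [Finset.mem_product, hmem] at h1 h2
    have hA := ((motzkinFrom_iff_take _ _).1 h1.1.2.1).1
    have hA' := ((motzkinFrom_iff_take _ _).1 h2.1.2.1).1
    apply hne
    simp only [Prod.mk.injEq]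
    omega

end MotzkinCount

/-- **Proposition.** For `r, s ≥ 1` and `n ≥ r + s`,
`|𝒟ₙ^{r,s}| = T_{n-2,r+s-1} + Σ_{i=0}^{n-2-s-r} (i+1)·Mᵢ·T_{n-4-i,r+s-1}`. -/
theorem dyckRS_count (r s n : ℕ) (hr : 1 ≤ r) (hs : 1 ≤ s) (hn : r + s ≤ n) :
    ((dyckRS n r s).ncard : ℤ) =
      motzkinBallotZ ((n : ℤ) - 2) (r + s - 1) +
        ∑ i ∈ Finset.Icc (0 : ℤ) ((n : ℤ) - 2 - s - r),
          (i + 1) * motzkinZ i * motzkinBallotZ ((n : ℤ) - 4 - i) (r + s - 1) := by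
  obtain ⟨r, rfl⟩ := Nat.exists_eq_add_of_le' hr
  obtain ⟨s, rfl⟩ := Nat.exists_eq_add_of_le' hs
  obtain ⟨N, rfl⟩ : ∃ N, n = N + 2 := ⟨n - 2, by omega⟩
  rw [MotzkinCount.ncard_dyckRS hr hs, MotzkinCount.ncard_wordPairs]
  push_cast
  rw [MotzkinCount.sum_antidiagonal_eq, show r + 1 + (s + 1) - 1 = r + s + 1 by omega]
  congr 1
  · congr 1
    ring
  · refine Finset.sum_congr (by congr 1; ring) fun i _ => ?_
    congr 2
    ring
end
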